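/- arXiv:1804.09684 — 3 statements merged into one kernel-verified Lean document; each statement's English description precedes it below -/
import Mathlib

section
/- Let d ≥ 2 and c ≥ 1 be fixed integers and C, α > 0 fixed constants. For every δ > 0 there exists n₀ (depending on d, c, C, α, δ) such that the following holds for every integer b ≥ 1, every finite alphabet Σ, and every key set X ⊆ Σ^c with g = 2^b, n = d·g ≥ n₀ and |X| = m ≤ C·n. If h_1,…,h_d : Σ^c → F₂^b ≅ [g] are d independent random simple tabulation hash functions, then the probability (over the random tables) that the hash graph contains a subgraph (V,E) with |E| ≤ α·log₂ log₂ n and |V| ≤ (d−1)|E| − 1 is at most n^{−1/3+δ}. -/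
/-!
Over `F₂` a simple tabulation function is a random linear map: the key `x` is encoded by the
indicator vector `vec x` of its position characters, and `h (x) = tabMap t (vec x)`. A linear
relation among the keys (a zero-sum set) makes the hash values dependent, so a naive union bound
over sets of edges fails exactly for sets of keys with relations. Two facts compensate for this.

*Sets with relations are rare.* Keys from a set `X` satisfying prescribed relations can be counted
by Cauchy–Schwarz (`card_sum_eq_le`): each position that takes part in a relation gains a factor
`√|X|`, up to a constant `2 ^ O(k log k)` for `k` keys.

*Sets with relations satisfy many constraints.* Let `rho h Z` be the number of independent linear
constraints that the `d` maps satisfy on the span of `Z`, and let `dm Z` be the dimension of this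
span. If the graph of `S` has at most `(d - 1) |S| - 1` vertices, it may be taken connected
(`exists_conn`), and rank–nullity (`rho_add`) bounds `rho h S` from below in terms of the
dimension. The structure theorem `exists_outcome` extracts a set `Z ⊆ S` of one of three kinds:

* two relations, possibly empty or equal, covering `s` keys in total, with
  `2 rho h Z ≥ 2 |Z| + 1 - s`;
* three disjoint pairs of keys with one difference `v` killed by some `h j`, with
  `rho h Z ≥ |Z| - 3`;
* three such pairs and a further relation, with `rho h Z ≥ |Z| - 4`.

If `S` is independent, take `Z = S`. If `S` has exactly one relation, take `Z = S` as well, unless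
this relation has length four and three of the maps send `S` to linearly independent vectors; these
three maps must each identify two of the four keys, and `Z` is the relation itself. Otherwise a
discrete intermediate value argument along a chain of sets `Z` with `rho h Z ≥ dm Z - 1` stops at
one with exactly two relations. If these cover at least seven keys this is the first kind.
Otherwise six keys split into three pairs with a common difference `v`. When some map kills `v`
this is the second kind. When none does, translation by `v` acts freely on the graph; either the
keys of `S` are independent modulo `v`, and the graph together with its translate shows that there
are enough constraints for the first kind, or a second intermediate value argument, modulo `v`,
finds a further relation.

With `|R| = ρ ^ 6` and `|X| = O(ρ ^ 6)`, each constraint costs a factor `ρ ^ (-6)`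
(`card_indep_le`), and the count of sets of each kind times the probability of the constraints is
`O(ρ ^ (-2)) = O(|R| ^ (-1 / 3))` for each size (`outcome_prob_le`). The second kind needs the
difference `v` to be attained by at most `ρ ^ 4` keys: the remaining popular differences number
`O(ρ ^ 4)` by an additive energy bound, so one of them is killed with probability `O(ρ ^ (-2))`
(`popular_prob_le`). It is this balance that produces the exponent `1 / 3`. All the constants are
at most `2 ^ O(m²)` in the number `m = O(log log n)` of edges (`Tame`), hence `n ^ o(1)`.
-/

/-- Simple tabulation: the hash of `x` is the XOR (sum over `F₂`) of the table entries
`T i (x i)`. -/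
def simpleTab {c b : ℕ} {A : Type*} (T : Fin c → A → (Fin b → ZMod 2)) (x : Fin c → A) :
    Fin b → ZMod 2 := ∑ i, T i (x i)

/-! ### Linear algebra over `F₂` -/

open Finset in
/-- Dimension of the span of a finite set of vectors over `F₂`. -/
noncomputable def dm {V : Type*} [AddCommGroup V] [Module (ZMod 2) V] (Z : Finset V) : ℕ :=
  Module.finrank (ZMod 2) (Submodule.span (ZMod 2) (Z : Set V))

/-- The total number of independent linear constraints that the maps `h j` satisfy on the span
of `Z`: the sum over `j` of the dimension of `ker (h j)` inside this span. -/
noncomputable def rho {V R : Type*} [AddCommGroup V] [Module (ZMod 2) V] [AddCommGroup R]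
    [Module (ZMod 2) R] {d : ℕ} (h : Fin d → V →ₗ[ZMod 2] R) (Z : Finset V) : ℕ :=
  ∑ j, Module.finrank (ZMod 2)
    (Submodule.span (ZMod 2) (Z : Set V) ⊓ LinearMap.ker (h j) : Submodule (ZMod 2) V)

section LinAlg

set_option linter.unusedSectionVars false

variable {V R : Type*} [AddCommGroup V] [Module (ZMod 2) V] [Module.Finite (ZMod 2) V]
  [DecidableEq V] [AddCommGroup R] [Module (ZMod 2) R] [Module.Finite (ZMod 2) R] [DecidableEq R]

lemma dm_le_card (Z : Finset V) : dm Z ≤ Z.card := finrank_span_finset_le_card Z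

lemma dm_mono {Y Z : Finset V} (h : (Y : Set V) ⊆ Submodule.span (ZMod 2) (Z : Set V)) :
    dm Y ≤ dm Z := Submodule.finrank_mono (Submodule.span_le.2 h)

lemma dm_mono' {Y Z : Finset V} (h : Y ⊆ Z) : dm Y ≤ dm Z :=
  dm_mono (fun _ hx => Submodule.subset_span (h hx))

lemma dm_insert_le (x : V) (Z : Finset V) : dm (insert x Z) ≤ dm Z + 1 := by
  unfold dm
  rw [Finset.coe_insert, Submodule.span_insert]
  refine (Submodule.finrank_add_le_finrank_add_finrank _ _).trans ?_
  have : Module.finrank (ZMod 2) (Submodule.span (ZMod 2) ({x} : Set V)) ≤ 1 := by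
    have h := finrank_span_finset_le_card (R := ZMod 2) ({x} : Finset V)
    rw [Finset.coe_singleton] at h
    exact h
  omega

lemma dm_insert_of_notMem {x : V} {Z : Finset V}
    (hx : x ∉ Submodule.span (ZMod 2) (Z : Set V)) : dm (insert x Z) = dm Z + 1 := by
  apply le_antisymm (dm_insert_le x Z)
  unfold dm
  apply Submodule.finrank_lt_finrank_of_lt
  rw [Finset.coe_insert]
  refine lt_of_le_of_ne (Submodule.span_mono (Set.subset_insert _ _)) fun h => hx ?_
  rw [h]
  exact Submodule.subset_span (Set.mem_insert _ _)

lemma exists_rel {Z : Finset V} (h : dm Z < Z.card) :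
    ∃ Q ⊆ Z, Q.Nonempty ∧ ∑ x ∈ Q, x = 0 := by
  have h1 : ¬ LinearIndepOn (ZMod 2) id (Z : Set V) := fun h2 => by
    have := finrank_span_finset_eq_card h2
    unfold dm at h; omega
  rw [linearIndepOn_finset_iff] at h1
  push Not at h1
  obtain ⟨f, hf, i, hi, hfi⟩ := h1
  refine ⟨Z.filter (fun x => f x ≠ 0), Finset.filter_subset _ _, ⟨i, by simp [hi, hfi]⟩, ?_⟩
  refine Eq.trans ?_ hf
  rw [Finset.sum_filter]
  refine Finset.sum_congr rfl fun x _ => ?_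
  have h2 : ∀ a : ZMod 2, a = 0 ∨ a = 1 := by decide
  rcases h2 (f x) with h | h <;> simp [h]

lemma no_rel {Z Q : Finset V} (h : Z.card ≤ dm Z) (hQ : Q ⊆ Z) (hne : Q.Nonempty) :
    ∑ x ∈ Q, x ≠ 0 := by
  intro h0
  obtain ⟨x, hx⟩ := hne
  have hxs : x ∈ Submodule.span (ZMod 2) ((Z.erase x : Finset V) : Set V) := by
    have h1 : x = ∑ y ∈ Q.erase x, y := by
      rw [← Finset.add_sum_erase _ _ hx] at h0
      rw [← ZModModule.neg_eq_self (∑ y ∈ Q.erase x, y)]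
      exact eq_neg_of_add_eq_zero_left h0
    have h2 : ∑ y ∈ Q.erase x, y ∈ Submodule.span (ZMod 2) ((Z.erase x : Finset V) : Set V) :=
      Submodule.sum_mem _ fun y hy => Submodule.subset_span
        (Finset.mem_coe.2 (Finset.erase_subset_erase _ hQ hy))
    rwa [← h1] at h2
  have h2 : dm Z ≤ dm (Z.erase x) := by
    apply dm_mono
    intro y hy
    by_cases hyx : y = x
    · exact hyx ▸ hxs
    · exact Submodule.subset_span (by simpa [hyx] using hy)
  have h3 := dm_le_card (Z.erase x)
  have h4 := Finset.card_erase_lt_of_mem (hQ hx)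
  omega

/-- Rank–nullity, summed over the `d` maps. -/
lemma rho_add {d : ℕ} (h : Fin d → V →ₗ[ZMod 2] R) (Z : Finset V) :
    rho h Z + ∑ j, dm (Z.image (h j)) = d * dm Z := by
  unfold rho dm
  rw [← Finset.sum_add_distrib]
  have : ∀ j, Module.finrank (ZMod 2) (Submodule.span (ZMod 2) (Z : Set V) ⊓
      LinearMap.ker (h j) : Submodule (ZMod 2) V) + Module.finrank (ZMod 2)
      (Submodule.span (ZMod 2) ((Z.image (h j) : Finset R) : Set R)) =
      Module.finrank (ZMod 2) (Submodule.span (ZMod 2) (Z : Set V)) := by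
    intro j
    set W := Submodule.span (ZMod 2) (Z : Set V) with hW
    have h1 := LinearMap.finrank_range_add_finrank_ker ((h j).domRestrict W)
    have h2 : LinearMap.range ((h j).domRestrict W) =
        Submodule.span (ZMod 2) ((Z.image (h j) : Finset R) : Set R) := by
      rw [LinearMap.range_domRestrict, hW, Submodule.map_span, Finset.coe_image]
    have h3 : Module.finrank (ZMod 2) (LinearMap.ker ((h j).domRestrict W)) =
        Module.finrank (ZMod 2) (W ⊓ LinearMap.ker (h j) : Submodule (ZMod 2) V) := by
      rw [LinearMap.ker_domRestrict, ← Submodule.map_comap_subtype]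
      exact LinearEquiv.finrank_eq (Submodule.equivSubtypeMap W _)
    rw [← h1, h2, h3, add_comm]
  simp [this]

/-- The closure of a finite set under translation by `v`. -/
def tw (v : V) (Y : Finset V) : Finset V := Y ∪ Y.image (· + v)

lemma add_add_self (x v : V) : x + v + v = x := by
  rw [add_assoc, ZModModule.add_self, add_zero]


lemma mem_tw {v x : V} {Y : Finset V} : x ∈ tw v Y ↔ x ∈ Y ∨ x + v ∈ Y := by
  unfold tw
  simp only [Finset.mem_union, Finset.mem_image]
  refine or_congr_right ⟨?_, fun h => ⟨_, h, add_add_self _ _⟩⟩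
  rintro ⟨a, ha, rfl⟩
  rwa [add_add_self]

lemma tw_insert (v x : V) (Y : Finset V) : tw v (insert x Y) = insert x (insert (x + v) (tw v Y)) := by
  ext y
  have : y + v = x ↔ y = x + v :=
    ⟨fun h => by rw [← h, add_add_self], fun h => by rw [h, add_add_self]⟩
  simp only [mem_tw, Finset.mem_insert, this]
  tauto

/-- Existence of a set of representatives of the classes modulo `v` of the elements of `Y`. -/
lemma exists_reps {v : V} (hv : v ≠ 0) (Y : Finset V) :
    ∃ Y₀ ⊆ Y, Y ⊆ tw v Y₀ ∧ (tw v Y).card = 2 * Y₀.card ∧ ∀ x ∈ Y₀, x + v ∉ Y₀ := by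
  induction Y using Finset.induction_on with
  | empty => exact ⟨∅, by simp [tw]⟩
  | insert x Y hx ih =>
    obtain ⟨Y₀, h1, h2, h3, h4⟩ := ih
    have hsub : tw v Y ⊆ tw v Y₀ := by
      intro y hy
      rcases mem_tw.1 hy with h | h
      · exact h2 h
      · have := h2 h
        rw [mem_tw, add_add_self] at this
        exact mem_tw.2 this.symm
    by_cases hxt : x ∈ tw v Y
    · refine ⟨Y₀, h1.trans (Finset.subset_insert _ _), ?_, ?_, h4⟩
      · exact Finset.insert_subset (hsub hxt) h2
      · rw [← h3, tw_insert, Finset.insert_eq_of_mem, Finset.insert_eq_of_mem]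
        · rw [mem_tw, add_add_self]; exact (mem_tw.1 hxt).symm
        · exact Finset.mem_insert_of_mem hxt
    · have hxv : x + v ∉ tw v Y := by
        rw [mem_tw, add_add_self]; rw [mem_tw] at hxt; tauto
      have hne : x ≠ x + v := fun h => hv (by simpa using h.symm)
      have hxY : x ∉ Y₀ := fun h => hx (h1 h)
      refine ⟨insert x Y₀, Finset.insert_subset_insert _ h1, ?_, ?_, ?_⟩
      · rw [tw_insert]
        exact Finset.insert_subset_insert _ (h2.trans (Finset.subset_insert _ _))
      · rw [tw_insert, Finset.card_insert_of_notMem, Finset.card_insert_of_notMem hxv, h3,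
          Finset.card_insert_of_notMem hxY]
        · ring
        · simp [hne, hxt]
      · intro y hy hyv
        rw [mem_tw] at hxt hxv
        rw [add_add_self] at hxv
        rcases Finset.mem_insert.1 hy with rfl | hy <;>
          rcases Finset.mem_insert.1 hyv with h | h
        · exact hne h.symm
        · exact hxt (Or.inr (h1 h))
        · apply hxt; right; rw [← h, add_add_self]; exact h1 hy
        · exact h4 y hy h

lemma span_reps {v : V} {Y Y₀ : Finset V} (h : Y ⊆ tw v Y₀) :
    (Y : Set V) ⊆ Submodule.span (ZMod 2) ((insert v Y₀ : Finset V) : Set V) := by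
  intro y hy
  have hv : v ∈ Submodule.span (ZMod 2) ((insert v Y₀ : Finset V) : Set V) :=
    Submodule.subset_span (by simp)
  rcases mem_tw.1 (h hy) with h | h
  · exact Submodule.subset_span (by simp [h])
  · rw [← add_add_self y v]
    exact Submodule.add_mem _ (Submodule.subset_span (by simp [h])) hv

/-- The span of `Y` is contained in that of `v` and one representative of each class modulo `v`. -/
lemma two_dm_le {v : V} (hv : v ≠ 0) (Y : Finset V) : 2 * dm Y ≤ (tw v Y).card + 2 := by
  obtain ⟨Y₀, -, h2, h3, -⟩ := exists_reps hv Y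
  have := dm_mono (span_reps h2)
  have h5 := dm_le_card (insert v Y₀)
  have h6 := Finset.card_insert_le v Y₀
  omega

end LinAlg

/-! ### The deterministic structure theorem -/

section Structure

set_option linter.unusedSectionVars false

variable {V R : Type*} [AddCommGroup V] [Module (ZMod 2) V] [Module.Finite (ZMod 2) V]
  [DecidableEq V] [AddCommGroup R] [Module (ZMod 2) R] [Module.Finite (ZMod 2) R] [DecidableEq R]
  {d : ℕ}

/-- Connectedness of the hash graph with edge set `S`, expressed through cuts: every proper
nonempty set of edges shares a vertex with its complement. -/
def Conn (h : Fin d → V →ₗ[ZMod 2] R) (S : Finset V) : Prop :=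
  ∀ A ⊆ S, A.Nonempty → A ≠ S → ∃ a ∈ A, ∃ b ∈ S, b ∉ A ∧ ∃ j, h j a = h j b

/-- Total number of vertices of the hash graph with edge set `S`. -/
def nv (h : Fin d → V →ₗ[ZMod 2] R) (S : Finset V) : ℕ := ∑ j, (S.image (h j)).card

/-- Three pairs of distinct elements with common difference `v`, namely `x i` and `x i + v`, all
six being distinct. -/
def Trip (v : V) (x : Fin 3 → V) : Prop := Function.Injective x ∧ ∀ i j, x i + v ≠ x j

/-- Two zero-sum subsets whose union has `s` elements. -/
def TypeA (s : ℕ) (Z : Finset V) : Prop :=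
  ∃ Q₁ ⊆ Z, ∃ Q₂ ⊆ Z, ∑ x ∈ Q₁, x = 0 ∧ ∑ x ∈ Q₂, x = 0 ∧ (Q₁ ∪ Q₂).card = s

/-- Three disjoint pairs with difference `v`. -/
def TypeB (v : V) (Z : Finset V) : Prop :=
  ∃ x : Fin 3 → V, Trip v x ∧ ∀ i, x i ∈ Z ∧ x i + v ∈ Z

/-- Three disjoint pairs with difference `v`, together with a further relation of length at least
four which avoids one element of each pair and whose sum is `0` or `v`. -/
def TypeC (Z : Finset V) : Prop :=
  ∃ (v : V) (x : Fin 3 → V), Trip v x ∧ (∀ i, x i ∈ Z ∧ x i + v ∈ Z) ∧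
    ∃ Q ⊆ Z, (∀ i, x i + v ∉ Q) ∧ 4 ≤ Q.card ∧ (∑ x ∈ Q, x = 0 ∨ ∑ x ∈ Q, x = v)

variable {h : Fin d → V →ₗ[ZMod 2] R}

/-- A minimal subgraph with too few vertices is connected. -/
lemma exists_conn {S : Finset V} (hS : nv h S + S.card + 1 ≤ d * S.card) :
    ∃ S' ⊆ S, nv h S' + S'.card + 1 ≤ d * S'.card ∧ Conn h S' := by
  induction S using Finset.strongInduction with
  | H S ih =>
    by_cases hc : Conn h S
    · exact ⟨S, subset_rfl, hS, hc⟩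
    unfold Conn at hc
    push Not at hc
    obtain ⟨A, hAS, hA, hne, hcut⟩ := hc
    have hlt : A ⊂ S := hAS.ssubset_of_ne hne
    have hlt' : S \ A ⊂ S := Finset.sdiff_ssubset hAS hA
    -- no vertex is shared across the cut, so one of the two sides is again too dense
    have hnv : nv h A + nv h (S \ A) = nv h S := by
      unfold nv
      rw [← Finset.sum_add_distrib]
      refine Finset.sum_congr rfl fun j _ => ?_
      rw [← Finset.card_union_of_disjoint, ← Finset.image_union, Finset.union_sdiff_of_subset hAS]
      rw [Finset.disjoint_left]
      intro r h1 h2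
      obtain ⟨a, ha, rfl⟩ := Finset.mem_image.1 h1
      obtain ⟨b, hb, hab⟩ := Finset.mem_image.1 h2
      rw [Finset.mem_sdiff] at hb
      exact hcut a ha b hb.1 hb.2 j hab.symm
    have hcard := Finset.card_sdiff_add_card_eq_card hAS
    by_cases h1 : nv h A + A.card + 1 ≤ d * A.card
    · obtain ⟨S', h2, h3⟩ := ih A hlt h1
      exact ⟨S', h2.trans hAS, h3⟩
    · have h1' : nv h (S \ A) + (S \ A).card + 1 ≤ d * (S \ A).card := by
        rw [← hcard, mul_add] at hS
        omega
      obtain ⟨S', h2, h3⟩ := ih _ hlt' h1'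
      exact ⟨S', h2.trans hlt'.1, h3⟩

/-- Adding a connected set of edges that meets `A` increases the number of vertices by at most
`d - 1` per new edge. -/
lemma nv_union_le {A B : Finset V} (hB : Conn h B) (hAB : (A ∩ B).Nonempty) :
    nv h (A ∪ B) + (A ∪ B).card + d * A.card ≤ nv h A + A.card + d * (A ∪ B).card := by
  induction hn : (B \ A).card using Nat.strong_induction_on generalizing A with
  | _ n ih =>
    by_cases hBA : B ⊆ A
    · rw [Finset.union_eq_left.2 hBA]
    have hne : A ∩ B ≠ B := fun h1 => hBA (Finset.inter_eq_right.1 h1)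
    obtain ⟨a, ha, b, hb, hbA, j, hj⟩ := hB _ Finset.inter_subset_right hAB hne
    have hbA' : b ∉ A := fun h1 => hbA (Finset.mem_inter.2 ⟨h1, hb⟩)
    have haA : a ∈ A := (Finset.mem_inter.1 ha).1
    have hlt : (B \ insert b A).card < n := by
      rw [← hn]
      apply Finset.card_lt_card
      rw [Finset.ssubset_iff_of_subset (Finset.sdiff_subset_sdiff subset_rfl
        (Finset.subset_insert _ _))]
      exact ⟨b, by simp [hb, hbA'], by simp⟩
    have key := ih _ hlt (A := insert b A)
      (hAB.mono (Finset.inter_subset_inter (Finset.subset_insert _ _) subset_rfl)) rfl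
    have hu : insert b A ∪ B = A ∪ B := by
      rw [Finset.insert_union, Finset.insert_eq_of_mem (Finset.mem_union_right _ hb)]
    rw [hu, Finset.card_insert_of_notMem hbA'] at key
    have hnv : nv h (insert b A) + 1 ≤ nv h A + d := by
      unfold nv
      have h1 : ∀ i, ((insert b A).image (h i)).card ≤ (A.image (h i)).card +
          (if i = j then 0 else 1) := by
        intro i
        rw [Finset.image_insert]
        split_ifs with hij
        · subst hij
          rw [Finset.insert_eq_of_mem (hj ▸ Finset.mem_image_of_mem _ haA), add_zero]
        · exact Finset.card_insert_le _ _
      have h2 := Finset.sum_le_sum fun i (_ : i ∈ Finset.univ) => h1 i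
      rw [Finset.sum_add_distrib] at h2
      have h3 : (∑ i : Fin d, if i = j then 0 else 1) + 1 = d := by
        have : ∀ i : Fin d, (if i = j then 0 else 1) = 1 - (if i = j then 1 else 0) := by
          intro i; split_ifs <;> rfl
        have h4 : (∑ i : Fin d, if i = j then 0 else 1) + (∑ i : Fin d, if i = j then 1 else 0)
            = d := by
          rw [← Finset.sum_add_distrib]
          have : ∀ i : Fin d, ((if i = j then 0 else 1) + (if i = j then 1 else 0)) = 1 := by
            intro i; split_ifs <;> rfl
          simp [this]
        simpa using h4
      omega
    rw [mul_add] at key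
    omega

lemma dm_image_le (f : V →ₗ[ZMod 2] R) (Z : Finset V) : dm (Z.image f) ≤ dm Z := by
  unfold dm
  rw [Finset.coe_image, ← Submodule.map_span]
  exact Submodule.finrank_map_le _ _

lemma rho_mono {Y Z : Finset V} (hYZ : (Y : Set V) ⊆ Submodule.span (ZMod 2) (Z : Set V)) :
    rho h Y ≤ rho h Z :=
  Finset.sum_le_sum fun _ _ => Submodule.finrank_mono
    (inf_le_inf_right _ (Submodule.span_le.2 hYZ))

/-- Nonempty sets `Z` of edges whose dimension exceeds the number of constraints by at most one.
They play the role of connected subgraphs. -/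
def Good (h : Fin d → V →ₗ[ZMod 2] R) (S Z : Finset V) : Prop :=
  Z ⊆ S ∧ Z.Nonempty ∧ dm Z ≤ rho h Z + 1

lemma good_singleton {S : Finset V} {x : V} (hx : x ∈ S) : Good h S {x} := by
  refine ⟨by simpa using hx, by simp, ?_⟩
  have := dm_le_card ({x} : Finset V)
  simp at this
  omega

/-- An edge across the cut shares a vertex with `Z`, and so contributes a new constraint whenever it
increases the dimension. -/
lemma good_extend {S Z : Finset V} (hS : Conn h S) (hZ : Good h S Z) (hne : Z ≠ S) :
    ∃ b ∈ S, b ∉ Z ∧ Good h S (insert b Z) := by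
  obtain ⟨h1, h2, h3⟩ := hZ
  obtain ⟨a, ha, b, hb, hbZ, j, hj⟩ := hS Z h1 h2 hne
  refine ⟨b, hb, hbZ, Finset.insert_subset hb h1, by simp, ?_⟩
  by_cases hsp : b ∈ Submodule.span (ZMod 2) (Z : Set V)
  · have e1 : dm (insert b Z) ≤ dm Z := by
      apply dm_mono
      intro y hy
      rcases Finset.mem_insert.1 (Finset.mem_coe.1 hy) with rfl | hy
      · exact hsp
      · exact Submodule.subset_span hy
    have e2 : rho h Z ≤ rho h (insert b Z) :=
      rho_mono (fun y hy => Submodule.subset_span (by simpa using Or.inr hy))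
    omega
  · have e1 := dm_insert_of_notMem hsp
    have e2 := rho_add h Z
    have e3 := rho_add h (insert b Z)
    have e4 : ∑ i, dm ((insert b Z).image (h i)) + 1 ≤ ∑ i, dm (Z.image (h i)) + d := by
      have h1 : ∑ i ∈ Finset.univ.erase j, dm ((insert b Z).image (h i)) ≤
          ∑ i ∈ Finset.univ.erase j, (dm (Z.image (h i)) + 1) :=
        Finset.sum_le_sum fun i _ => by
          rw [Finset.image_insert]; exact dm_insert_le _ _
      have h2 : dm ((insert b Z).image (h j)) = dm (Z.image (h j)) := by
        rw [Finset.image_insert, Finset.insert_eq_of_mem]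
        rw [← hj]; exact Finset.mem_image_of_mem _ ha
      rw [← Finset.add_sum_erase _ _ (Finset.mem_univ j), h2,
        ← Finset.add_sum_erase _ (fun i => dm (Z.image (h i))) (Finset.mem_univ j)]
      rw [Finset.sum_add_distrib, Finset.sum_const, Finset.card_erase_of_mem (Finset.mem_univ _),
        Finset.card_univ, Fintype.card_fin] at h1
      have := j.pos
      simp only [smul_eq_mul, mul_one] at h1
      omega
    rw [e1, mul_add, mul_one] at e3
    omega

/-- Discrete intermediate value theorem along a growing chain of good subsets. -/
lemma good_ivt {S : Finset V} (hS : Conn h S) {g : Finset V → ℤ}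
    (hg : ∀ x Z, g (insert x Z) ≤ g Z + 1) {t : ℤ} (ht : t ≤ g S) {Z₀ : Finset V}
    (hZ₀ : Good h S Z₀) (h0 : g Z₀ ≤ t) : ∃ Z, Z₀ ⊆ Z ∧ Good h S Z ∧ g Z = t := by
  induction hn : (S \ Z₀).card using Nat.strong_induction_on generalizing Z₀ with
  | _ n ih =>
    by_cases he : g Z₀ = t
    · exact ⟨Z₀, subset_rfl, hZ₀, he⟩
    have hne : Z₀ ≠ S := by rintro rfl; omega
    obtain ⟨b, hb, hbZ, hgood⟩ := good_extend hS hZ₀ hne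
    have hlt : (S \ insert b Z₀).card < n := by
      rw [← hn]
      apply Finset.card_lt_card
      rw [Finset.ssubset_iff_of_subset (Finset.sdiff_subset_sdiff subset_rfl
        (Finset.subset_insert _ _))]
      exact ⟨b, by simp [hb, hbZ], by simp⟩
    have := hg b Z₀
    obtain ⟨Z, h1, h2, h3⟩ := ih _ hlt hgood (by omega) rfl
    exact ⟨Z, (Finset.subset_insert _ _).trans h1, h2, h3⟩

lemma good_self {S : Finset V} (hS : Conn h S) (hne : S.Nonempty) : Good h S S := by
  obtain ⟨x, hx⟩ := hne
  obtain ⟨Z, -, h2, h3⟩ := good_ivt hS (g := fun Z => (Z.card : ℤ)) (t := S.card)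
    (fun x Z => by have := Finset.card_insert_le x Z; omega) le_rfl (good_singleton hx)
    (by
      have := Finset.card_pos.2 ⟨x, hx⟩
      simp only [Finset.card_singleton]; omega)
  have := Finset.eq_of_subset_of_card_le h2.1 (by omega)
  rwa [this] at h2

/-- Parity: zero-sum sets of keys have even size, hence at least four elements. -/
lemma four_le_of_sum_zero {p : V →ₗ[ZMod 2] ZMod 2} {Q : Finset V} (hp : ∀ x ∈ Q, p x = 1)
    (hne : Q.Nonempty) (hv : p (∑ x ∈ Q, x) = 0) (h2 : ∀ x ∈ Q, ∀ y ∈ Q, x ≠ y → ∑ x ∈ Q, x ≠ x + y) :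
    4 ≤ Q.card ∧ Even Q.card := by
  have h1 : Even Q.card := by
    rw [map_sum, Finset.sum_congr rfl hp] at hv
    simp only [Finset.sum_const, nsmul_eq_mul, mul_one] at hv
    exact (ZMod.natCast_eq_zero_iff_even).1 hv
  refine ⟨?_, h1⟩
  have h3 := Finset.card_pos.2 hne
  have h4 : Q.card ≠ 2 := by
    intro h5
    obtain ⟨x, y, hxy, rfl⟩ := Finset.card_eq_two.1 h5
    exact h2 x (by simp) y (by simp) hxy (Finset.sum_pair hxy)
  obtain ⟨m, hm⟩ := h1
  omega

lemma four_le_of_sum_zero' {p : V →ₗ[ZMod 2] ZMod 2} {Q : Finset V} (hp : ∀ x ∈ Q, p x = 1)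
    (hne : Q.Nonempty) (hv : ∑ x ∈ Q, x = 0) : 4 ≤ Q.card ∧ Even Q.card := by
  refine four_le_of_sum_zero hp hne (by rw [hv, map_zero]) fun x _ y _ hxy h0 => hxy ?_
  rw [hv] at h0
  rw [← add_add_self x y, ← h0, zero_add]

/-- The conclusion of the structure theorem: a set of edges carrying few keys relative to the
constraints it imposes. -/
def Outcome (h : Fin d → V →ₗ[ZMod 2] R) (Z : Finset V) : Prop :=
  (∃ s, TypeA s Z ∧ 2 * Z.card + 1 ≤ 2 * rho h Z + s) ∨
  (∃ v j, h j v = 0 ∧ TypeB v Z ∧ Z.card ≤ rho h Z + 3) ∨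
  (TypeC Z ∧ Z.card ≤ rho h Z + 4)

end Structure

section Structure

set_option linter.unusedSectionVars false

variable {V R : Type*} [AddCommGroup V] [Module (ZMod 2) V] [Module.Finite (ZMod 2) V]
  [DecidableEq V] [AddCommGroup R] [Module (ZMod 2) R] [Module.Finite (ZMod 2) R] [DecidableEq R]
  {d : ℕ} {h : Fin d → V →ₗ[ZMod 2] R}

lemma sum_dm_le_nv (S : Finset V) : ∑ j, dm (S.image (h j)) ≤ nv h S :=
  Finset.sum_le_sum fun _ _ => dm_le_card _

/-- The case of a single relation, of length `|Q|`. If `|Q| = 4`, either at most two of the maps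
satisfy `dm (h j S) = |h j S|`, which gives one more constraint on `S`, or three of them do, and
then each of these must identify two elements of `Q`. -/
lemma outcome_one {S Q : Finset V} (hd : nv h S + S.card + 1 ≤ d * S.card) (hS : Conn h S)
    (hdm : dm S + 1 = S.card) (hQS : Q ⊆ S) (hne : Q.Nonempty) (hQ : ∑ x ∈ Q, x = 0)
    (hQ4 : 4 ≤ Q.card) (hev : Even Q.card) : ∃ Z ⊆ S, Outcome h Z := by
  have hA : ∀ Z, Q ⊆ Z → TypeA Q.card Z := fun Z hZ =>
    ⟨Q, hZ, Q, hZ, hQ, hQ, by rw [Finset.union_self]⟩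
  by_cases h6 : 6 ≤ Q.card
  · have hg := (good_self hS (hne.mono hQS)).2.2
    exact ⟨S, subset_rfl, Or.inl ⟨_, hA S hQS, by omega⟩⟩
  have hQ4' : Q.card = 4 := by obtain ⟨m, hm⟩ := hev; omega
  set E := Finset.univ.filter fun j => (S.image (h j)).card ≤ dm (S.image (h j)) with hE
  by_cases hE2 : E.card ≤ 2
  · refine ⟨S, subset_rfl, Or.inl ⟨_, hA S hQS, ?_⟩⟩
    have h1 : ∑ j, (dm (S.image (h j)) + 1) ≤
        ∑ j, ((S.image (h j)).card + if (S.image (h j)).card ≤ dm (S.image (h j)) then 1 else 0) := by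
      refine Finset.sum_le_sum fun j _ => ?_
      have := dm_le_card (S.image (h j))
      split_ifs <;> omega
    rw [Finset.sum_add_distrib, Finset.sum_add_distrib, ← Finset.card_filter] at h1
    simp only [Finset.sum_const, Finset.card_univ, Fintype.card_fin, smul_eq_mul, mul_one] at h1
    have h2 := rho_add h S
    have h3 : d * S.card = d * dm S + d := by rw [← hdm, mul_add, mul_one]
    have h4 : ∑ j, (S.image (h j)).card = nv h S := rfl
    rw [← hE] at h1
    omega
  · refine ⟨Q, hQS, Or.inl ⟨_, hA Q subset_rfl, ?_⟩⟩
    have h1 : ∑ j, (if j ∈ E then 1 else 0) ≤ rho h Q := by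
      refine Finset.sum_le_sum fun j _ => ?_
      split_ifs with hj
      swap
      · exact Nat.zero_le _
      have hj' : (S.image (h j)).card ≤ dm (S.image (h j)) := by simpa [hE] using hj
      have hinj : ¬ Set.InjOn (h j) (Q : Set V) := by
        intro hinj
        refine no_rel hj' (Finset.image_subset_image hQS) (hne.image _) ?_
        rw [Finset.sum_image hinj, ← map_sum, hQ, map_zero]
      unfold Set.InjOn at hinj
      push Not at hinj
      obtain ⟨x, hx, y, hy, hxy, hn⟩ := hinj
      rw [Nat.succ_le_iff, Module.finrank_pos_iff, Submodule.nontrivial_iff_ne_bot]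
      intro hbot
      have hmem : x - y ∈ (Submodule.span (ZMod 2) (Q : Set V) ⊓ LinearMap.ker (h j) :
          Submodule (ZMod 2) V) := by
        refine Submodule.mem_inf.2 ⟨Submodule.sub_mem _ (Submodule.subset_span hx)
          (Submodule.subset_span hy), LinearMap.mem_ker.2 ?_⟩
        rw [map_sub, hxy, sub_self]
      rw [hbot, Submodule.mem_bot] at hmem
      exact hn (sub_eq_zero.1 hmem)
    simp only [Finset.sum_ite_mem, Finset.univ_inter, Finset.sum_const, smul_eq_mul, mul_one] at h1
    omega

/-- Three relations of length four among six keys pair these keys up. -/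
lemma trip_of_rel {Q₁ Q₂ : Finset V} (h1 : ∑ x ∈ Q₁, x = 0) (h2 : ∑ x ∈ Q₂, x = 0)
    (c1 : 4 ≤ Q₁.card) (c2 : 4 ≤ Q₂.card) (c3 : 4 ≤ (Q₁ \ Q₂ ∪ Q₂ \ Q₁).card)
    (c : (Q₁ ∪ Q₂).card ≤ 6) :
    ∃ (v : V) (x : Fin 3 → V), Trip v x ∧ ∀ i, x i ∈ Q₁ ∪ Q₂ ∧ x i + v ∈ Q₁ ∪ Q₂ := by
  have e1 := Finset.card_sdiff_add_card_inter Q₁ Q₂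
  have e2 := Finset.card_sdiff_add_card_inter Q₂ Q₁
  have e3 := Finset.card_union_add_card_inter Q₁ Q₂
  rw [Finset.card_union_of_disjoint disjoint_sdiff_sdiff] at c3
  rw [Finset.inter_comm Q₂ Q₁] at e2
  have d1 : (Q₁ \ Q₂).card = 2 := by omega
  have d2 : (Q₂ \ Q₁).card = 2 := by omega
  have d3 : (Q₁ ∩ Q₂).card = 2 := by omega
  have s1 : ∑ x ∈ Q₁ \ Q₂, x + ∑ x ∈ Q₁ ∩ Q₂, x = 0 := by
    rw [← h1, ← Finset.sum_inter_add_sum_sdiff Q₁ Q₂, add_comm]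
  have s2 : ∑ x ∈ Q₂ \ Q₁, x + ∑ x ∈ Q₁ ∩ Q₂, x = 0 := by
    rw [← h2, ← Finset.sum_inter_add_sum_sdiff Q₂ Q₁, add_comm, Finset.inter_comm]
  obtain ⟨a, a', ha, hA⟩ := Finset.card_eq_two.1 d1
  obtain ⟨b, b', hb, hB⟩ := Finset.card_eq_two.1 d2
  obtain ⟨e, e', he, hE⟩ := Finset.card_eq_two.1 d3
  rw [hA, hE, Finset.sum_pair ha, Finset.sum_pair he] at s1
  rw [hB, hE, Finset.sum_pair hb, Finset.sum_pair he] at s2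
  have ma : ∀ x, x = a ∨ x = a' → x ∈ Q₁ ∧ x ∉ Q₂ := by
    intro x hx
    have : x ∈ Q₁ \ Q₂ := by rw [hA]; simpa using hx
    simpa using this
  have mb : ∀ x, x = b ∨ x = b' → x ∈ Q₂ ∧ x ∉ Q₁ := by
    intro x hx
    have : x ∈ Q₂ \ Q₁ := by rw [hB]; simpa using hx
    simpa using this
  have me : ∀ x, x = e ∨ x = e' → x ∈ Q₁ ∧ x ∈ Q₂ := by
    intro x hx
    have : x ∈ Q₁ ∩ Q₂ := by rw [hE]; simpa using hx
    simpa using this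
  have t1 : a + (e + e') = a' := by
    have : a + a' = e + e' := by
      rw [← add_add_self (a + a') (e + e'), s1, zero_add]
    rw [← this, ← add_assoc, ZModModule.add_self, zero_add]
  have t2 : b + (e + e') = b' := by
    have : b + b' = e + e' := by
      rw [← add_add_self (b + b') (e + e'), s2, zero_add]
    rw [← this, ← add_assoc, ZModModule.add_self, zero_add]
  have t3 : e + (e + e') = e' := by
    rw [← add_assoc, ZModModule.add_self, zero_add]
  have A1 := ma a (by simp)
  have A2 := ma a' (by simp)
  have B1 := mb b (by simp)
  have B2 := mb b' (by simp)
  have E1 := me e (by simp)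
  have E2 := me e' (by simp)
  refine ⟨e + e', ![a, b, e], ⟨?_, ?_⟩, ?_⟩
  · intro i j hij
    fin_cases i <;> fin_cases j <;> simp at hij ⊢ <;> subst hij <;> tauto
  · intro i j hij
    fin_cases i <;> fin_cases j <;> simp [t1, t2, t3] at hij <;> subst hij <;> tauto
  · intro i
    fin_cases i <;> simp [t1, t2, t3] <;> tauto

lemma Trip.ne_zero {v : V} {x : Fin 3 → V} (hx : Trip v x) : v ≠ 0 := by
  rintro rfl
  exact hx.2 0 0 (add_zero _)

lemma Trip.typeA {v : V} {x : Fin 3 → V} (hx : Trip v x) {Z : Finset V}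
    (hZ : ∀ i, x i ∈ Z ∧ x i + v ∈ Z) : TypeA 6 Z := by
  have hi : ∀ i j, i ≠ j → x i ≠ x j := fun i j hij h0 => hij (hx.1 h0)
  have hp : ∀ i, x i ≠ x i + v := fun i h0 => hx.2 i i h0.symm
  have hq : ∀ i j, i ≠ j → x i + v ≠ x j + v := fun i j hij h0 => hij (hx.1 (add_right_cancel h0))
  have hr : ∀ i j, x i ≠ x j + v := fun i j h0 => hx.2 j i h0.symm
  have hs : ∀ i j, i ≠ j → ∑ y ∈ ({x i, x i + v, x j, x j + v} : Finset V), y = 0 := by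
    intro i j hij
    rw [Finset.sum_insert, Finset.sum_insert, Finset.sum_insert, Finset.sum_singleton]
    · have : x i + (x i + v + (x j + (x j + v))) = (x i + x i) + (x j + x j) + (v + v) := by abel
      rw [this]; simp [ZModModule.add_self]
    · simp [hp]
    · simp only [Finset.mem_insert, Finset.mem_singleton, not_or]
      exact ⟨hx.2 _ _, hq _ _ hij⟩
    · simp only [Finset.mem_insert, Finset.mem_singleton, not_or]
      exact ⟨hp _, hi _ _ hij, hr _ _⟩
  refine ⟨{x 0, x 0 + v, x 1, x 1 + v}, ?_, {x 0, x 0 + v, x 2, x 2 + v}, ?_, hs _ _ (by decide),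
    hs _ _ (by decide), ?_⟩
  · simp [Finset.insert_subset_iff, hZ]
  · simp [Finset.insert_subset_iff, hZ]
  · have : ({x 0, x 0 + v, x 1, x 1 + v} ∪ {x 0, x 0 + v, x 2, x 2 + v} : Finset V) =
        Finset.univ.image x ∪ Finset.univ.image (fun i => x i + v) := by
      ext y
      simp only [Finset.mem_union, Finset.mem_insert, Finset.mem_singleton, Finset.mem_image,
        Finset.mem_univ, true_and, Fin.exists_fin_succ, Fin.isValue]
      simp [eq_comm]
      tauto
    rw [this, Finset.card_union_of_disjoint, Finset.card_image_of_injective _ hx.1,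
      Finset.card_image_of_injective]
    · simp
    · intro i j hij
      exact hx.1 (add_right_cancel hij)
    · rw [Finset.disjoint_left]
      intro y h1 h2
      obtain ⟨i, -, rfl⟩ := Finset.mem_image.1 h1
      obtain ⟨j, -, h3⟩ := Finset.mem_image.1 h2
      exact hx.2 j i h3

/-- Normalising the three pairs: their first elements may be chosen among given representatives
modulo `v`, and together with these representatives the six elements are at most `|Y₀| + 3`. -/
lemma trip_reps {v : V} {x : Fin 3 → V} (hx : Trip v x) {S Y₀ : Finset V}
    (hS : ∀ i, x i ∈ S ∧ x i + v ∈ S) (hY₀ : Y₀ ⊆ S) (hrep : S ⊆ tw v Y₀)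
    (hno : ∀ y ∈ Y₀, y + v ∉ Y₀) :
    ∃ u : Fin 3 → V, Trip v u ∧ (∀ i, u i ∈ Y₀) ∧ ∃ Z, Y₀ ⊆ Z ∧ Z ⊆ S ∧
      (∀ i, u i ∈ Z ∧ u i + v ∈ Z) ∧ Z.card ≤ Y₀.card + 3 := by
  have h1 : ∀ i, ∃ u, (u = x i ∨ u = x i + v) ∧ u ∈ Y₀ := by
    intro i
    rcases mem_tw.1 (hrep (hS i).1) with h | h
    · exact ⟨_, Or.inl rfl, h⟩
    · exact ⟨_, Or.inr rfl, h⟩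
  choose u hu huY using h1
  have huS : ∀ i, u i + v ∈ S := by
    intro i
    rcases hu i with h | h
    · rw [h]; exact (hS i).2
    · rw [h, add_add_self]; exact (hS i).1
  refine ⟨u, ⟨?_, fun i j h => hno _ (huY i) (h ▸ huY j)⟩, huY,
    Y₀ ∪ Finset.univ.image (fun i => u i + v), Finset.subset_union_left, ?_, ?_, ?_⟩
  · intro i j hij
    rcases hu i with h | h <;> rcases hu j with h' | h' <;> rw [h, h'] at hij
    · exact hx.1 hij
    · exact absurd hij.symm (hx.2 _ _)
    · exact absurd hij (hx.2 _ _)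
    · exact hx.1 (add_right_cancel hij)
  · refine Finset.union_subset hY₀ fun y hy => ?_
    obtain ⟨i, -, rfl⟩ := Finset.mem_image.1 hy
    exact huS i
  · intro i
    exact ⟨Finset.mem_union_left _ (huY i), Finset.mem_union_right _
      (Finset.mem_image_of_mem _ (Finset.mem_univ i))⟩
  · refine (Finset.card_union_le _ _).trans ?_
    have : (Finset.univ.image (fun i => u i + v)).card ≤ 3 := Finset.card_image_le
    omega

end Structure

section Structure

set_option linter.unusedSectionVars false

variable {V R : Type*} [AddCommGroup V] [Module (ZMod 2) V] [Module.Finite (ZMod 2) V]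
  [DecidableEq V] [AddCommGroup R] [Module (ZMod 2) R] [Module.Finite (ZMod 2) R] [DecidableEq R]
  {d : ℕ} {h : Fin d → V →ₗ[ZMod 2] R}

lemma conn_translate {S : Finset V} (hS : Conn h S) (v : V) : Conn h (S.image (· + v)) := by
  intro A hA hne hAS
  have hmem : ∀ x, x ∈ A.image (· + v) ↔ x + v ∈ A := by
    intro x
    rw [Finset.mem_image]
    constructor
    · rintro ⟨a, ha, rfl⟩; rwa [add_add_self]
    · exact fun hx => ⟨_, hx, add_add_self _ _⟩
  have hmemS : ∀ x, x ∈ S.image (· + v) ↔ x + v ∈ S := by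
    intro x
    rw [Finset.mem_image]
    constructor
    · rintro ⟨a, ha, rfl⟩; rwa [add_add_self]
    · exact fun hx => ⟨_, hx, add_add_self _ _⟩
  obtain ⟨a, ha, b, hb, hbA, j, hj⟩ := hS (A.image (· + v)) (fun x hx => by
      have := (hmemS _).1 (hA ((hmem _).1 hx)); rwa [add_add_self] at this) (hne.image _) (fun h0 => by
      apply hAS
      ext x
      rw [hmemS, ← h0, hmem, add_add_self])
  refine ⟨a + v, (hmem _).1 ha, b + v, Finset.mem_image_of_mem _ hb,
    fun h0 => hbA ((hmem _).2 h0), j, ?_⟩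
  rw [map_add, map_add, hj]

lemma image_tw (f : V →ₗ[ZMod 2] R) (v : V) (S : Finset V) :
    (tw v S).image f = tw (f v) (S.image f) := by
  unfold tw
  rw [Finset.image_union, Finset.image_image, Finset.image_image]
  congr 1
  exact Finset.image_congr fun x _ => map_add _ _ _

/-- The doubling step: if no map kills `v`, translation by `v` acts freely on the vertices and on
the edges of the graph of `tw v S`, and `two_dm_le` bounds the ranks of the images. -/
lemma rho_of_free {S : Finset V} (hd : nv h S + S.card + 1 ≤ d * S.card) (hS : Conn h S) {v x : V}
    (hx : x ∈ S) (hxv : x + v ∈ S) (hv : ∀ j, h j v ≠ 0) {m : ℕ} (hm : (tw v S).card = 2 * m)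
    (hdm : m + 1 ≤ dm S) : m + 1 ≤ rho h S := by
  have h1 := nv_union_le (h := h) (A := S) (conn_translate hS v)
    ⟨x, Finset.mem_inter.2 ⟨hx, Finset.mem_image.2 ⟨_, hxv, add_add_self _ _⟩⟩⟩
  change nv h (tw v S) + (tw v S).card + d * S.card ≤ nv h S + S.card + d * (tw v S).card at h1
  have h2 : ∑ j, 2 * dm (S.image (h j)) ≤ ∑ j, (((tw v S).image (h j)).card + 2) :=
    Finset.sum_le_sum fun j _ => by rw [image_tw]; exact two_dm_le (hv j) _
  rw [← Finset.mul_sum, Finset.sum_add_distrib] at h2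
  simp only [Finset.sum_const, Finset.card_univ, Fintype.card_fin, smul_eq_mul] at h2
  have h3 : ∑ j, ((tw v S).image (h j)).card = nv h (tw v S) := rfl
  have h4 := rho_add h S
  have h5 : d * (m + 1) ≤ d * dm S := Nat.mul_le_mul_left _ hdm
  have h6 : d * (tw v S).card = 2 * (d * m) := by rw [hm]; ring
  rw [mul_add, mul_one] at h5
  omega

/-- The further relation: `Y` consists of representatives modulo `v`, and it is dependent modulo
`v`. -/
lemma typeC_of {p : V →ₗ[ZMod 2] ZMod 2} {S Y Z₀ : Finset V} (hp : ∀ x ∈ S, p x = 1)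
    {v : V} {x : Fin 3 → V} (hx : Trip v x) (hY : Y ⊆ S) (hxS : ∀ i, x i ∈ Y)
    (hpv : p v = 0) (hno : ∀ y ∈ Y, y + v ∉ Y)
    (hYZ : Y ⊆ Z₀) (hZ : ∀ i, x i ∈ Z₀ ∧ x i + v ∈ Z₀) (hdm : dm (insert v Y) ≤ Y.card) :
    TypeC Z₀ := by
  have hvY : v ∉ Y := fun h0 => by
    have := hp _ (hY h0)
    rw [hpv] at this
    exact zero_ne_one this
  obtain ⟨Q, hQ, hne, hsum⟩ := exists_rel (Z := insert v Y)
    (by rw [Finset.card_insert_of_notMem hvY]; omega)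
  have hsub : Q.erase v ⊆ Y := fun y hy => by
    rcases Finset.mem_insert.1 (hQ (Finset.mem_of_mem_erase hy)) with h1 | h1
    · exact absurd h1 (Finset.ne_of_mem_erase hy)
    · exact h1
  have hs : ∑ y ∈ Q.erase v, y = 0 ∨ ∑ y ∈ Q.erase v, y = v := by
    by_cases hvQ : v ∈ Q
    · right
      rw [← Finset.add_sum_erase _ _ hvQ, add_comm] at hsum
      rw [← add_add_self (∑ y ∈ Q.erase v, y) v, hsum, zero_add]
    · left; rwa [Finset.erase_eq_of_notMem hvQ]
  have hne' : (Q.erase v).Nonempty := by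
    rw [Finset.nonempty_iff_ne_empty]
    intro h0
    have hQv : Q = {v} := by
      obtain ⟨q, hq⟩ := hne
      rcases Finset.erase_eq_empty_iff _ _ |>.1 h0 with h1 | h1
      · rw [h1] at hq; simp at hq
      · exact h1
    rw [hQv, Finset.sum_singleton] at hsum
    exact hx.ne_zero hsum
  have h4 := four_le_of_sum_zero (p := p) (Q := Q.erase v) (fun y hy => hp _ (hY (hsub hy))) hne'
    (by rcases hs with h0 | h0 <;> rw [h0]
        · exact map_zero _
        · exact hpv)
    (by
      intro y hy z hz hyz h0
      rcases hs with h1 | h1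
      · rw [h1] at h0
        exact hyz (by rw [← add_add_self y z, ← h0, zero_add])
      · rw [h1] at h0
        apply hno y (hsub hy)
        rw [h0, ← add_assoc, ZModModule.add_self, zero_add]
        exact hsub hz)
  exact ⟨v, x, hx, hZ, Q.erase v, hsub.trans hYZ, fun i hi => hno _ (hxS i) (hsub hi), h4.1, hs⟩

/-- The case of three pairs with common difference `v` in a good set with two relations. -/
lemma outcome_trip {p : V →ₗ[ZMod 2] ZMod 2} {S Z₂ : Finset V} (hp : ∀ x ∈ S, p x = 1)
    (hd : nv h S + S.card + 1 ≤ d * S.card) (hS : Conn h S) (hZ₂ : Good h S Z₂)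
    (hdm : dm Z₂ + 2 = Z₂.card) {v : V} {x : Fin 3 → V} (hx : Trip v x)
    (hxZ : ∀ i, x i ∈ Z₂ ∧ x i + v ∈ Z₂) : ∃ Z ⊆ S, Outcome h Z := by
  by_cases hv : ∃ j, h j v = 0
  · obtain ⟨j, hj⟩ := hv
    have := hZ₂.2.2
    exact ⟨Z₂, hZ₂.1, Or.inr (Or.inl ⟨v, j, hj, ⟨x, hx, hxZ⟩, by omega⟩)⟩
  push Not at hv
  have hpv : p v = 0 := by
    have h1 := hp _ (hZ₂.1 (hxZ 0).1)
    have h2 := hp _ (hZ₂.1 (hxZ 0).2)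
    rw [map_add, h1] at h2
    simpa using h2
  have hv0 := hx.ne_zero
  have hspan : ∀ {Z Y : Finset V} {u : Fin 3 → V}, (∀ i, u i ∈ Z ∧ u i + v ∈ Z) → Y ⊆ Z →
      ((insert v Y : Finset V) : Set V) ⊆ Submodule.span (ZMod 2) (Z : Set V) := by
    intro Z Y u hu hY y hy
    rcases Finset.mem_insert.1 (Finset.mem_coe.1 hy) with rfl | hy
    · have h1 : y = u 0 + (u 0 + y) := by
        rw [← add_assoc, ZModModule.add_self, zero_add]
      rw [h1]
      exact Submodule.add_mem _ (Submodule.subset_span (hu 0).1) (Submodule.subset_span (hu 0).2)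
    · exact Submodule.subset_span (hY hy)
  -- `g` is the number of relations modulo `v` among the classes modulo `v`.
  set g : Finset V → ℤ := fun Z => ((tw v Z).card / 2 : ℕ) + 1 - (dm Z : ℤ) with hg
  by_cases hgS : g S < 1
  · obtain ⟨Y, hYS, hrep, hcard, hno⟩ := exists_reps hv0 S
    have hgS' : Y.card + 1 ≤ dm S := by
      simp only [hg, hcard] at hgS; omega
    have hr := rho_of_free hd hS (hZ₂.1 (hxZ 0).1) (hZ₂.1 (hxZ 0).2) hv hcard hgS'
    obtain ⟨u, hu, -, Z, hYZ, hZS, huZ, hZc⟩ :=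
      trip_reps hx (fun i => ⟨hZ₂.1 (hxZ i).1, hZ₂.1 (hxZ i).2⟩) hYS hrep hno
    refine ⟨Z, hZS, Or.inl ⟨6, hu.typeA huZ, ?_⟩⟩
    have h1 : rho h S ≤ rho h Z := by
      apply rho_mono
      exact (span_reps hrep).trans (Submodule.span_le.2 (hspan huZ hYZ))
    omega
  · have hstep : ∀ x Z, g (insert x Z) ≤ g Z + 1 := by
      intro x Z
      have h1 : (tw v (insert x Z)).card ≤ (tw v Z).card + 2 := by
        rw [tw_insert]
        have := Finset.card_insert_le (x + v) (tw v Z)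
        have := Finset.card_insert_le x (insert (x + v) (tw v Z))
        omega
      have h2 := dm_mono' (Finset.subset_insert x Z)
      simp only [hg]; omega
    have h0 : g Z₂ ≤ 1 := by
      obtain ⟨Y, hYS, hrep, hcard, hno⟩ := exists_reps hv0 Z₂
      have : (Y ∪ Finset.univ.image (fun i => x i)).card ≤ Z₂.card := by
        apply Finset.card_le_card
        refine Finset.union_subset hYS fun y hy => ?_
        obtain ⟨i, -, rfl⟩ := Finset.mem_image.1 hy
        exact (hxZ i).1
      obtain ⟨u, hu, huY, Z, hYZ, hZS, huZ, hZc⟩ := trip_reps hx hxZ hYS hrep hno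
      have h3 : (Y ∪ Finset.univ.image (fun i => u i + v)).card ≤ Z₂.card := by
        apply Finset.card_le_card
        refine Finset.union_subset hYS fun y hy => ?_
        obtain ⟨i, -, rfl⟩ := Finset.mem_image.1 hy
        exact hZS (huZ i).2
      rw [Finset.card_union_of_disjoint, Finset.card_image_of_injective] at h3
      · simp only [Finset.card_univ, Fintype.card_fin] at h3
        simp only [hg, hcard]; omega
      · intro i j hij
        exact hu.1 (add_right_cancel hij)
      · rw [Finset.disjoint_left]
        intro y h1 h2
        obtain ⟨i, -, rfl⟩ := Finset.mem_image.1 h2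
        exact hno _ (huY i) h1
    obtain ⟨Z, hZZ, hZg, hZ1⟩ := good_ivt hS hstep (not_lt.1 hgS) hZ₂ h0
    obtain ⟨Y, hYS, hrep, hcard, hno⟩ := exists_reps hv0 Z
    obtain ⟨u, hu, huY, Z', hYZ, hZS, huZ, hZc⟩ :=
      trip_reps hx (fun i => ⟨hZZ (hxZ i).1, hZZ (hxZ i).2⟩) hYS hrep hno
    have hdmY : dm Z = Y.card := by
      simp only [hg, hcard] at hZ1; omega
    have h1 : rho h Z ≤ rho h Z' := by
      apply rho_mono
      exact (span_reps hrep).trans (Submodule.span_le.2 (hspan huZ hYZ))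
    have h2 := hZg.2.2
    refine ⟨Z', hZS.trans hZg.1, Or.inr (Or.inr ⟨typeC_of hp hu (hYS.trans hZg.1) huY hpv hno hYZ
      huZ ?_, by omega⟩)⟩
    rw [← hdmY]
    exact dm_mono (hspan (fun i => ⟨hZZ (hxZ i).1, hZZ (hxZ i).2⟩) hYS)

/-- The structure theorem: a set of keys whose hash graph has at most `(d - 1) |S| - 1` vertices
contains one of three kinds of subsets. -/
theorem exists_outcome {p : V →ₗ[ZMod 2] ZMod 2} {S : Finset V} (hp : ∀ x ∈ S, p x = 1)
    (hd : nv h S + S.card + 1 ≤ d * S.card) : ∃ Z ⊆ S, Outcome h Z := by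
  obtain ⟨S', hS'S, hd', hS'⟩ := exists_conn hd
  suffices ∃ Z ⊆ S', Outcome h Z by
    obtain ⟨Z, hZ, h1⟩ := this
    exact ⟨Z, hZ.trans hS'S, h1⟩
  replace hp : ∀ x ∈ S', p x = 1 := fun x hx => hp x (hS'S hx)
  clear hS'S hd S
  rename' S' => S, hd' => hd, hS' => hS
  have hne : S.Nonempty := by
    rw [Finset.nonempty_iff_ne_empty]; rintro rfl; simp at hd
  have hle := dm_le_card S
  rcases Nat.lt_or_ge S.card (dm S + 1) with h0 | h0
  · -- independent keys: the empty relation, covering `0` keys, is of the first kind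
    refine ⟨S, subset_rfl, Or.inl ⟨0, ⟨∅, by simp, ∅, by simp, by simp⟩, ?_⟩⟩
    have h1 := rho_add h S
    have h2 := sum_dm_le_nv (h := h) S
    have h3 : dm S = S.card := by omega
    rw [h3] at h1
    omega
  rcases Nat.lt_or_ge S.card (dm S + 2) with h1 | h1
  · obtain ⟨Q, hQS, hQne, hQ⟩ := exists_rel (Z := S) (by omega)
    have h4 := four_le_of_sum_zero' (fun x hx => hp x (hQS hx)) hQne hQ
    exact outcome_one hd hS (by omega) hQS hQne hQ h4.1 h4.2
  obtain ⟨x, hx⟩ := hne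
  obtain ⟨Z, -, hZ, hZ2⟩ := good_ivt hS (g := fun Z => (Z.card : ℤ) - dm Z) (t := 2)
    (fun x Z => by
      have e1 := Finset.card_insert_le x Z
      have e2 := dm_mono' (Finset.subset_insert x Z)
      omega) (by omega) (good_singleton hx) (by simp; omega)
  have hZ2' : dm Z + 2 = Z.card := by omega
  have hpZ : ∀ x ∈ Z, p x = 1 := fun x hx => hp x (hZ.1 hx)
  -- Two different relations on `Z`: the second one avoids an element `y` of the first.
  obtain ⟨Q₁, hQ₁, hn₁, hs₁⟩ := exists_rel (Z := Z) (by omega)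
  obtain ⟨y, hy⟩ := hn₁
  obtain ⟨Q₂, hQ₂', hn₂, hs₂⟩ := exists_rel (Z := Z.erase y) (by
    have e1 := Finset.card_erase_of_mem (hQ₁ hy)
    have e2 := dm_mono' (Finset.erase_subset y Z)
    omega)
  have hQ₂ : Q₂ ⊆ Z := hQ₂'.trans (Finset.erase_subset _ _)
  have hy₂ : y ∉ Q₂ := fun h2 => by simpa using hQ₂' h2
  -- A good set with two relations has `rho h Z ≥ |Z| - 3`, which suffices if they cover `7` keys.
  by_cases h7 : 7 ≤ (Q₁ ∪ Q₂).card
  · have := hZ.2.2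
    exact ⟨Z, hZ.1, Or.inl ⟨_, ⟨Q₁, hQ₁, Q₂, hQ₂, hs₁, hs₂, rfl⟩, by omega⟩⟩
  have c1 := four_le_of_sum_zero' (fun x hx => hpZ x (hQ₁ hx)) ⟨y, hy⟩ hs₁
  have c2 := four_le_of_sum_zero' (fun x hx => hpZ x (hQ₂ hx)) hn₂ hs₂
  have hs₃ : ∑ x ∈ Q₁ \ Q₂ ∪ Q₂ \ Q₁, x = 0 := by
    rw [Finset.sum_union disjoint_sdiff_sdiff]
    have e1 := Finset.sum_inter_add_sum_sdiff Q₁ Q₂ (fun x => x)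
    have e2 := Finset.sum_inter_add_sum_sdiff Q₂ Q₁ (fun x => x)
    rw [hs₁] at e1
    rw [hs₂, Finset.inter_comm] at e2
    have e3 : ∑ x ∈ Q₁ \ Q₂, x + ∑ x ∈ Q₂ \ Q₁, x =
        (∑ x ∈ Q₁ ∩ Q₂, x + ∑ x ∈ Q₁ \ Q₂, x) + (∑ x ∈ Q₁ ∩ Q₂, x + ∑ x ∈ Q₂ \ Q₁, x) := by
      rw [add_add_add_comm, ZModModule.add_self, zero_add]
    rw [e3, e1, e2, add_zero]
  have c3 := four_le_of_sum_zero' (Q := Q₁ \ Q₂ ∪ Q₂ \ Q₁) (p := p) (fun x hx => hpZ x (by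
      simp only [Finset.mem_union, Finset.mem_sdiff] at hx
      rcases hx with hx | hx
      · exact hQ₁ hx.1
      · exact hQ₂ hx.1)) ⟨y, by simp [hy, hy₂]⟩ hs₃
  obtain ⟨v, x, hx, hxQ⟩ := trip_of_rel hs₁ hs₂ c1.1 c2.1 c3.1 (by omega)
  have hsub := Finset.union_subset hQ₁ hQ₂
  exact outcome_trip hp hd hS hZ hZ2' hx fun i => ⟨hsub (hxQ i).1, hsub (hxQ i).2⟩

end Structure

/-! ### Counting zero-sum tuples of keys -/

section Counting

set_option linter.unusedSectionVars false

open Finset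

/-- Every value is attained an even number of times. -/
def EvenMult {ι A : Type*} (a : ι → A) : Prop := ∀ y, Even (Nat.card {i // a i = y})

variable {A : Type*} [Fintype A] {ι : Type*} [Fintype ι]

lemma exists_pairing {a : ι → A} (ha : EvenMult a) :
    ∃ e : Fin (Fintype.card ι / 2) ⊕ Fin (Fintype.card ι / 2) ≃ ι,
      ∀ s, a (e (Sum.inl s)) = a (e (Sum.inr s)) := by
  classical
  choose m hm using ha
  have e1 : ∀ y, Nonempty (Fin (m y) ⊕ Fin (m y) ≃ {i // a i = y}) := fun y => by
    have := hm y
    rw [Nat.card_eq_fintype_card] at this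
    exact Fintype.card_eq.1 (by simp [this])
  let e2 : ∀ y, Fin (m y) ⊕ Fin (m y) ≃ {i // a i = y} := fun y => (e1 y).some
  let e3 : ((y : A) × Fin (m y)) ⊕ ((y : A) × Fin (m y)) ≃ ι :=
    (Equiv.sigmaSumDistrib _ _).symm.trans ((Equiv.sigmaCongrRight e2).trans
      (Equiv.sigmaFiberEquiv a))
  have h1 : ∀ s, a (e3 (Sum.inl s)) = s.1 := fun s => (e2 s.1 (Sum.inl s.2)).2
  have h2 : ∀ s, a (e3 (Sum.inr s)) = s.1 := fun s => (e2 s.1 (Sum.inr s.2)).2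
  have hc : Fintype.card ((y : A) × Fin (m y)) = Fintype.card (Fin (Fintype.card ι / 2)) := by
    have := Fintype.card_congr e3
    rw [Fintype.card_sum] at this
    rw [Fintype.card_fin]
    omega
  let e4 := (Fintype.equivOfCardEq hc).symm
  refine ⟨(Equiv.sumCongr e4 e4).trans e3, fun s => ?_⟩
  simp [h1, h2]

open scoped Classical in
/-- Cauchy–Schwarz over all pairings of the index set: the one-coordinate case. -/
lemma sum_evenMult_le (f : ι → A → ℝ) (hf : ∀ i a, 0 ≤ f i a) :
    ∑ a : ι → A, (if EvenMult a then ∏ i, f i (a i) else 0) ≤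
      (Fintype.card ι : ℝ) ^ Fintype.card ι * ∏ i, √(∑ x, f i x ^ 2) := by
  set t := Fintype.card ι / 2 with ht
  set B := ∏ i, √(∑ x, f i x ^ 2) with hB
  have hB0 : 0 ≤ B := prod_nonneg fun i _ => Real.sqrt_nonneg _
  have hP : ∀ a : ι → A, 0 ≤ ∏ i, f i (a i) := fun a => prod_nonneg fun i _ => hf _ _
  have h1 : ∑ a : ι → A, (if EvenMult a then ∏ i, f i (a i) else 0) ≤
      ∑ a : ι → A, ∑ e : Fin t ⊕ Fin t ≃ ι,
        if ∀ s, a (e (Sum.inl s)) = a (e (Sum.inr s)) then ∏ i, f i (a i) else 0 := by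
    refine sum_le_sum fun a _ => ?_
    have h0 : ∀ e : Fin t ⊕ Fin t ≃ ι, 0 ≤
        if ∀ s, a (e (Sum.inl s)) = a (e (Sum.inr s)) then ∏ i, f i (a i) else 0 := by
      intro e; split_ifs
      · exact hP a
      · exact le_rfl
    split_ifs with h
    · obtain ⟨e, he⟩ := exists_pairing h
      refine le_trans ?_ (single_le_sum (fun e _ => h0 e) (mem_univ e))
      rw [if_pos he]
    · exact sum_nonneg fun e _ => h0 e
  refine h1.trans ?_
  rw [sum_comm]
  have h2 : ∀ e : Fin t ⊕ Fin t ≃ ι, ∑ a : ι → A,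
      (if ∀ s, a (e (Sum.inl s)) = a (e (Sum.inr s)) then ∏ i, f i (a i) else 0) ≤ B := by
    intro e
    have h3 : ∑ a : ι → A, (if ∀ s, a (e (Sum.inl s)) = a (e (Sum.inr s)) then
        ∏ i, f i (a i) else 0) ≤
        ∑ b : Fin t → A, ∏ s, (f (e (Sum.inl s)) (b s) * f (e (Sum.inr s)) (b s)) := by
      rw [← sum_filter]
      have h4 : ∀ a ∈ univ.filter (fun a : ι → A => ∀ s, a (e (Sum.inl s)) = a (e (Sum.inr s))),
          ∏ i, f i (a i) = (fun b : Fin t → A =>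
            ∏ s, (f (e (Sum.inl s)) (b s) * f (e (Sum.inr s)) (b s)))
            (fun s => a (e (Sum.inl s))) := by
        intro a ha
        rw [mem_filter] at ha
        rw [← Equiv.prod_comp e, Fintype.prod_sum_type, ← prod_mul_distrib]
        exact prod_congr rfl fun s _ => by rw [← ha.2 s]
      rw [sum_congr rfl h4, ← sum_image (f := fun b : Fin t → A =>
            ∏ s, (f (e (Sum.inl s)) (b s) * f (e (Sum.inr s)) (b s)))]
      · exact sum_le_sum_of_subset_of_nonneg (subset_univ _) fun b _ _ =>
          prod_nonneg fun s _ => mul_nonneg (hf _ _) (hf _ _)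
      · intro a ha a' ha' haa
        simp only [coe_filter, mem_univ, true_and, Set.mem_ofPred_eq] at ha ha'
        funext i
        obtain ⟨s, rfl⟩ := e.surjective i
        have h5 : ∀ s, a (e (Sum.inl s)) = a' (e (Sum.inl s)) := fun s => congrFun haa s
        rcases s with s | s
        · exact h5 s
        · rw [← ha, ← ha', h5]
    refine h3.trans ?_
    have h6 := prod_univ_sum (fun _ : Fin t => (univ : Finset A))
      (fun s y => f (e (Sum.inl s)) y * f (e (Sum.inr s)) y)
    rw [Fintype.piFinset_univ] at h6
    rw [← h6, hB, ← Equiv.prod_comp e, Fintype.prod_sum_type, ← prod_mul_distrib]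
    exact prod_le_prod (fun s _ => sum_nonneg fun y _ => mul_nonneg (hf _ _) (hf _ _))
      fun s _ => Real.sum_mul_le_sqrt_mul_sqrt _ _ _
  refine (sum_le_sum fun e _ => h2 e).trans ?_
  rw [sum_const, nsmul_eq_mul, card_univ]
  refine mul_le_mul_of_nonneg_right ?_ hB0
  have h7 : Fintype.card (Fin t ⊕ Fin t ≃ ι) ≤ Fintype.card ι ^ Fintype.card ι := by
    by_cases hn : Nonempty (Fin t ⊕ Fin t ≃ ι)
    · obtain ⟨e⟩ := hn
      rw [Fintype.card_equiv e, Fintype.card_congr e]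
      exact Nat.factorial_le_pow _
    · rw [not_nonempty_iff] at hn
      rw [Fintype.card_eq_zero]
      exact Nat.zero_le _
  exact_mod_cast h7

open scoped Classical in
/-- The weighted counting lemma for keys with `c` coordinates, by induction on `c`. -/
lemma sum_evenMult_le' (c : ℕ) (f : ι → (Fin c → A) → ℝ) (hf : ∀ i x, 0 ≤ f i x) :
    ∑ z : ι → Fin c → A, (if ∀ j, EvenMult (fun i => z i j) then ∏ i, f i (z i) else 0) ≤
      ((Fintype.card ι : ℝ) ^ Fintype.card ι) ^ c * ∏ i, √(∑ x, f i x ^ 2) := by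
  induction c with
  | zero =>
    have h1 : ∀ i x, √(f i x ^ 2) = f i x := fun i x => Real.sqrt_sq (hf _ _)
    rw [Fintype.sum_unique]
    simp [h1, Subsingleton.elim (fun _ => _ : Fin 0 → A) default]
  | succ c ih =>
    let e : (ι → A) × (ι → Fin c → A) ≃ (ι → Fin (c + 1) → A) :=
      (Equiv.arrowProdEquivProdArrow ι _ _).symm.trans
        (Equiv.piCongrRight fun _ => Fin.consEquiv fun _ => A)
    have he : ∀ p i, e p i = Fin.cons (p.1 i) (p.2 i) := fun p i => rfl
    rw [← Equiv.sum_comp e, Fintype.sum_prod_type]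
    simp only [he, Fin.forall_fin_succ, Fin.cons_zero, Fin.cons_succ]
    set K : ℝ := ((Fintype.card ι : ℝ) ^ Fintype.card ι) ^ c with hK
    have hK0 : 0 ≤ K := by positivity
    set g : ι → A → ℝ := fun i a => √(∑ x, f i (Fin.cons a x) ^ 2) with hg
    have h1 : ∀ a : ι → A, ∑ y : ι → Fin c → A, (if EvenMult (fun i => a i) ∧
        ∀ j, EvenMult (fun i => y i j) then ∏ i, f i (Fin.cons (a i) (y i)) else 0) ≤
        K * (if EvenMult a then ∏ i, g i (a i) else 0) := by
      intro a
      by_cases ha : EvenMult a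
      · have := ih (fun i x => f i (Fin.cons (a i) x)) (fun i x => hf _ _)
        simpa [ha] using this
      · simp [ha]
    refine (sum_le_sum fun a _ => h1 a).trans ?_
    rw [← mul_sum, pow_succ, mul_assoc]
    refine mul_le_mul_of_nonneg_left ?_ hK0
    refine (sum_evenMult_le g fun i a => Real.sqrt_nonneg _).trans ?_
    refine le_of_eq ?_
    congr 1
    refine prod_congr rfl fun i _ => ?_
    congr 1
    rw [← Equiv.sum_comp (Fin.consEquiv fun _ => A), Fintype.sum_prod_type]
    refine sum_congr rfl fun a _ => ?_
    rw [hg, Real.sq_sqrt (sum_nonneg fun x _ => sq_nonneg _)]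
    rfl

variable [DecidableEq A]

/-- The key `x`, as a vector over `F₂`: the indicator of its positions and characters. -/
def vec {c : ℕ} (x : Fin c → A) : Fin c → A → ZMod 2 := fun i a => if x i = a then 1 else 0

lemma vec_injective {c : ℕ} : Function.Injective (vec (A := A) (c := c)) := by
  intro x y h
  funext i
  have := congrFun (congrFun h i) (y i)
  by_contra hne
  simp [vec, hne] at this

lemma evenMult_of_sum {c : ℕ} {z : ι → Fin c → A} (h : ∑ i, vec (z i) = 0) (j : Fin c) :
    EvenMult fun i => z i j := by
  intro y
  have h1 := congrFun (congrFun h j) y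
  rw [Finset.sum_apply, Finset.sum_apply] at h1
  simp only [vec, Finset.sum_boole, Pi.zero_apply] at h1
  rw [Nat.card_eq_fintype_card, Fintype.card_subtype]
  exact (ZMod.natCast_eq_zero_iff_even).1 h1

/-- The constant in the counting lemma for at most `q` keys per tuple. -/
def kap (c q : ℕ) : ℝ := ((2 * q : ℝ) ^ (2 * q)) ^ c

lemma kap_nonneg (c q : ℕ) : 0 ≤ kap c q := by unfold kap; positivity

lemma kap_mono {c q r : ℕ} (h : q ≤ r) : kap c q ≤ kap c r := by
  rcases Nat.eq_zero_or_pos r with rfl | hr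
  · rw [Nat.le_zero.1 h]
  unfold kap
  have h1 : (q : ℝ) ≤ r := by exact_mod_cast h
  have h2 : (1 : ℝ) ≤ r := by exact_mod_cast hr
  refine pow_le_pow_left₀ (by positivity) ?_ _
  calc (2 * q : ℝ) ^ (2 * q) ≤ (2 * r : ℝ) ^ (2 * q) :=
        pow_le_pow_left₀ (by positivity) (by linarith) _
    _ ≤ _ := pow_le_pow_right₀ (by linarith) (by omega)

lemma one_le_kap {c q : ℕ} : 1 ≤ kap c q := by
  unfold kap
  rcases Nat.eq_zero_or_pos q with rfl | h
  · simp
  · have h2 : (1 : ℝ) ≤ q := by exact_mod_cast h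
    exact one_le_pow₀ (one_le_pow₀ (by linarith))

/-- The number of tuples of keys from prescribed sets with a prescribed sum. Fixing one such
tuple `z₀`, all the others correspond to zero-sum tuples of twice the length. -/
lemma card_sum_eq_le [DecidableEq ι] {c : ℕ} (B : ι → Finset (Fin c → A))
    (w : Fin c → A → ZMod 2) :
    (((Fintype.piFinset B).filter fun z => ∑ i, vec (z i) = w).card : ℝ) ≤
      kap c (Fintype.card ι) * ∏ i, √((B i).card : ℝ) := by
  classical
  have hR : 0 ≤ kap c (Fintype.card ι) * ∏ i, √((B i).card : ℝ) :=
    mul_nonneg (kap_nonneg _ _) (prod_nonneg fun i _ => Real.sqrt_nonneg _)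
  rcases Finset.eq_empty_or_nonempty
    ((Fintype.piFinset B).filter fun z => ∑ i, vec (z i) = w) with h | ⟨z₀, h₀⟩
  · rw [h]; simpa using hR
  have hz₀ := (mem_filter.1 h₀).2
  set f : ι ⊕ ι → (Fin c → A) → ℝ :=
    Sum.elim (fun i x => if x ∈ B i then 1 else 0) (fun i x => if x = z₀ i then 1 else 0) with hf
  have hf0 : ∀ i x, 0 ≤ f i x := by
    rintro (i | i) x <;> simp only [hf, Sum.elim_inl, Sum.elim_inr] <;> split_ifs <;> norm_num
  have key := sum_evenMult_le' c f hf0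
  have h1 : (((Fintype.piFinset B).filter fun z => ∑ i, vec (z i) = w).card : ℝ) ≤
      ∑ z : ι ⊕ ι → Fin c → A,
        (if ∀ j, EvenMult (fun i => z i j) then ∏ i, f i (z i) else 0) := by
    have h2 : ∀ z : ι ⊕ ι → Fin c → A,
        0 ≤ (if ∀ j, EvenMult (fun i => z i j) then ∏ i, f i (z i) else 0) := by
      intro z; split_ifs
      · exact prod_nonneg fun i _ => hf0 _ _
      · exact le_rfl
    have hinj : Function.Injective
        (fun z : ι → Fin c → A => (Sum.elim z z₀ : ι ⊕ ι → Fin c → A)) := by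
      intro z z' h
      funext i
      exact congrFun h (Sum.inl i)
    rw [← card_image_of_injective _ hinj, card_eq_sum_ones, Nat.cast_sum]
    refine (sum_le_sum fun z hz => ?_).trans
      (sum_le_sum_of_subset_of_nonneg (subset_univ _) fun z _ _ => h2 z)
    obtain ⟨y, hy, rfl⟩ := mem_image.1 hz
    obtain ⟨hy1, hy2⟩ := mem_filter.1 hy
    rw [if_pos]
    · rw [Fintype.prod_sum_type]
      simp [hf, Fintype.mem_piFinset.1 hy1]
    · refine evenMult_of_sum ?_
      rw [Fintype.sum_sum_type]
      simp only [Sum.elim_inl, Sum.elim_inr, hy2, hz₀]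
      exact ZModModule.add_self _
  refine h1.trans ((le_of_eq (by congr!)).trans (key.trans (le_of_eq ?_)))
  rw [Fintype.card_sum, Fintype.prod_sum_type]
  unfold kap
  have h3 : ((Fintype.card ι + Fintype.card ι : ℕ) : ℝ) = 2 * Fintype.card ι := by
    push_cast; ring
  rw [h3, ← two_mul]
  congr 1
  simp [hf]

end Counting

/-! ### Counting sets of keys with relations -/

section Classes

set_option linter.unusedSectionVars false

open Finset

variable {V : Type*} [AddCommGroup V] [Module (ZMod 2) V] [DecidableEq V]

/-- The number of `k`-tuples with prescribed sum over the positions in `Q`, the entry at position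
`i` coming from a set `B i`, gains a factor `√|B i|` at every position of `Q` over the trivial
bound, up to the constant `K`. -/
def SumBound (X : Finset V) (K : ℝ) (k : ℕ) : Prop :=
  ∀ (Q : Finset (Fin k)) (B : Fin k → Finset V) (w : V), (∀ i ∈ Q, B i ⊆ X) →
    (((Fintype.piFinset B).filter fun z => ∑ i ∈ Q, z i = w).card : ℝ) ≤
      K * ∏ i, if i ∈ Q then √((B i).card : ℝ) else (B i).card

lemma sumBound_keys {A : Type*} [Fintype A] [DecidableEq A] {c : ℕ} (X : Finset (Fin c → A))
    (k : ℕ) : SumBound (X.image vec) (kap c k) k := by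
  classical
  intro Q B w hB
  set B' : {i // i ∈ Q} → Finset (Fin c → A) := fun i => univ.filter fun x => vec x ∈ B i with hB'
  set Y := ((Fintype.piFinset B').filter fun z => ∑ i, vec (z i) = w) with hY
  set U := Fintype.piFinset fun i : {i // i ∉ Q} => B i with hU
  have h1 : ((Fintype.piFinset B).filter fun z => ∑ i ∈ Q, z i = w) ⊆
      (Y ×ˢ U).image fun p => fun i => if h : i ∈ Q then vec (p.1 ⟨i, h⟩) else p.2 ⟨i, h⟩ := by
    intro z hz
    obtain ⟨hz1, hz2⟩ := mem_filter.1 hz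
    rw [Fintype.mem_piFinset] at hz1
    have h2 : ∀ i : {i // i ∈ Q}, ∃ x, vec x = z i := fun i => by
      obtain ⟨x, -, hx⟩ := mem_image.1 (hB i i.2 (hz1 i))
      exact ⟨x, hx⟩
    choose y hy using h2
    refine mem_image.2 ⟨(y, fun i => z i), mem_product.2 ⟨mem_filter.2 ⟨?_, ?_⟩, ?_⟩, ?_⟩
    · rw [Fintype.mem_piFinset]
      intro i
      simp [hB', hy, hz1]
    · simp only [hy]
      rw [← hz2]
      exact sum_coe_sort Q z
    · rw [hU, Fintype.mem_piFinset]
      exact fun i => hz1 i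
    · funext i
      by_cases hi : i ∈ Q <;> simp [hi, hy]
  have h3 := (card_le_card h1).trans card_image_le
  rw [card_product] at h3
  have h4 : (Y.card : ℝ) ≤ kap c k * ∏ i : {i // i ∈ Q}, √((B i).card : ℝ) := by
    refine (card_sum_eq_le B' w).trans (mul_le_mul ?_ ?_ ?_ (kap_nonneg _ _))
    · apply kap_mono
      rw [Fintype.card_coe]
      exact (card_le_univ Q).trans (by simp)
    · refine prod_le_prod (fun i _ => Real.sqrt_nonneg _) fun i _ => Real.sqrt_le_sqrt ?_
      have : (B' i).card ≤ (B i).card :=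
        card_le_card_of_injOn vec (fun x hx => by simpa [hB'] using hx)
          (vec_injective.injOn)
      exact_mod_cast this
    · exact prod_nonneg fun i _ => Real.sqrt_nonneg _
  have h5 : (U.card : ℝ) = ∏ i : {i // i ∉ Q}, ((B i).card : ℝ) := by
    rw [hU, Fintype.card_piFinset]; push_cast; rfl
  have h6 : (∏ i, if i ∈ Q then √((B i).card : ℝ) else (B i).card) =
      (∏ i : {i // i ∈ Q}, √((B i).card : ℝ)) * ∏ i : {i // i ∉ Q}, ((B i).card : ℝ) := by
    rw [← Fintype.prod_subtype_mul_prod_subtype (fun i => i ∈ Q)]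
    congr 1
    · exact prod_congr (by ext; simp) fun i _ => by simp [i.2]
    · exact prod_congr rfl fun i _ => by simp [i.2]
  rw [h6, ← mul_assoc, ← h5]
  calc _ ≤ ((Y.card * U.card : ℕ) : ℝ) := by exact_mod_cast h3
    _ = (Y.card : ℝ) * U.card := by push_cast; rfl
    _ ≤ _ := mul_le_mul_of_nonneg_right h4 (Nat.cast_nonneg _)

/-- The keys paired with another key by translation by `v`. -/
def paired (X : Finset V) (v : V) : Finset V := X.filter fun x => x + v ∈ X

lemma exists_enum {Z : Finset V} {k : ℕ} (hk : Z.card = k) :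
    ∃ z : Fin k → V, Function.Injective z ∧ univ.image z = Z := by
  let e := Z.equivFinOfCardEq hk
  refine ⟨fun i => (e.symm i : V), fun i j hij => e.symm.injective (Subtype.ext hij), ?_⟩
  ext x
  simp only [mem_image, mem_univ, true_and]
  exact ⟨fun ⟨i, hi⟩ => hi ▸ (e.symm i).2, fun hx => ⟨e ⟨x, hx⟩, by simp⟩⟩

lemma enum_subset {Z : Finset V} {k : ℕ} {z : Fin k → V} (hz : Function.Injective z)
    (hZ : univ.image z = Z) {Q : Finset V} (hQ : Q ⊆ Z) :
    (univ.filter fun i => z i ∈ Q).image z = Q ∧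
    ∑ i ∈ univ.filter (fun i => z i ∈ Q), z i = ∑ x ∈ Q, x ∧
    (univ.filter fun i => z i ∈ Q).card = Q.card := by
  have h1 : (univ.filter fun i => z i ∈ Q).image z = Q := by
    ext x
    simp only [mem_image, mem_filter, mem_univ, true_and]
    constructor
    · rintro ⟨i, hi, rfl⟩; exact hi
    · intro hx
      obtain ⟨i, -, rfl⟩ := mem_image.1 (hZ.symm ▸ hQ hx)
      exact ⟨i, hx, rfl⟩
  refine ⟨h1, ?_, ?_⟩
  · conv_rhs => rw [← h1]
    rw [sum_image hz.injOn]
  · rw [← card_image_of_injective _ hz, h1]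

variable {X : Finset V} {q K : ℝ} {k : ℕ}

/-- Bound for the tuples satisfying two relations: the second one is used on the positions it does
not share with the first, where it prescribes the sum. -/
lemma card_tupA_le (hq : 1 ≤ q) (hX : (X.card : ℝ) ≤ q ^ 2) (hK : 0 ≤ K) (hB : SumBound X K k)
    (I₁ I₂ : Finset (Fin k)) :
    (((Fintype.piFinset fun _ : Fin k => X).filter fun z => ∑ i ∈ I₁, z i = 0 ∧
      ∑ i ∈ I₂, z i = 0).card : ℝ) ≤ K ^ 2 * q ^ (2 * k - (I₁ ∪ I₂).card) := by
  have hq0 : (0 : ℝ) ≤ q := by linarith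
  have hX1 : √(X.card : ℝ) ≤ q := by
    rw [← Real.sqrt_sq hq0]; exact Real.sqrt_le_sqrt hX
  set T := ((Fintype.piFinset fun _ : Fin k => X).filter fun z => ∑ i ∈ I₁, z i = 0 ∧
      ∑ i ∈ I₂, z i = 0) with hT
  set Y := (Fintype.piFinset fun i : Fin k => if i ∈ I₁ then X else {0}).filter
    fun z => ∑ i ∈ I₁, z i = 0 with hY
  set e₁ : Fin k → ℕ := fun i => if i ∈ I₁ then 1 else 0 with he₁
  set e₂ : Fin k → ℕ := fun i => if i ∈ I₁ then 0 else if i ∈ I₂ then 1 else 2 with he₂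
  have hmap : ∀ z ∈ T, (fun i => if i ∈ I₁ then z i else 0) ∈ Y := by
    intro z hz
    obtain ⟨h1, h2, h3⟩ := mem_filter.1 hz
    rw [Fintype.mem_piFinset] at h1
    refine mem_filter.2 ⟨?_, ?_⟩
    · rw [Fintype.mem_piFinset]
      intro i
      by_cases hi : i ∈ I₁ <;> simp [hi, h1]
    · rw [← h2]
      exact sum_congr rfl fun i hi => by simp [hi]
  have hYc : (Y.card : ℝ) ≤ K * q ^ ∑ i, e₁ i := by
    refine (hB I₁ _ 0 fun i hi => by simp [hi]).trans (mul_le_mul_of_nonneg_left ?_ hK)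
    rw [← prod_pow_eq_pow_sum]
    refine prod_le_prod (fun i _ => by positivity) fun i _ => ?_
    by_cases hi : i ∈ I₁ <;> simp [he₁, hi, hX1]
  have hfib : ∀ y ∈ Y, ((T.filter fun z => (fun i => if i ∈ I₁ then z i else 0) = y).card : ℝ) ≤
      K * q ^ ∑ i, e₂ i := by
    intro y hy
    obtain ⟨hy1, -⟩ := mem_filter.1 hy
    rw [Fintype.mem_piFinset] at hy1
    have hsub : (T.filter fun z => (fun i => if i ∈ I₁ then z i else 0) = y) ⊆
        (Fintype.piFinset fun i : Fin k => if i ∈ I₁ then {y i} else X).filter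
          fun z => ∑ i ∈ I₂, z i = 0 := by
      intro z hz
      obtain ⟨hz1, hz2⟩ := mem_filter.1 hz
      obtain ⟨h1, h2, h3⟩ := mem_filter.1 hz1
      rw [Fintype.mem_piFinset] at h1
      refine mem_filter.2 ⟨?_, h3⟩
      rw [Fintype.mem_piFinset]
      intro i
      by_cases hi : i ∈ I₁
      · have := congrFun hz2 i
        simp only [hi, if_true] at this
        simp [hi, this]
      · simp [hi, h1]
    have h0 : ((T.filter fun z => (fun i => if i ∈ I₁ then z i else 0) = y).card : ℝ) ≤ _ :=
      Nat.cast_le.2 (card_le_card hsub)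
    refine h0.trans ((hB I₂ _ 0 fun i _ => ?_).trans (mul_le_mul_of_nonneg_left ?_ hK))
    · by_cases hi : i ∈ I₁
      · have := hy1 i
        simp only [hi, if_true] at this
        simpa [hi] using this
      · simp [hi]
    · rw [← prod_pow_eq_pow_sum]
      refine prod_le_prod (fun i _ => by positivity) fun i _ => ?_
      by_cases hi : i ∈ I₁ <;> by_cases hi' : i ∈ I₂ <;> simp [he₂, hi, hi', hX1, hX]
  have hsum : ∑ i, e₁ i + ∑ i, e₂ i = 2 * k - (I₁ ∪ I₂).card := by
    have h1 : ∑ i, e₁ i + ∑ i, e₂ i + (I₁ ∪ I₂).card = 2 * k := by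
      have h2 : (I₁ ∪ I₂).card = ∑ i, if i ∈ I₁ ∪ I₂ then 1 else 0 := by
        rw [sum_ite_mem, univ_inter, card_eq_sum_ones]
      have h3 : 2 * k = ∑ _i : Fin k, 2 := by simp [mul_comm]
      rw [h2, h3, ← sum_add_distrib, ← sum_add_distrib]
      refine sum_congr rfl fun i _ => ?_
      by_cases hi : i ∈ I₁ <;> by_cases hi' : i ∈ I₂ <;> simp [he₁, he₂, hi, hi']
    omega
  rw [card_eq_sum_card_fiberwise hmap, Nat.cast_sum]
  refine (sum_le_sum hfib).trans ?_
  rw [sum_const, nsmul_eq_mul, ← hsum, pow_add]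
  calc _ ≤ (K * q ^ ∑ i, e₁ i) * (K * q ^ ∑ i, e₂ i) :=
        mul_le_mul_of_nonneg_right hYc (by positivity)
    _ = _ := by ring

open scoped Classical in
lemma card_classA_le (hq : 1 ≤ q) (hX : (X.card : ℝ) ≤ q ^ 2) (hK : 0 ≤ K) (hB : SumBound X K k)
    (s : ℕ) : (((X.powersetCard k).filter (TypeA s)).card : ℝ) ≤
      4 ^ k * (K ^ 2 * q ^ (2 * k - s)) := by
  set J := (univ : Finset (Finset (Fin k) × Finset (Fin k))).filter
    fun I => (I.1 ∪ I.2).card = s with hJ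
  set T : Finset (Fin k) × Finset (Fin k) → Finset (Fin k → V) := fun I =>
    ((Fintype.piFinset fun _ : Fin k => X).filter fun z => ∑ i ∈ I.1, z i = 0 ∧
      ∑ i ∈ I.2, z i = 0) with hT
  have hsub : (X.powersetCard k).filter (TypeA s) ⊆
      J.biUnion fun I => (T I).image fun z => univ.image z := by
    intro Z hZ
    obtain ⟨hZ1, Q₁, hQ₁, Q₂, hQ₂, s₁, s₂, hs⟩ := mem_filter.1 hZ
    obtain ⟨hZX, hZk⟩ := mem_powersetCard.1 hZ1
    obtain ⟨z, hz, hzZ⟩ := exists_enum hZk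
    have e1 := enum_subset hz hzZ hQ₁
    have e2 := enum_subset hz hzZ hQ₂
    refine mem_biUnion.2 ⟨(univ.filter fun i => z i ∈ Q₁, univ.filter fun i => z i ∈ Q₂),
      mem_filter.2 ⟨mem_univ _, ?_⟩, mem_image.2 ⟨z, mem_filter.2 ⟨?_, ?_, ?_⟩, hzZ⟩⟩
    · rw [← hs, ← card_image_of_injective _ hz, image_union, e1.1, e2.1]
    · rw [Fintype.mem_piFinset]
      exact fun i => hZX (hzZ ▸ mem_image_of_mem _ (mem_univ i))
    · rw [← s₁]; exact e1.2.1
    · rw [← s₂]; exact e2.2.1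
  have h1 : (((X.powersetCard k).filter (TypeA s)).card : ℝ) ≤ ∑ I ∈ J, ((T I).card : ℝ) := by
    have := (card_le_card hsub).trans (card_biUnion_le.trans (sum_le_sum fun I _ => card_image_le))
    exact_mod_cast this
  refine h1.trans ?_
  have h2 : ∀ I ∈ J, ((T I).card : ℝ) ≤ K ^ 2 * q ^ (2 * k - s) := fun I hI => by
    rw [← (mem_filter.1 hI).2]
    exact card_tupA_le hq hX hK hB I.1 I.2
  refine (sum_le_sum h2).trans ?_
  rw [sum_const, nsmul_eq_mul]
  refine mul_le_mul_of_nonneg_right ?_ (by positivity)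
  have h3 : J.card ≤ 4 ^ k := by
    refine (card_le_univ J).trans ?_
    simp [← mul_pow]
  exact_mod_cast h3

end Classes

section Classes

set_option linter.unusedSectionVars false

open Finset

variable {V : Type*} [AddCommGroup V] [Module (ZMod 2) V] [DecidableEq V]
  {X : Finset V} {q K L : ℝ} {k : ℕ}

/-- A bound for the additive energy of a set of keys. -/
lemma energy_le (hq : 1 ≤ q) (hX : (X.card : ℝ) ≤ q ^ 2) (hL : 0 ≤ L) (hB : SumBound X L 4) :
    ∑ p ∈ X ×ˢ X, ((paired X (p.1 + p.2)).card : ℝ) ≤ L * q ^ 4 := by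
  have hq0 : (0 : ℝ) ≤ q := by linarith
  have hX1 : √(X.card : ℝ) ≤ q := by
    rw [← Real.sqrt_sq hq0]; exact Real.sqrt_le_sqrt hX
  rw [← Nat.cast_sum, ← card_sigma]
  have h1 := hB univ (fun _ => X) 0 (fun _ _ => subset_rfl)
  simp only [mem_univ, if_true] at h1
  rw [prod_const, card_univ, Fintype.card_fin] at h1
  refine le_trans (Nat.cast_le.2 ?_) (h1.trans (mul_le_mul_of_nonneg_left
    (pow_le_pow_left₀ (Real.sqrt_nonneg _) hX1 4) hL))
  refine card_le_card_of_injOn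
    (fun s => ![s.1.1, s.1.2, s.2, s.2 + (s.1.1 + s.1.2)]) ?_ ?_
  · rintro ⟨⟨x, x'⟩, y⟩ hs
    simp only [paired, coe_sigma, Set.mem_sigma_iff, mem_coe, mem_product, mem_filter] at hs
    obtain ⟨⟨h1, h2⟩, h3, h4⟩ := hs
    simp only [coe_filter, Set.mem_ofPred_eq, Fintype.mem_piFinset, Fin.forall_fin_succ,
      Fin.sum_univ_four]
    refine ⟨⟨h1, h2, h3, h4, fun i => i.elim0⟩, ?_⟩
    change x + x' + y + (y + (x + x')) = 0
    have : x + x' + y + (y + (x + x')) = (x + x) + (x' + x') + (y + y) := by abel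
    simp [this, ZModModule.add_self]
  · rintro ⟨⟨x, x'⟩, y⟩ - ⟨⟨w, w'⟩, t⟩ - h
    have e0 : x = w := congrFun h 0
    have e1 : x' = w' := congrFun h 1
    have e2 : y = t := congrFun h 2
    rw [e0, e1, e2]

/-- The differences attained by more than `R₀` keys. -/
noncomputable def popular (X : Finset V) (R₀ : ℝ) : Finset V := by
  classical exact ((X ×ˢ X).image fun p => p.1 + p.2).filter fun v => R₀ < (paired X v).card

lemma card_paired (v : V) :
    ((X ×ˢ X).filter fun p => p.1 + p.2 = v).card = (paired X v).card := by
  refine card_bij' (fun p _ => p.1) (fun x _ => (x, x + v)) ?_ ?_ ?_ ?_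
  · rintro ⟨x, y⟩ h
    simp only [mem_filter, mem_product] at h
    obtain ⟨⟨h1, h2⟩, rfl⟩ := h
    simp only [paired, mem_filter]
    refine ⟨h1, ?_⟩
    rwa [← add_assoc, ZModModule.add_self, zero_add]
  · intro x h
    simp only [paired, mem_filter] at h
    simp only [mem_filter, mem_product]
    refine ⟨h, ?_⟩
    rw [← add_assoc, ZModModule.add_self, zero_add]
  · rintro ⟨x, y⟩ h
    simp only [mem_filter, mem_product] at h
    obtain ⟨-, rfl⟩ := h
    simp only [Prod.mk.injEq, true_and]
    rw [← add_assoc, ZModModule.add_self, zero_add]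
  · intro x h
    rfl

lemma card_popular_le (hq : 1 ≤ q) (hX : (X.card : ℝ) ≤ q ^ 2) (hL : 0 ≤ L) (hB : SumBound X L 4)
    {R₀ : ℝ} (hR₀ : 0 ≤ R₀) : ((popular X R₀).card : ℝ) * R₀ ^ 2 ≤ L * q ^ 4 := by
  refine le_trans ?_ (energy_le hq hX hL hB)
  have h1 : ∑ v ∈ popular X R₀, ∑ p ∈ (X ×ˢ X).filter (fun p => p.1 + p.2 = v),
      ((paired X (p.1 + p.2)).card : ℝ) ≤ ∑ p ∈ X ×ˢ X, ((paired X (p.1 + p.2)).card : ℝ) :=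
    sum_fiberwise_le_sum_of_sum_fiber_nonneg fun v _ => sum_nonneg fun p _ => Nat.cast_nonneg _
  refine le_trans ?_ h1
  rw [← nsmul_eq_mul, ← sum_const]
  refine sum_le_sum fun v hv => ?_
  have h2 : ∑ p ∈ (X ×ˢ X).filter (fun p => p.1 + p.2 = v),
      ((paired X (p.1 + p.2)).card : ℝ) = ((paired X v).card : ℝ) ^ 2 := by
    rw [sum_congr rfl (g := fun _ => ((paired X v).card : ℝ)) fun p hp => by
      rw [(mem_filter.1 hp).2], sum_const, card_paired, nsmul_eq_mul, sq]
  rw [h2]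
  unfold popular at hv
  exact pow_le_pow_left₀ hR₀ (mem_filter.1 hv).2.le 2

/-- The six positions of three pairs are distinct. -/
def Pos (P P' : Fin 3 → Fin k) : Prop :=
  Function.Injective P ∧ Function.Injective P' ∧ ∀ i j, P i ≠ P' j

/-- The tuples of keys in which the three pairs of positions have the difference `x + x'`, the
first of them being `(x, x')`. -/
def tupP (X : Finset V) (P P' : Fin 3 → Fin k) (x x' : V) : Finset (Fin k → V) :=
  (Fintype.piFinset fun _ => X).filter fun z => z (P 0) = x ∧ z (P' 0) = x' ∧
    ∀ i, z (P i) + (x + x') = z (P' i)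

/-- The set from which the entry at position `i` of such a tuple is chosen, once the second
elements of the pairs are recognised to be determined by the rest. -/
def slotSet (X : Finset V) (P P' : Fin 3 → Fin k) (x x' : V) (i : Fin k) : Finset V :=
  if i ∈ univ.image P' then {0} else if i = P 0 then {x} else
    if i ∈ univ.image P then paired X (x + x') else X

lemma card_tupP_le (hB : SumBound X K k) {P P' : Fin 3 → Fin k} (hP : Pos P P')
    {Q : Finset (Fin k)} (hQ : ∀ i, P' i ∉ Q) {x x' : V} (hx : x ∈ X) (w : V) :
    (((tupP X P P' x x').filter fun z => ∑ i ∈ Q, z i = w).card : ℝ) ≤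
      K * ∏ i, if i ∈ Q then √((slotSet X P P' x x' i).card : ℝ) else (slotSet X P P' x x' i).card := by
  refine le_trans (Nat.cast_le.2 ?_) (hB Q (slotSet X P P' x x') w ?_)
  · refine card_le_card_of_injOn (fun z i => if i ∈ univ.image P' then 0 else z i) ?_ ?_
    · intro z hz
      simp only [tupP, coe_filter, mem_filter, Set.mem_ofPred_eq, Fintype.mem_piFinset] at hz ⊢
      obtain ⟨⟨h1, h2, h3, h4⟩, h5⟩ := hz
      refine ⟨fun i => ?_, ?_⟩
      · unfold slotSet
        split_ifs with h6 h7 h8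
        · simp
        · simp [h7, h2]
        · obtain ⟨j, -, rfl⟩ := mem_image.1 h8
          exact mem_filter.2 ⟨h1 _, by rw [h4]; exact h1 _⟩
        · exact h1 i
      · rw [← h5]
        refine sum_congr rfl fun i hi => if_neg fun h6 => ?_
        obtain ⟨j, -, rfl⟩ := mem_image.1 h6
        exact hQ j hi
    · intro z hz y hy hzy
      simp only [tupP, coe_filter, mem_filter, Set.mem_ofPred_eq] at hz hy
      have h1 : ∀ i, i ∉ univ.image P' → z i = y i := fun i hi => by
        have := congrFun hzy i
        simpa only [hi, if_false] using this
      funext i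
      by_cases hi : i ∈ univ.image P'
      · obtain ⟨j, -, rfl⟩ := mem_image.1 hi
        rw [← hz.1.2.2.2, ← hy.1.2.2.2, h1]
        intro h2
        obtain ⟨l, -, hl⟩ := mem_image.1 h2
        exact hP.2.2 j l hl.symm
      · exact h1 i hi
  · intro i hi
    unfold slotSet
    split_ifs with h6 h7 h8
    · obtain ⟨j, -, rfl⟩ := mem_image.1 h6
      exact absurd hi (hQ j)
    · simpa using hx
    · exact filter_subset _ _
    · exact subset_rfl

lemma prod_pair_pow {P P' : Fin 3 → Fin k} (hP : Pos P P') (r : ℝ) :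
    ∏ i, (if i ≠ P 0 ∧ i ∈ univ.image P then r else 1) = r ^ 2 := by
  rw [prod_ite, prod_const_one, mul_one, prod_const]
  congr 1
  have : (univ.filter fun i => i ≠ P 0 ∧ i ∈ univ.image P) = {P 1, P 2} := by
    have h1 : P 1 ≠ P 0 := fun h => by simpa using hP.1 h
    have h2 : P 2 ≠ P 0 := fun h => by simpa using hP.1 h
    ext i
    simp only [mem_filter, mem_univ, true_and, mem_image, Fin.exists_fin_succ, mem_insert,
      mem_singleton]
    constructor
    · rintro ⟨h, h3 | h3 | h3 | ⟨j, -⟩⟩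
      · exact absurd h3.symm h
      · exact Or.inl h3.symm
      · exact Or.inr h3.symm
      · exact j.elim0
    · rintro (rfl | rfl)
      · exact ⟨h1, by simp⟩
      · exact ⟨h2, by simp⟩
  rw [this, card_pair]
  intro h
  simpa using hP.1 h

lemma sum_pos {P P' : Fin 3 → Fin k} (hP : Pos P P') (a b : ℕ) :
    ∑ i, ((if i ∈ univ.image P then a else 0) + if i ∈ univ.image P' then b else 0) =
      3 * a + 3 * b := by
  rw [sum_add_distrib, sum_ite_mem, sum_ite_mem, univ_inter, univ_inter, sum_const, sum_const,
    card_image_of_injective _ hP.1, card_image_of_injective _ hP.2.1]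
  simp

lemma prod_slotSet_le (hX : (X.card : ℝ) ≤ q ^ 2) {P P' : Fin 3 → Fin k} (hP : Pos P P')
    {x x' : V} :
    ∏ i, ((slotSet X P P' x x' i).card : ℝ) ≤
      ((paired X (x + x')).card : ℝ) ^ 2 * q ^ (2 * k - 12) := by
  set e : Fin k → ℕ := fun i => if i ∈ univ.image P ∪ univ.image P' then 0 else 2 with he
  have hsum : ∑ i, e i = 2 * k - 12 := by
    have h1 : ∑ i, e i + 12 = 2 * k := by
      have h3 : 2 * k = ∑ _i : Fin k, 2 := by simp [mul_comm]
      rw [h3]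
      have h4 := sum_pos hP 2 2
      norm_num at h4
      rw [← h4, ← sum_add_distrib]
      refine sum_congr rfl fun i _ => ?_
      by_cases h5 : ∃ j, P j = i <;> by_cases h6 : ∃ j, P' j = i <;> simp [he, h5, h6]
      obtain ⟨j, rfl⟩ := h5
      obtain ⟨l, hl⟩ := h6
      exact hP.2.2 _ _ hl.symm
    omega
  rw [← prod_pair_pow hP, ← hsum, ← prod_pow_eq_pow_sum, ← prod_mul_distrib]
  refine prod_le_prod (fun i _ => by positivity) fun i _ => ?_
  by_cases h6 : i ∈ univ.image P'
  · have h7 : i ∉ univ.image P := by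
      obtain ⟨l, -, rfl⟩ := mem_image.1 h6
      intro h
      obtain ⟨j, -, hj⟩ := mem_image.1 h
      exact hP.2.2 _ _ hj
    simp only [slotSet, h6, h7, he, if_true, if_false, mem_union, or_true, and_false]
    simp
  · by_cases h8 : i = P 0
    · subst h8
      have h9 : P 0 ∈ univ.image P := mem_image_of_mem _ (mem_univ _)
      simp only [slotSet, h6, h9, he, if_true, if_false, mem_union, true_or, ne_eq, not_true, false_and]
      simp
    · by_cases h7 : i ∈ univ.image P
      · simp only [slotSet, h6, h7, h8, he, if_true, if_false, mem_union, true_or, ne_eq,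
          not_false_eq_true, true_and]
        simp
      · simp only [slotSet, h6, h7, h8, he, if_false, mem_union, or_false, and_false]
        simpa using hX

lemma prod_slotSet_le' (hq : 1 ≤ q) (hX : (X.card : ℝ) ≤ q ^ 2) {P P' : Fin 3 → Fin k}
    (hP : Pos P P') {Q : Finset (Fin k)} (hQ : ∀ i, P' i ∉ Q) (hQ4 : 4 ≤ Q.card) {x x' : V} :
    ∏ i, (if i ∈ Q then √((slotSet X P P' x x' i).card : ℝ) else (slotSet X P P' x x' i).card) ≤
      ((paired X (x + x')).card : ℝ) * q ^ (2 * k - 13) := by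
  have hq0 : (0 : ℝ) ≤ q := by linarith
  have hX1 : √(X.card : ℝ) ≤ q := by
    rw [← Real.sqrt_sq hq0]; exact Real.sqrt_le_sqrt hX
  set r : ℝ := √((paired X (x + x')).card : ℝ) with hr
  have hr0 : 0 ≤ r := Real.sqrt_nonneg _
  have hr2 : ((paired X (x + x')).card : ℝ) = r * r := (Real.mul_self_sqrt (Nat.cast_nonneg _)).symm
  have hrq : r ≤ q := le_trans (Real.sqrt_le_sqrt (Nat.cast_le.2
    (card_le_card (filter_subset _ _)))) hX1
  set e : Fin k → ℕ := fun i => (if i ∈ Q then 1 else 2) -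
    ((if i ∈ univ.image P then 1 else 0) + if i ∈ univ.image P' then 2 else 0) with he
  have hsum : ∑ i, e i ≤ 2 * k - 13 := by
    have h1 : ∑ i, e i + 9 + Q.card = 2 * k := by
      have h3 : 2 * k = ∑ _i : Fin k, 2 := by simp [mul_comm]
      rw [h3]
      have h4 := sum_pos hP 1 2
      norm_num at h4
      have h5 : Q.card = ∑ i, if i ∈ Q then 1 else 0 := by
        rw [sum_ite_mem, univ_inter, card_eq_sum_ones]
      rw [← h4, h5, ← sum_add_distrib, ← sum_add_distrib]
      refine sum_congr rfl fun i _ => ?_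
      by_cases h5 : ∃ j, P j = i <;> by_cases h6 : ∃ j, P' j = i
      · obtain ⟨j, rfl⟩ := h5
        obtain ⟨l, hl⟩ := h6
        exact absurd hl.symm (hP.2.2 _ _)
      · by_cases h7 : i ∈ Q <;> simp [he, h5, h6, h7]
      · have h7 : i ∉ Q := by obtain ⟨j, rfl⟩ := h6; exact hQ j
        simp [he, h5, h6, h7]
      · by_cases h7 : i ∈ Q <;> simp [he, h5, h6, h7]
    omega
  refine le_trans ?_ (mul_le_mul_of_nonneg_left (pow_le_pow_right₀ hq hsum) (Nat.cast_nonneg _))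
  rw [hr2, ← sq, ← prod_pair_pow hP, ← prod_pow_eq_pow_sum, ← prod_mul_distrib]
  refine prod_le_prod (fun i _ => ?_) fun i _ => ?_
  · split_ifs
    · exact Real.sqrt_nonneg _
    · exact Nat.cast_nonneg _
  by_cases h6 : i ∈ univ.image P'
  · have h7 : i ∉ univ.image P := by
      obtain ⟨l, -, rfl⟩ := mem_image.1 h6
      intro h
      obtain ⟨j, -, hj⟩ := mem_image.1 h
      exact hP.2.2 _ _ hj
    have h8 : i ∉ Q := by
      obtain ⟨l, -, rfl⟩ := mem_image.1 h6
      exact hQ l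
    simp only [slotSet, h6, h7, h8, he, if_true, if_false, and_false]
    simp
  · by_cases h8 : i = P 0
    · subst h8
      simp only [slotSet, h6, if_true, if_false, ne_eq, not_true, false_and, card_singleton]
      simp only [Nat.cast_one, Real.sqrt_one, ite_self, one_mul]
      exact one_le_pow₀ hq
    · by_cases h7 : i ∈ univ.image P
      · simp only [slotSet, h6, h7, h8, he, if_true, if_false, ne_eq, not_false_eq_true, true_and]
        by_cases h9 : i ∈ Q
        · simp [h9, hr]
        · simp only [h9, if_false, hr2]
          simpa using mul_le_mul_of_nonneg_left hrq hr0
      · simp only [slotSet, h6, h7, h8, he, if_false, and_false]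
        by_cases h9 : i ∈ Q
        · simpa [h9] using hX1
        · simpa [h9] using hX

end Classes

section Classes

set_option linter.unusedSectionVars false

open Finset

variable {V : Type*} [AddCommGroup V] [Module (ZMod 2) V] [DecidableEq V]
  {X : Finset V} {q K L : ℝ} {k : ℕ}

lemma Pos.six_le {P P' : Fin 3 → Fin k} (hP : Pos P P') : 6 ≤ k := by
  have h := Fintype.card_le_of_injective (Sum.elim P P')
    (hP.1.sumElim hP.2.1 hP.2.2)
  simpa using h

lemma Pos.seven_le {P P' : Fin 3 → Fin k} (hP : Pos P P') {Q : Finset (Fin k)}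
    (hQ : ∀ i, P' i ∉ Q) (hQ4 : 4 ≤ Q.card) : 7 ≤ k := by
  have h : Disjoint Q (univ.image P') := by
    rw [disjoint_left]
    intro i hi hi'
    obtain ⟨j, -, rfl⟩ := mem_image.1 hi'
    exact hQ j hi
  have h1 := card_le_univ (Q ∪ univ.image P')
  rw [card_union_of_disjoint h, card_image_of_injective _ hP.2.1] at h1
  simp at h1
  omega

lemma exists_pos {Z : Finset V} (hZX : Z ⊆ X) {z : Fin k → V}
    (hZ : univ.image z = Z) {v : V} {x : Fin 3 → V} (hx : Trip v x)
    (hm : ∀ i, x i ∈ Z ∧ x i + v ∈ Z) :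
    ∃ P P' : Fin 3 → Fin k, Pos P P' ∧ z ∈ tupP X P P' (x 0) (x 0 + v) ∧
      ∀ i, z (P' i) = x i + v := by
  have h1 : ∀ i, ∃ l, z l = x i := fun i => by
    obtain ⟨l, -, hl⟩ := mem_image.1 (hZ.symm ▸ (hm i).1)
    exact ⟨l, hl⟩
  have h2 : ∀ i, ∃ l, z l = x i + v := fun i => by
    obtain ⟨l, -, hl⟩ := mem_image.1 (hZ.symm ▸ (hm i).2)
    exact ⟨l, hl⟩
  choose P hP using h1
  choose P' hP' using h2
  have hv : x 0 + (x 0 + v) = v := by rw [← add_assoc, ZModModule.add_self, zero_add]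
  refine ⟨P, P', ⟨fun i j h => hx.1 ?_, fun i j h => hx.1 ?_, fun i j h => ?_⟩, ?_, hP'⟩
  · rw [← hP, ← hP, h]
  · have : x i + v = x j + v := by rw [← hP', ← hP', h]
    exact add_right_cancel this
  · exact hx.2 j i (by rw [← hP' j, ← hP i, h])
  · refine mem_filter.2 ⟨Fintype.mem_piFinset.2 fun i => hZX ?_, hP 0, hP' 0, fun i => ?_⟩
    · rw [← hZ]; exact mem_image_of_mem _ (mem_univ _)
    · rw [hP, hP', hv]

/-- The set contains three pairs with a common difference attained by at most `R₀` keys. -/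
def RareB (X : Finset V) (R₀ : ℝ) (Z : Finset V) : Prop :=
  ∃ v, ((paired X v).card : ℝ) ≤ R₀ ∧ TypeB v Z

open scoped Classical in
/-- Bound for the sets of keys containing three pairs with a common difference which is not
popular. -/
lemma card_classB_le (hq : 1 ≤ q) (hX : (X.card : ℝ) ≤ q ^ 2) (hK : 0 ≤ K) (hL : 0 ≤ L)
    (hB : SumBound X K k) (hB4 : SumBound X L 4) {R₀ : ℝ} (hR₀ : 0 ≤ R₀) :
    (((X.powersetCard k).filter (RareB X R₀)).card : ℝ) ≤
      k ^ 6 * (K * L * R₀ * q ^ (2 * k - 8)) := by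
  have hq0 : (0 : ℝ) ≤ q := by linarith
  set PP := (univ : Finset ((Fin 3 → Fin k) × (Fin 3 → Fin k))).filter fun p => Pos p.1 p.2
    with hPP
  set XX := (X ×ˢ X).filter fun p => ((paired X (p.1 + p.2)).card : ℝ) ≤ R₀ with hXX
  have hsub : ((X.powersetCard k).filter (RareB X R₀)) ⊆
      (PP.biUnion fun p => XX.biUnion fun y => tupP X p.1 p.2 y.1 y.2).image
        fun z => univ.image z := by
    intro Z hZ
    obtain ⟨h1, v, hv, x, hx, hm⟩ := mem_filter.1 hZ
    obtain ⟨hZX, hZk⟩ := mem_powersetCard.1 h1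
    obtain ⟨z, hz, rfl⟩ := exists_enum hZk
    obtain ⟨P, P', hP, hzP, -⟩ := exists_pos hZX rfl hx hm
    refine mem_image.2 ⟨z, ?_, rfl⟩
    refine mem_biUnion.2 ⟨(P, P'), mem_filter.2 ⟨mem_univ _, hP⟩, ?_⟩
    refine mem_biUnion.2 ⟨(x 0, x 0 + v), mem_filter.2 ⟨mem_product.2
      ⟨hZX (hm 0).1, hZX (hm 0).2⟩, ?_⟩, hzP⟩
    simpa only [← add_assoc, ZModModule.add_self, zero_add] using hv
  have h1 : ((((X.powersetCard k).filter (RareB X R₀)).card : ℕ) : ℝ) ≤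
      ∑ p ∈ PP, ∑ y ∈ XX, ((tupP X p.1 p.2 y.1 y.2).card : ℝ) := by
    refine le_trans (Nat.cast_le.2 ((card_le_card hsub).trans (card_image_le.trans
      (card_biUnion_le.trans (sum_le_sum fun p _ => card_biUnion_le))))) ?_
    push_cast
    exact le_rfl
  have h2 : ∀ p ∈ PP, ∑ y ∈ XX, ((tupP X p.1 p.2 y.1 y.2).card : ℝ) ≤
      K * L * R₀ * q ^ (2 * k - 8) := by
    intro p hp
    have hP := (mem_filter.1 hp).2
    have h3 : ∀ y ∈ XX, ((tupP X p.1 p.2 y.1 y.2).card : ℝ) ≤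
        K * R₀ * q ^ (2 * k - 12) * (paired X (y.1 + y.2)).card := by
      intro y hy
      obtain ⟨hy1, hy2⟩ := mem_filter.1 hy
      have h4 := card_tupP_le hB hP (Q := ∅) (by simp) (x' := y.2) (mem_product.1 hy1).1 0
      simp only [sum_empty, filter_true, notMem_empty, if_false] at h4
      refine h4.trans ((mul_le_mul_of_nonneg_left (prod_slotSet_le hX hP) hK).trans ?_)
      have h5 : ((paired X (y.1 + y.2)).card : ℝ) ^ 2 ≤ R₀ * (paired X (y.1 + y.2)).card := by
        rw [sq]; exact mul_le_mul_of_nonneg_right hy2 (Nat.cast_nonneg _)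
      calc _ ≤ K * (R₀ * (paired X (y.1 + y.2)).card * q ^ (2 * k - 12)) := by gcongr
        _ = _ := by ring
    refine (sum_le_sum h3).trans ?_
    rw [← mul_sum]
    have h6 : ∑ y ∈ XX, ((paired X (y.1 + y.2)).card : ℝ) ≤ L * q ^ 4 :=
      (sum_le_sum_of_subset_of_nonneg (filter_subset _ _) fun _ _ _ => Nat.cast_nonneg _).trans
        (energy_le hq hX hL hB4)
    have h7 : 2 * k - 8 = 2 * k - 12 + 4 := by have := hP.six_le; omega
    calc _ ≤ K * R₀ * q ^ (2 * k - 12) * (L * q ^ 4) := by gcongr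
      _ = _ := by rw [h7, pow_add]; ring
  refine h1.trans ((sum_le_sum h2).trans ?_)
  rw [sum_const, nsmul_eq_mul]
  have h8 : (PP.card : ℝ) ≤ k ^ 6 := by
    have : PP.card ≤ k ^ 6 := (card_filter_le _ _).trans (by
      rw [card_univ]; simp; exact le_of_eq (by ring))
    exact_mod_cast this
  gcongr

open scoped Classical in
/-- Bound for the sets of keys containing three pairs with a common difference and a further
relation. -/
lemma card_classC_le (hq : 1 ≤ q) (hX : (X.card : ℝ) ≤ q ^ 2) (hK : 0 ≤ K) (hL : 0 ≤ L)
    (hB : SumBound X K k) (hB4 : SumBound X L 4) :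
    (((X.powersetCard k).filter TypeC).card : ℝ) ≤
      k ^ 6 * 2 ^ k * (2 * K * L * q ^ (2 * k - 9)) := by
  have hq0 : (0 : ℝ) ≤ q := by linarith
  set PP := (univ : Finset (((Fin 3 → Fin k) × (Fin 3 → Fin k)) × Finset (Fin k))).filter
    fun p => Pos p.1.1 p.1.2 ∧ (∀ i, p.1.2 i ∉ p.2) ∧ 4 ≤ p.2.card with hPP
  set G : ((Fin 3 → Fin k) × (Fin 3 → Fin k)) × Finset (Fin k) → V × V → V → Finset (Fin k → V) :=
    fun p y w => (tupP X p.1.1 p.1.2 y.1 y.2).filter fun z => ∑ i ∈ p.2, z i = w with hG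
  have hsub : ((X.powersetCard k).filter TypeC) ⊆
      (PP.biUnion fun p => (X ×ˢ X).biUnion fun y => G p y 0 ∪ G p y (y.1 + y.2)).image
        fun z => univ.image z := by
    intro Z hZ
    obtain ⟨h1, v, x, hx, hm, Q, hQZ, hQ, hQ4, hQs⟩ := mem_filter.1 hZ
    obtain ⟨hZX, hZk⟩ := mem_powersetCard.1 h1
    obtain ⟨z, hz, rfl⟩ := exists_enum hZk
    obtain ⟨P, P', hP, hzP, hzP'⟩ := exists_pos hZX rfl hx hm
    obtain ⟨-, hs, hc⟩ := enum_subset hz rfl hQZ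
    refine mem_image.2 ⟨z, ?_, rfl⟩
    refine mem_biUnion.2 ⟨((P, P'), univ.filter fun i => z i ∈ Q), mem_filter.2 ⟨mem_univ _, hP,
      fun i hi => hQ i (by simpa [hzP'] using hi), hc ▸ hQ4⟩, ?_⟩
    refine mem_biUnion.2 ⟨(x 0, x 0 + v), mem_product.2 ⟨hZX (hm 0).1, hZX (hm 0).2⟩, ?_⟩
    have hv : x 0 + (x 0 + v) = v := by rw [← add_assoc, ZModModule.add_self, zero_add]
    rw [mem_union]
    refine hQs.imp (fun h => mem_filter.2 ⟨hzP, hs.trans h⟩) fun h => mem_filter.2 ⟨hzP, ?_⟩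
    simp only [hv]
    exact hs.trans h
  have h1 : ((((X.powersetCard k).filter TypeC).card : ℕ) : ℝ) ≤
      ∑ p ∈ PP, ∑ y ∈ X ×ˢ X, (((G p y 0).card : ℝ) + ((G p y (y.1 + y.2)).card : ℝ)) := by
    refine le_trans (Nat.cast_le.2 ((card_le_card hsub).trans (card_image_le.trans
      (card_biUnion_le.trans (sum_le_sum fun p _ => card_biUnion_le.trans
        (sum_le_sum fun y _ => card_union_le _ _)))))) ?_
    push_cast
    exact le_rfl
  have h2 : ∀ p ∈ PP, ∑ y ∈ X ×ˢ X, (((G p y 0).card : ℝ) + ((G p y (y.1 + y.2)).card : ℝ)) ≤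
      2 * K * L * q ^ (2 * k - 9) := by
    intro p hp
    obtain ⟨-, hP, hQ, hQ4⟩ := mem_filter.1 hp
    have h3 : ∀ y ∈ X ×ˢ X, ((G p y 0).card : ℝ) + ((G p y (y.1 + y.2)).card : ℝ) ≤
        2 * K * q ^ (2 * k - 13) * (paired X (y.1 + y.2)).card := by
      intro y hy
      have h4 : ∀ w, ((G p y w).card : ℝ) ≤
          K * ((paired X (y.1 + y.2)).card * q ^ (2 * k - 13)) := fun w =>
        (card_tupP_le hB hP hQ (mem_product.1 hy).1 w).trans
          (mul_le_mul_of_nonneg_left (prod_slotSet_le' hq hX hP hQ hQ4) hK)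
      calc _ ≤ _ := add_le_add (h4 0) (h4 (y.1 + y.2))
        _ = _ := by ring
    refine (sum_le_sum h3).trans ?_
    rw [← mul_sum]
    have h7 : 2 * k - 9 = 2 * k - 13 + 4 := by have := hP.seven_le hQ hQ4; omega
    calc _ ≤ 2 * K * q ^ (2 * k - 13) * (L * q ^ 4) := by
          gcongr
          exact energy_le hq hX hL hB4
      _ = _ := by rw [h7, pow_add]; ring
  refine h1.trans ((sum_le_sum h2).trans ?_)
  rw [sum_const, nsmul_eq_mul]
  have h8 : (PP.card : ℝ) ≤ k ^ 6 * 2 ^ k := by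
    have : PP.card ≤ k ^ 6 * 2 ^ k := (card_filter_le _ _).trans (by
      rw [card_univ]; simp; exact le_of_eq (by ring))
    exact_mod_cast this
  gcongr

end Classes

/-! ### Probability that many linear constraints hold -/

section Prob

set_option linter.unusedSectionVars false

open Finset

variable {V R : Type*} [AddCommGroup V] [Module (ZMod 2) V] [Fintype V] [DecidableEq V]
  [AddCommGroup R] [Module (ZMod 2) R] [Fintype R] [DecidableEq R]
  [Fintype (V →ₗ[ZMod 2] R)] {d r k : ℕ}

/-- Linearly independent constraints on a random tuple of linear maps are satisfied
independently of each other. -/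
lemma card_indep_le (w : Fin r → Fin d → V) (hw : LinearIndependent (ZMod 2) w) :
    (univ.filter fun h : Fin d → V →ₗ[ZMod 2] R => ∀ l, ∑ j, h j (w l j) = 0).card *
      Fintype.card R ^ r ≤ Fintype.card (Fin d → V →ₗ[ZMod 2] R) := by
  obtain ⟨g, hg⟩ := LinearMap.exists_leftInverse_of_injective
    (Fintype.linearCombination (ZMod 2) w) (LinearMap.ker_eq_bot.2
      (linearIndependent_iff_injective_fintypeLinearCombination.1 hw))
  have hg1 : ∀ l l', g (w l) l' = if l' = l then 1 else 0 := by
    intro l l'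
    have h1 := LinearMap.congr_fun hg (Pi.single l 1)
    rw [LinearMap.comp_apply, Fintype.linearCombination_apply_single, one_smul] at h1
    rw [h1, LinearMap.id_apply, Pi.single_apply]
  set sh : (Fin r → R) → Fin d → V →ₗ[ZMod 2] R := fun u j => ∑ l,
    ((LinearMap.proj l ∘ₗ g) ∘ₗ LinearMap.single (ZMod 2) (fun _ => V) j).smulRight (u l) with hsh
  have hsh1 : ∀ u l, ∑ j, sh u j (w l j) = u l := by
    intro u l
    simp only [hsh, LinearMap.sum_apply, LinearMap.smulRight_apply, LinearMap.comp_apply,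
      LinearMap.proj_apply, LinearMap.single_apply]
    rw [sum_comm]
    have h2 : ∀ l', ∑ j, g (Pi.single j (w l j)) l' • u l' = g (w l) l' • u l' := by
      intro l'
      rw [← sum_smul]
      congr 1
      conv_rhs => rw [← univ_sum_single (w l), map_sum, Finset.sum_apply]
    simp only [h2, hg1, ite_smul, one_smul, zero_smul, sum_ite_eq', mem_univ, if_true]
  have hc : Fintype.card R ^ r = (univ : Finset (Fin r → R)).card := by simp
  rw [hc, ← card_product]
  refine card_le_card_of_injOn (fun p => p.1 + sh p.2) (fun _ _ => mem_coe.2 (mem_univ _)) ?_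
  rintro ⟨h, u⟩ h1 ⟨h', u'⟩ h2 h3
  simp only [coe_product, Set.mem_prod, mem_coe, mem_filter, mem_univ, true_and, and_true]
    at h1 h2
  have h4 : ∀ (h : Fin d → V →ₗ[ZMod 2] R) u, (∀ l, ∑ j, h j (w l j) = 0) →
      ∀ l, ∑ j, (h + sh u) j (w l j) = u l := by
    intro h u hh l
    simp only [Pi.add_apply, LinearMap.add_apply, sum_add_distrib, hh, hsh1, zero_add]
  have hu : u = u' := by
    funext l
    have h5 : h + sh u = h' + sh u' := h3
    rw [← h4 h u h1 l, h5, h4 h' u' h2 l]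
  subst hu
  have h5 : h + sh u = h' + sh u := h3
  rw [add_right_cancel h5]

lemma card_ker_le (j : Fin d) {v : V} (hv : v ≠ 0) :
    (univ.filter fun h : Fin d → V →ₗ[ZMod 2] R => h j v = 0).card * Fintype.card R ≤
      Fintype.card (Fin d → V →ₗ[ZMod 2] R) := by
  have h1 := card_indep_le (R := R) (fun _ : Fin 1 => Pi.single j v)
    (linearIndependent_unique_iff.2 (by simpa using hv))
  rw [pow_one] at h1
  refine le_trans (Nat.mul_le_mul_right _ (card_le_card fun h hh => ?_)) h1
  simp only [mem_filter, mem_univ, true_and] at hh ⊢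
  intro _
  rw [sum_eq_single j (fun i _ hi => by simp [hi]) (by simp)]
  simpa using hh

lemma natCard_span_le (Z : Finset V) :
    Nat.card (Submodule.span (ZMod 2) (Z : Set V)) ≤ 2 ^ Z.card := by
  rw [Module.natCard_eq_pow_finrank (K := ZMod 2), Nat.card_zmod]
  exact Nat.pow_le_pow_right two_pos (dm_le_card Z)

open scoped Classical in
lemma exists_constraints {h : Fin d → V →ₗ[ZMod 2] R} {Z : Finset V} (hr : r ≤ rho h Z) :
    ∃ w : Fin r → Fin d → V, LinearIndependent (ZMod 2) w ∧
      (∀ l j, w l j ∈ Submodule.span (ZMod 2) (Z : Set V)) ∧ ∀ l, ∑ j, h j (w l j) = 0 := by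
  set U : Fin d → Submodule (ZMod 2) V := fun j =>
    Submodule.span (ZMod 2) (Z : Set V) ⊓ LinearMap.ker (h j) with hU
  let B := fun j => Module.finBasis (ZMod 2) (U j)
  have h1 := Pi.linearIndependent_single (R := ZMod 2) (fun j i => ((B j i : U j) : V))
    fun j => (B j).linearIndependent.map' (U j).subtype (U j).ker_subtype
  have h2 : Fintype.card (Fin r) ≤
      Fintype.card ((j : Fin d) × Fin (Module.finrank (ZMod 2) (U j))) := by
    simp only [Fintype.card_sigma, Fintype.card_fin]
    exact hr
  obtain ⟨e⟩ := Function.Embedding.nonempty_of_card_le h2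
  have h3 : ∀ l, ((B (e l).1 (e l).2 : U (e l).1) : V) ∈ U (e l).1 := fun l => Subtype.mem _
  refine ⟨fun l => Pi.single (e l).1 (B (e l).1 (e l).2 : V), ?_, fun l j => ?_, fun l => ?_⟩
  · exact h1.comp e e.injective
  · beta_reduce
    by_cases hj : j = (e l).1
    · subst hj
      rw [Pi.single_eq_same]
      exact (h3 l).1
    · rw [Pi.single_eq_of_ne hj]
      exact zero_mem _
  · rw [sum_eq_single (e l).1 (fun i _ hi => by simp [hi]) (by simp)]
    beta_reduce
    rw [Pi.single_eq_same]
    exact (h3 l).2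

open scoped Classical in
/-- The union bound over a class of sets of keys and over the choices of `r` independent
constraints within the span of such a set. -/
lemma card_class_rho_le (F : Finset (Finset V)) (hF : ∀ Z ∈ F, Z.card = k) :
    (univ.filter fun h : Fin d → V →ₗ[ZMod 2] R => ∃ Z ∈ F, r ≤ rho h Z).card *
      Fintype.card R ^ r ≤
      F.card * 2 ^ (k * d * r) * Fintype.card (Fin d → V →ₗ[ZMod 2] R) := by
  set G : Finset V → Finset (Fin r → Fin d → V) := fun Z =>
    (Fintype.piFinset fun _ => Fintype.piFinset fun _ =>
      univ.filter fun v => v ∈ Submodule.span (ZMod 2) (Z : Set V)).filter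
        fun w => LinearIndependent (ZMod 2) w with hG
  set E : (Fin r → Fin d → V) → Finset (Fin d → V →ₗ[ZMod 2] R) := fun w =>
    univ.filter fun h => ∀ l, ∑ j, h j (w l j) = 0 with hE
  have h1 : (univ.filter fun h : Fin d → V →ₗ[ZMod 2] R => ∃ Z ∈ F, r ≤ rho h Z) ⊆
      F.biUnion fun Z => (G Z).biUnion E := by
    intro h hh
    obtain ⟨-, Z, hZ, hr⟩ := mem_filter.1 hh
    obtain ⟨w, hw, hs, h0⟩ := exists_constraints hr
    refine mem_biUnion.2 ⟨Z, hZ, mem_biUnion.2 ⟨w, mem_filter.2 ⟨?_, hw⟩,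
      mem_filter.2 ⟨mem_univ _, h0⟩⟩⟩
    simpa [Fintype.mem_piFinset] using hs
  have h2 : ∀ Z ∈ F, (G Z).card ≤ 2 ^ (k * d * r) := by
    intro Z hZ
    refine (card_filter_le _ _).trans ?_
    simp only [Fintype.card_piFinset, prod_const, card_univ, Fintype.card_fin]
    rw [pow_mul, pow_mul]
    gcongr
    rw [← hF Z hZ]
    refine le_trans (le_of_eq ?_) (natCard_span_le Z)
    rw [Nat.card_eq_fintype_card, Fintype.card_subtype]
  calc _ ≤ (∑ Z ∈ F, ∑ w ∈ G Z, (E w).card) * Fintype.card R ^ r :=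
        Nat.mul_le_mul_right _ ((card_le_card h1).trans (card_biUnion_le.trans
          (sum_le_sum fun Z _ => card_biUnion_le)))
    _ = ∑ Z ∈ F, ∑ w ∈ G Z, (E w).card * Fintype.card R ^ r := by
        simp only [sum_mul]
    _ ≤ ∑ Z ∈ F, 2 ^ (k * d * r) * Fintype.card (Fin d → V →ₗ[ZMod 2] R) := by
        refine sum_le_sum fun Z hZ => ?_
        refine (sum_le_card_nsmul _ _ _ fun w hw => card_indep_le w (mem_filter.1 hw).2).trans ?_
        rw [smul_eq_mul]
        exact Nat.mul_le_mul_right _ (h2 Z hZ)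
    _ = _ := by rw [sum_const, smul_eq_mul, ← mul_assoc]

end Prob

/-! ### The union bound -/

section Union

set_option linter.unusedSectionVars false

open Finset

variable {V R : Type*} [AddCommGroup V] [Module (ZMod 2) V] [Fintype V] [DecidableEq V]
  [AddCommGroup R] [Module (ZMod 2) R] [Fintype R] [DecidableEq R]
  [Fintype (V →ₗ[ZMod 2] R)] {d r k : ℕ} {X : Finset V} {ρ D M K L : ℝ}

lemma six_le_card {Z : Finset V} {v : V} {x : Fin 3 → V} (hx : Trip v x)
    (hm : ∀ i, x i ∈ Z ∧ x i + v ∈ Z) : 6 ≤ Z.card := by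
  obtain ⟨z, -, hz⟩ := exists_enum (rfl : Z.card = Z.card)
  obtain ⟨P, P', hP, -⟩ := exists_pos subset_rfl hz hx hm
  exact hP.six_le

open scoped Classical in
/-- Here `ρ` is the sixth root of the size `|R|` of the range. -/
lemma class_prob_le (hρ : 1 ≤ ρ) (hR : (Fintype.card R : ℝ) = ρ ^ 6) (hr : r ≤ k + 1)
    {F : Finset (Finset V)} (hF : ∀ Z ∈ F, Z.card = k) (hM0 : 0 ≤ M)
    (hM : (F.card : ℝ) * ρ ^ 2 ≤ M * ρ ^ (6 * r)) :
    ((univ.filter fun h : Fin d → V →ₗ[ZMod 2] R => ∃ Z ∈ F, r ≤ rho h Z).card : ℝ) * ρ ^ 2 ≤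
      M * 2 ^ (k * d * (k + 1)) * Fintype.card (Fin d → V →ₗ[ZMod 2] R) := by
  have hρ0 : 0 < ρ := by linarith
  have h1 : ((univ.filter fun h : Fin d → V →ₗ[ZMod 2] R =>
      ∃ Z ∈ F, r ≤ rho h Z).card : ℝ) * ρ ^ (6 * r) ≤
      F.card * 2 ^ (k * d * r) * Fintype.card (Fin d → V →ₗ[ZMod 2] R) := by
    rw [pow_mul, ← hR]
    exact_mod_cast card_class_rho_le (R := R) (d := d) (r := r) F hF
  have h2 : (2 : ℝ) ^ (k * d * r) ≤ 2 ^ (k * d * (k + 1)) :=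
    pow_le_pow_right₀ one_le_two (Nat.mul_le_mul_left _ hr)
  have h3 : 0 < ρ ^ (6 * r) := pow_pos hρ0 _
  refine le_of_mul_le_mul_right ?_ h3
  calc _ = ((univ.filter fun h : Fin d → V →ₗ[ZMod 2] R =>
        ∃ Z ∈ F, r ≤ rho h Z).card : ℝ) * ρ ^ (6 * r) * ρ ^ 2 := by ring
    _ ≤ F.card * 2 ^ (k * d * r) * Fintype.card (Fin d → V →ₗ[ZMod 2] R) * ρ ^ 2 := by gcongr
    _ = F.card * ρ ^ 2 * 2 ^ (k * d * r) * Fintype.card (Fin d → V →ₗ[ZMod 2] R) := by ring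
    _ ≤ M * ρ ^ (6 * r) * 2 ^ (k * d * (k + 1)) *
        Fintype.card (Fin d → V →ₗ[ZMod 2] R) := by gcongr
    _ = _ := by ring

lemma pow_key_le (hρ : 1 ≤ ρ) (hD : 1 ≤ D) {m : ℕ} (hm : m ≤ 2 * k) :
    (√D * ρ ^ 3) ^ m ≤ D ^ k * ρ ^ (3 * m) := by
  have h1 : √D ^ m ≤ D ^ k := by
    have h2 : (1 : ℝ) ≤ √D := Real.one_le_sqrt.2 hD
    calc √D ^ m ≤ √D ^ (2 * k) := pow_le_pow_right₀ h2 hm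
      _ = D ^ k := by rw [pow_mul, Real.sq_sqrt (by linarith)]
  rw [mul_pow, ← pow_mul]
  have : 0 ≤ ρ := by linarith
  gcongr

/-- The bound for the expected number of sets of keys of size `k` in one class, up to the
counting of constraints and up to the factor `ρ ^ 2 = |R| ^ (1 / 3)`. -/
def clsBound (D K L : ℝ) (k : ℕ) : ℝ := 2 * 4 ^ k * (k + 1) ^ 6 * K ^ 2 * L * D ^ k

lemma clsBound_nonneg (hD : 1 ≤ D) (hL : 1 ≤ L) : 0 ≤ clsBound D K L k := by
  unfold clsBound
  have : 0 ≤ D := by linarith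
  have : 0 ≤ L := by linarith
  positivity

lemma key_root (hρ : 1 ≤ ρ) (hD : 1 ≤ D) : 1 ≤ √D * ρ ^ 3 ∧ (√D * ρ ^ 3) ^ 2 = D * ρ ^ 6 := by
  refine ⟨one_le_mul_of_one_le_of_one_le (Real.one_le_sqrt.2 hD) (one_le_pow₀ hρ), ?_⟩
  rw [mul_pow, Real.sq_sqrt (by linarith)]
  ring

open scoped Classical in
lemma classA_le (hρ : 1 ≤ ρ) (hD : 1 ≤ D) (hK : 1 ≤ K) (hL : 1 ≤ L)
    (hX : (X.card : ℝ) ≤ D * ρ ^ 6) (hB : SumBound X K k) {s : ℕ} (hs : s ≤ k) :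
    (((X.powersetCard k).filter (TypeA s)).card : ℝ) * ρ ^ 2 ≤
      clsBound D K L k * ρ ^ (6 * ((2 * k + 2 - s) / 2)) := by
  obtain ⟨h1, h2⟩ := key_root hρ hD
  have hρ0 : 0 ≤ ρ := by linarith
  have h3 := card_classA_le h1 (hX.trans h2.ge) (by linarith) hB s
  have h4 := pow_key_le hρ hD (k := k) (m := 2 * k - s) (by omega)
  have h5 : ρ ^ (3 * (2 * k - s)) * ρ ^ 2 ≤ ρ ^ (6 * ((2 * k + 2 - s) / 2)) := by
    rw [← pow_add]
    exact pow_le_pow_right₀ hρ (by omega)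
  have h6 : (1 : ℝ) ≤ 2 * (k + 1) ^ 6 * L := by
    have : (1 : ℝ) ≤ (k + 1) ^ 6 := one_le_pow₀ (by linarith [Nat.cast_nonneg (α := ℝ) k])
    nlinarith
  have hD0 : 0 ≤ D := by linarith
  calc _ ≤ 4 ^ k * (K ^ 2 * (D ^ k * ρ ^ (3 * (2 * k - s)))) * ρ ^ 2 := by
        refine mul_le_mul_of_nonneg_right (h3.trans ?_) (by positivity)
        gcongr
    _ = 4 ^ k * K ^ 2 * D ^ k * 1 * (ρ ^ (3 * (2 * k - s)) * ρ ^ 2) := by ring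
    _ ≤ 4 ^ k * K ^ 2 * D ^ k * (2 * (k + 1) ^ 6 * L) * ρ ^ (6 * ((2 * k + 2 - s) / 2)) := by
        gcongr
    _ = _ := by unfold clsBound; ring

open scoped Classical in
lemma classB_le (hρ : 1 ≤ ρ) (hD : 1 ≤ D) (hK : 1 ≤ K) (hL : 1 ≤ L)
    (hX : (X.card : ℝ) ≤ D * ρ ^ 6) (hB : SumBound X K k) (hB4 : SumBound X L 4) :
    (((X.powersetCard k).filter (RareB X (ρ ^ 4))).card : ℝ) * ρ ^ 2 ≤
      clsBound D K L k * ρ ^ (6 * (k - 3)) := by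
  have hρ0 : 0 ≤ ρ := by linarith
  have hD0 : 0 ≤ D := by linarith
  rcases Finset.eq_empty_or_nonempty ((X.powersetCard k).filter (RareB X (ρ ^ 4))) with h0 | ⟨Z, hZ⟩
  · rw [h0, card_empty, Nat.cast_zero, zero_mul]
    exact mul_nonneg (clsBound_nonneg hD hL) (by positivity)
  have hk : 6 ≤ k := by
    obtain ⟨h1, v, -, x, hx, hm⟩ := mem_filter.1 hZ
    rw [← (mem_powersetCard.1 h1).2]
    exact six_le_card hx hm
  obtain ⟨h1, h2⟩ := key_root hρ hD
  have h3 := card_classB_le h1 (hX.trans h2.ge) (by linarith) (by linarith) hB hB4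
    (R₀ := ρ ^ 4) (by positivity)
  have h4 := pow_key_le hρ hD (k := k) (m := 2 * k - 8) (by omega)
  have h5 : ρ ^ 4 * ρ ^ (3 * (2 * k - 8)) * ρ ^ 2 ≤ ρ ^ (6 * (k - 3)) := by
    rw [← pow_add, ← pow_add]
    exact pow_le_pow_right₀ hρ (by omega)
  have h6 : (k : ℝ) ^ 6 ≤ 2 * 4 ^ k * (k + 1) ^ 6 := by
    have h7 : (k : ℝ) ^ 6 ≤ (k + 1) ^ 6 := by gcongr; linarith
    have h8 : (1 : ℝ) ≤ 4 ^ k := one_le_pow₀ (by norm_num)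
    have h9 : (0 : ℝ) ≤ (k + 1) ^ 6 := by positivity
    nlinarith
  have h7 : K ≤ K ^ 2 := by nlinarith
  calc _ ≤ k ^ 6 * (K * L * ρ ^ 4 * (D ^ k * ρ ^ (3 * (2 * k - 8)))) * ρ ^ 2 := by
        refine mul_le_mul_of_nonneg_right (h3.trans ?_) (by positivity)
        gcongr
    _ = k ^ 6 * K * L * D ^ k * (ρ ^ 4 * ρ ^ (3 * (2 * k - 8)) * ρ ^ 2) := by ring
    _ ≤ (2 * 4 ^ k * (k + 1) ^ 6) * K ^ 2 * L * D ^ k * ρ ^ (6 * (k - 3)) := by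
        gcongr
    _ = _ := by unfold clsBound; ring

open scoped Classical in
lemma classC_le (hρ : 1 ≤ ρ) (hD : 1 ≤ D) (hK : 1 ≤ K) (hL : 1 ≤ L)
    (hX : (X.card : ℝ) ≤ D * ρ ^ 6) (hB : SumBound X K k) (hB4 : SumBound X L 4) :
    (((X.powersetCard k).filter TypeC).card : ℝ) * ρ ^ 2 ≤
      clsBound D K L k * ρ ^ (6 * (k - 4)) := by
  have hρ0 : 0 ≤ ρ := by linarith
  have hD0 : 0 ≤ D := by linarith
  rcases Finset.eq_empty_or_nonempty ((X.powersetCard k).filter TypeC) with h0 | ⟨Z, hZ⟩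
  · rw [h0, card_empty, Nat.cast_zero, zero_mul]
    exact mul_nonneg (clsBound_nonneg hD hL) (by positivity)
  have hk : 6 ≤ k := by
    obtain ⟨h1, v, x, hx, hm, -⟩ := mem_filter.1 hZ
    rw [← (mem_powersetCard.1 h1).2]
    exact six_le_card hx hm
  obtain ⟨h1, h2⟩ := key_root hρ hD
  have h3 := card_classC_le h1 (hX.trans h2.ge) (by linarith) (by linarith) hB hB4
  have h4 := pow_key_le hρ hD (k := k) (m := 2 * k - 9) (by omega)
  have h5 : ρ ^ (3 * (2 * k - 9)) * ρ ^ 2 ≤ ρ ^ (6 * (k - 4)) := by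
    rw [← pow_add]
    exact pow_le_pow_right₀ hρ (by omega)
  have h6 : (k : ℝ) ^ 6 * 2 ^ k * 2 ≤ 2 * 4 ^ k * (k + 1) ^ 6 := by
    have h7 : (k : ℝ) ^ 6 ≤ (k + 1) ^ 6 := by gcongr; linarith
    have h8 : (2 : ℝ) ^ k ≤ 4 ^ k := by gcongr; norm_num
    calc (k : ℝ) ^ 6 * 2 ^ k * 2 ≤ (k + 1) ^ 6 * 4 ^ k * 2 := by gcongr
      _ = _ := by ring
  have h7 : K ≤ K ^ 2 := by nlinarith
  calc _ ≤ k ^ 6 * 2 ^ k * (2 * K * L * (D ^ k * ρ ^ (3 * (2 * k - 9)))) * ρ ^ 2 := by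
        refine mul_le_mul_of_nonneg_right (h3.trans ?_) (by positivity)
        gcongr
    _ = (k ^ 6 * 2 ^ k * 2) * K * L * D ^ k * (ρ ^ (3 * (2 * k - 9)) * ρ ^ 2) := by ring
    _ ≤ (2 * 4 ^ k * (k + 1) ^ 6) * K ^ 2 * L * D ^ k * ρ ^ (6 * (k - 4)) := by
        gcongr
    _ = _ := by unfold clsBound; ring

end Union

section Union

set_option linter.unusedSectionVars false

open Finset

variable {V R : Type*} [AddCommGroup V] [Module (ZMod 2) V] [Fintype V] [DecidableEq V]
  [AddCommGroup R] [Module (ZMod 2) R] [Fintype R] [DecidableEq R]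
  [Fintype (V →ₗ[ZMod 2] R)] {d k : ℕ} {X : Finset V} {ρ D K L : ℝ}

open scoped Classical in
/-- The probability that some set of `k` keys contributes an outcome of the structure theorem,
apart from popular differences that are mapped to `0`. -/
lemma outcome_prob_le (hρ : 1 ≤ ρ) (hD : 1 ≤ D) (hK : 1 ≤ K) (hL : 1 ≤ L)
    (hX : (X.card : ℝ) ≤ D * ρ ^ 6) (hB : SumBound X K k) (hB4 : SumBound X L 4)
    (hR : (Fintype.card R : ℝ) = ρ ^ 6) :
    ((univ.filter fun h : Fin d → V →ₗ[ZMod 2] R =>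
      (∀ v ∈ popular X (ρ ^ 4), v ≠ 0 → ∀ j, h j v ≠ 0) ∧
        ∃ Z ∈ X.powersetCard k, Outcome h Z).card : ℝ) * ρ ^ 2 ≤
      (k + 3) * (clsBound D K L k * 2 ^ (k * d * (k + 1)) *
        Fintype.card (Fin d → V →ₗ[ZMod 2] R)) := by
  set N : ℝ := clsBound D K L k * 2 ^ (k * d * (k + 1)) *
    Fintype.card (Fin d → V →ₗ[ZMod 2] R) with hN
  set P : Finset (Finset V) → ℕ → Finset (Fin d → V →ₗ[ZMod 2] R) := fun F r =>
    univ.filter fun h => ∃ Z ∈ F, r ≤ rho h Z with hP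
  have hsub : (univ.filter fun h : Fin d → V →ₗ[ZMod 2] R =>
      (∀ v ∈ popular X (ρ ^ 4), v ≠ 0 → ∀ j, h j v ≠ 0) ∧
        ∃ Z ∈ X.powersetCard k, Outcome h Z) ⊆
      ((range (k + 1)).biUnion fun s =>
        P ((X.powersetCard k).filter (TypeA s)) ((2 * k + 2 - s) / 2)) ∪
      (P ((X.powersetCard k).filter (RareB X (ρ ^ 4))) (k - 3) ∪
        P ((X.powersetCard k).filter TypeC) (k - 4)) := by
    intro h hh
    obtain ⟨-, hpop, Z, hZ, hO⟩ := mem_filter.1 hh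
    obtain ⟨hZX, hZk⟩ := mem_powersetCard.1 hZ
    rw [mem_union, mem_union]
    rcases hO with ⟨s, hA, hs⟩ | ⟨v, j, hv, hBv, hs⟩ | ⟨hC, hs⟩
    · left
      have hsk : s ≤ k := by
        obtain ⟨Q₁, h1, Q₂, h2, -, -, rfl⟩ := hA
        rw [← hZk]
        exact card_le_card (union_subset h1 h2)
      refine mem_biUnion.2 ⟨s, mem_range.2 (by omega), mem_filter.2 ⟨mem_univ _, Z,
        mem_filter.2 ⟨hZ, hA⟩, by omega⟩⟩
    · right; left
      refine mem_filter.2 ⟨mem_univ _, Z, mem_filter.2 ⟨hZ, v, ?_, hBv⟩, by omega⟩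
      obtain ⟨x, hx, hm⟩ := hBv
      by_contra hlt
      refine hpop v ?_ hx.ne_zero j hv
      unfold popular
      refine mem_filter.2 ⟨mem_image.2 ⟨(x 0, x 0 + v), mem_product.2
        ⟨hZX (hm 0).1, hZX (hm 0).2⟩, ?_⟩, not_le.1 hlt⟩
      simp only [← add_assoc, ZModModule.add_self, zero_add]
    · right; right
      exact mem_filter.2 ⟨mem_univ _, Z, mem_filter.2 ⟨hZ, hC⟩, by omega⟩
  have hcl : ∀ p : Finset V → Prop, ∀ Z ∈ (X.powersetCard k).filter p, Z.card = k :=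
    fun p Z hZ => (mem_powersetCard.1 (mem_filter.1 hZ).1).2
  have hM0 := clsBound_nonneg (k := k) (K := K) hD hL
  have hA : ∀ s ∈ range (k + 1),
      ((P ((X.powersetCard k).filter (TypeA s)) ((2 * k + 2 - s) / 2)).card : ℝ) * ρ ^ 2 ≤ N :=
    fun s hs => class_prob_le hρ hR (by omega) (hcl _) hM0
      (classA_le hρ hD hK hL hX hB (by simpa [Nat.lt_succ_iff] using hs))
  have hBB : ((P ((X.powersetCard k).filter (RareB X (ρ ^ 4))) (k - 3)).card : ℝ) * ρ ^ 2 ≤ N :=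
    class_prob_le hρ hR (by omega) (hcl _) hM0 (classB_le hρ hD hK hL hX hB hB4)
  have hCC : ((P ((X.powersetCard k).filter TypeC) (k - 4)).card : ℝ) * ρ ^ 2 ≤ N :=
    class_prob_le hρ hR (by omega) (hcl _) hM0 (classC_le hρ hD hK hL hX hB hB4)
  have h1 : ((univ.filter fun h : Fin d → V →ₗ[ZMod 2] R =>
      (∀ v ∈ popular X (ρ ^ 4), v ≠ 0 → ∀ j, h j v ≠ 0) ∧
        ∃ Z ∈ X.powersetCard k, Outcome h Z).card : ℝ) ≤
      (∑ s ∈ range (k + 1),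
        ((P ((X.powersetCard k).filter (TypeA s)) ((2 * k + 2 - s) / 2)).card : ℝ)) +
      (((P ((X.powersetCard k).filter (RareB X (ρ ^ 4))) (k - 3)).card : ℝ) +
        ((P ((X.powersetCard k).filter TypeC) (k - 4)).card : ℝ)) := by
    have h2 := (card_le_card hsub).trans ((card_union_le _ _).trans
      (add_le_add card_biUnion_le (card_union_le _ _)))
    exact_mod_cast h2
  have h3 : (∑ s ∈ range (k + 1),
        ((P ((X.powersetCard k).filter (TypeA s)) ((2 * k + 2 - s) / 2)).card : ℝ)) * ρ ^ 2 ≤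
      (k + 1) * N := by
    rw [sum_mul]
    refine (sum_le_card_nsmul _ _ _ hA).trans (le_of_eq ?_)
    rw [card_range, nsmul_eq_mul]
    push_cast
    rfl
  have h4 := mul_le_mul_of_nonneg_right h1 (by positivity : 0 ≤ ρ ^ 2)
  linarith

/-- Some map `h j` sends a popular difference to `0`. -/
def HitsPopular (X : Finset V) (R₀ : ℝ) (h : Fin d → V →ₗ[ZMod 2] R) : Prop :=
  ∃ v ∈ popular X R₀, v ≠ 0 ∧ ∃ j, h j v = 0

open scoped Classical in
/-- The probability that a popular difference is mapped to `0`. -/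
lemma popular_prob_le (hρ : 1 ≤ ρ) (hD : 1 ≤ D) (hL : 1 ≤ L)
    (hX : (X.card : ℝ) ≤ D * ρ ^ 6) (hB4 : SumBound X L 4)
    (hR : (Fintype.card R : ℝ) = ρ ^ 6) :
    ((univ.filter fun h : Fin d → V →ₗ[ZMod 2] R => HitsPopular X (ρ ^ 4) h).card : ℝ) * ρ ^ 2 ≤
      L * D ^ 2 * d * Fintype.card (Fin d → V →ₗ[ZMod 2] R) := by
  have hρ0 : 0 < ρ := by linarith
  obtain ⟨h1, h2⟩ := key_root hρ hD
  have h3 := card_popular_le h1 (hX.trans h2.ge) (by linarith) hB4 (R₀ := ρ ^ 4) (by positivity)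
  have h4 : ((popular X (ρ ^ 4)).card : ℝ) ≤ L * D ^ 2 * ρ ^ 4 := by
    have h5 : (√D * ρ ^ 3) ^ 4 = D ^ 2 * ρ ^ 12 := by
      calc (√D * ρ ^ 3) ^ 4 = ((√D * ρ ^ 3) ^ 2) ^ 2 := by ring
        _ = _ := by rw [h2]; ring
    rw [h5] at h3
    refine le_of_mul_le_mul_right ?_ (pow_pos hρ0 8)
    calc _ = ((popular X (ρ ^ 4)).card : ℝ) * (ρ ^ 4) ^ 2 := by ring
      _ ≤ _ := h3
      _ = _ := by ring
  set N : ℝ := (Fintype.card (Fin d → V →ₗ[ZMod 2] R) : ℝ) with hN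
  set E : V → Fin d → Finset (Fin d → V →ₗ[ZMod 2] R) := fun v j =>
    univ.filter fun h => v ≠ 0 ∧ h j v = 0 with hE
  have hsub : (univ.filter fun h : Fin d → V →ₗ[ZMod 2] R => HitsPopular X (ρ ^ 4) h) ⊆
      (popular X (ρ ^ 4)).biUnion fun v => univ.biUnion fun j => E v j := by
    intro h hh
    obtain ⟨-, v, hv, hv0, j, hj⟩ := mem_filter.1 hh
    exact mem_biUnion.2 ⟨v, hv, mem_biUnion.2 ⟨j, mem_univ _,
      mem_filter.2 ⟨mem_univ _, hv0, hj⟩⟩⟩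
  have h5 : ∀ v j, ((E v j).card : ℝ) * ρ ^ 6 ≤ N := by
    intro v j
    by_cases hv : v = 0
    · simp [hE, hv, hN]
    · have h6 := card_ker_le (R := R) j hv
      rw [← hR, hN]
      refine le_trans ?_ (Nat.cast_le.2 h6)
      push_cast
      simp only [hE, ne_eq, hv, not_false_eq_true, true_and]
      exact le_rfl
  have h6 : ((univ.filter fun h : Fin d → V →ₗ[ZMod 2] R => HitsPopular X (ρ ^ 4) h).card : ℝ) ≤
      ∑ v ∈ popular X (ρ ^ 4), ∑ j, ((E v j).card : ℝ) := by
    have := (card_le_card hsub).trans (card_biUnion_le.trans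
      (sum_le_sum fun v _ => card_biUnion_le))
    exact_mod_cast this
  have h7 : (∑ v ∈ popular X (ρ ^ 4), ∑ j, ((E v j).card : ℝ)) * ρ ^ 6 ≤
      (popular X (ρ ^ 4)).card * (d * N) := by
    rw [sum_mul, ← nsmul_eq_mul]
    refine sum_le_card_nsmul _ _ _ fun v _ => ?_
    rw [sum_mul]
    refine (sum_le_card_nsmul _ _ _ fun j _ => h5 v j).trans (le_of_eq ?_)
    rw [card_univ, Fintype.card_fin, nsmul_eq_mul]
  refine le_of_mul_le_mul_right ?_ (pow_pos hρ0 4)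
  calc _ = ((univ.filter fun h : Fin d → V →ₗ[ZMod 2] R => HitsPopular X (ρ ^ 4) h).card : ℝ) * ρ ^ 6 := by ring
    _ ≤ (popular X (ρ ^ 4)).card * (d * N) :=
        (mul_le_mul_of_nonneg_right h6 (by positivity)).trans h7
    _ ≤ L * D ^ 2 * ρ ^ 4 * (d * N) := by gcongr
    _ = _ := by ring

/-- The bound for the probability of a bad set of at most `m` keys, up to the factor
`|R| ^ (-1 / 3)`. -/
noncomputable def totBound (c d : ℕ) (D : ℝ) (m : ℕ) : ℝ :=
  (∑ k ∈ range (m + 1), (k + 3) * (clsBound D (kap c k) (kap c 4) k * 2 ^ (k * d * (k + 1)))) +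
    kap c 4 * D ^ 2 * d

open scoped Classical in
/-- The probability that the hash graph has a subgraph with few vertices and few edges. -/
lemma bad_prob_le {c m : ℕ} (hρ : 1 ≤ ρ) (hD : 1 ≤ D)
    (hX : (X.card : ℝ) ≤ D * ρ ^ 6) (hB : ∀ k, SumBound X (kap c k) k)
    (hR : (Fintype.card R : ℝ) = ρ ^ 6) {p : V →ₗ[ZMod 2] ZMod 2} (hp : ∀ x ∈ X, p x = 1) :
    ((univ.filter fun h : Fin d → V →ₗ[ZMod 2] R =>
      ∃ S ⊆ X, S.card ≤ m ∧ nv h S + S.card + 1 ≤ d * S.card).card : ℝ) * ρ ^ 2 ≤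
      totBound c d D m * Fintype.card (Fin d → V →ₗ[ZMod 2] R) := by
  set E : ℕ → Finset (Fin d → V →ₗ[ZMod 2] R) := fun k => univ.filter fun h =>
    (∀ v ∈ popular X (ρ ^ 4), v ≠ 0 → ∀ j, h j v ≠ 0) ∧
        ∃ Z ∈ X.powersetCard k, Outcome h Z with hE
  set E' : Finset (Fin d → V →ₗ[ZMod 2] R) := univ.filter fun h => HitsPopular X (ρ ^ 4) h with hE'
  have hsub : (univ.filter fun h : Fin d → V →ₗ[ZMod 2] R =>
      ∃ S ⊆ X, S.card ≤ m ∧ nv h S + S.card + 1 ≤ d * S.card) ⊆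
      ((range (m + 1)).biUnion E) ∪ E' := by
    intro h hh
    obtain ⟨-, S, hS, hSm, hd⟩ := mem_filter.1 hh
    obtain ⟨Z, hZ, hO⟩ := exists_outcome (fun x hx => hp x (hS hx)) hd
    rw [mem_union]
    by_cases h1 : h ∈ E'
    · exact Or.inr h1
    · left
      refine mem_biUnion.2 ⟨Z.card, mem_range.2 (by have := card_le_card hZ; omega),
        mem_filter.2 ⟨mem_univ _, fun v hv hv0 j hj => h1 (mem_filter.2
          ⟨mem_univ _, v, hv, hv0, j, hj⟩), Z, mem_powersetCard.2 ⟨hZ.trans hS, rfl⟩, hO⟩⟩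
  have h1 : ((univ.filter fun h : Fin d → V →ₗ[ZMod 2] R =>
      ∃ S ⊆ X, S.card ≤ m ∧ nv h S + S.card + 1 ≤ d * S.card).card : ℝ) ≤
      (∑ k ∈ range (m + 1), ((E k).card : ℝ)) + E'.card := by
    have h2 := (card_le_card hsub).trans ((card_union_le _ _).trans
      (add_le_add card_biUnion_le le_rfl))
    exact_mod_cast h2
  refine (mul_le_mul_of_nonneg_right h1 (by positivity)).trans ?_
  rw [totBound, add_mul, add_mul, sum_mul, sum_mul]
  refine add_le_add (sum_le_sum fun k _ => ?_)
    (popular_prob_le hρ hD one_le_kap hX (hB 4) hR)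
  refine (outcome_prob_le hρ hD one_le_kap one_le_kap hX (hB k) (hB 4) hR).trans (le_of_eq ?_)
  ring

end Union

/-! ### Asymptotics -/

section Asymptotics

open Finset

/-- Functions of growth at most `2 ^ O(m²)`. -/
def Tame (f : ℕ → ℝ) : Prop := (∀ m, 0 ≤ f m) ∧ ∃ β : ℕ, ∀ m, f m ≤ 2 ^ (β * (m + 1) ^ 2)

lemma Tame.of_le {f g : ℕ → ℝ} (hg : Tame g) (h0 : ∀ m, 0 ≤ f m) (h : ∀ m, f m ≤ g m) : Tame f :=
  ⟨h0, hg.2.imp fun _ hβ m => (h m).trans (hβ m)⟩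

lemma tame_two_pow {e : ℕ → ℕ} (β : ℕ) (h : ∀ m, e m ≤ β * (m + 1) ^ 2) :
    Tame fun m => 2 ^ e m :=
  ⟨fun _ => by positivity, β, fun m => pow_le_pow_right₀ one_le_two (h m)⟩

lemma exists_le_two_pow (a : ℝ) : ∃ β : ℕ, a ≤ 2 ^ β :=
  (pow_unbounded_of_one_lt a one_lt_two).imp fun _ h => h.le

lemma tame_const {a : ℝ} (ha : 0 ≤ a) : Tame fun _ => a := by
  obtain ⟨β, hβ⟩ := exists_le_two_pow a
  exact (tame_two_pow (e := fun _ => β) β fun m => Nat.le_mul_of_pos_right _ (by positivity)).of_le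
    (fun _ => ha) fun _ => hβ

lemma tame_exp {a : ℝ} (ha : 0 ≤ a) : Tame fun m => a ^ m := by
  obtain ⟨β, hβ⟩ := exists_le_two_pow a
  refine (tame_two_pow (e := fun m => β * m) β fun m => Nat.mul_le_mul_left _ (by nlinarith)).of_le
    (fun _ => by positivity) fun m => ?_
  rw [pow_mul]
  exact pow_le_pow_left₀ ha hβ m

lemma Tame.mul {f g : ℕ → ℝ} (hf : Tame f) (hg : Tame g) : Tame fun m => f m * g m := by
  obtain ⟨hf0, β, hβ⟩ := hf
  obtain ⟨hg0, γ, hγ⟩ := hg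
  refine ⟨fun m => mul_nonneg (hf0 m) (hg0 m), β + γ, fun m => ?_⟩
  rw [add_mul, pow_add]
  exact mul_le_mul (hβ m) (hγ m) (hg0 m) (by positivity)

lemma Tame.add {f g : ℕ → ℝ} (hf : Tame f) (hg : Tame g) : Tame fun m => f m + g m := by
  have h2 := (tame_const zero_le_two).mul (f := fun _ => 2)
    ((hf.mul hg).mul (f := fun m => f m * g m) (tame_const zero_le_one))
  obtain ⟨hf0, β, hβ⟩ := hf
  obtain ⟨hg0, γ, hγ⟩ := hg
  refine ⟨fun m => add_nonneg (hf0 m) (hg0 m), β + γ + 1, fun m => ?_⟩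
  have h1 : f m ≤ 2 ^ ((β + γ) * (m + 1) ^ 2) :=
    (hβ m).trans (pow_le_pow_right₀ one_le_two (Nat.mul_le_mul_right _ (by omega)))
  have h2 : g m ≤ 2 ^ ((β + γ) * (m + 1) ^ 2) :=
    (hγ m).trans (pow_le_pow_right₀ one_le_two (Nat.mul_le_mul_right _ (by omega)))
  have h3 : (2 : ℝ) ^ 1 ≤ 2 ^ (1 * (m + 1) ^ 2) :=
    pow_le_pow_right₀ one_le_two (Nat.le_mul_of_pos_right _ (by positivity))
  rw [add_mul _ 1, pow_add]
  have h4 : (0 : ℝ) < 2 ^ ((β + γ) * (m + 1) ^ 2) := by positivity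
  nlinarith

lemma Tame.pow {f : ℕ → ℝ} (hf : Tame f) (r : ℕ) : Tame fun m => f m ^ r := by
  induction r with
  | zero => simpa using tame_const zero_le_one
  | succ r ih => simpa only [pow_succ] using ih.mul hf

lemma tame_id : Tame fun m => (m : ℝ) :=
  (tame_exp zero_le_two).of_le (fun _ => by positivity) fun m => by
    exact_mod_cast Nat.lt_two_pow_self.le

lemma Tame.sum {f : ℕ → ℝ} (hf : Tame f) : Tame fun m => ∑ k ∈ range (m + 1), f k := by
  obtain ⟨hf0, β, hβ⟩ := hf
  refine ((tame_id.add (tame_const zero_le_one)).mul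
    (tame_two_pow (e := fun m => β * (m + 1) ^ 2) β fun m => le_rfl)).of_le
    (fun m => sum_nonneg fun k _ => hf0 k) fun m => ?_
  refine (sum_le_card_nsmul _ _ (2 ^ (β * (m + 1) ^ 2)) fun k hk => (hβ k).trans ?_).trans
    (le_of_eq ?_)
  · have hk := mem_range.1 hk
    exact pow_le_pow_right₀ one_le_two (by gcongr; omega)
  · rw [card_range, nsmul_eq_mul]; push_cast; rfl

lemma tame_kap (c : ℕ) : Tame (kap c) := by
  refine (tame_two_pow (e := fun m => 2 * m * (2 * m) * c) (4 * c) fun m => ?_).of_le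
    (fun m => kap_nonneg c m) fun m => ?_
  · have : m * m ≤ (m + 1) ^ 2 := by nlinarith
    calc 2 * m * (2 * m) * c = 4 * c * (m * m) := by ring
      _ ≤ _ := Nat.mul_le_mul_left _ this
  · unfold kap
    rw [pow_mul _ (2 * m * (2 * m)) c, pow_mul _ (2 * m) (2 * m)]
    have h1 : (2 * m : ℝ) ≤ 2 ^ (2 * m) := by
      have := (Nat.lt_two_pow_self (n := 2 * m)).le
      exact_mod_cast this
    gcongr

lemma tame_totBound (c d : ℕ) {D : ℝ} (hD : 0 ≤ D) : Tame (totBound c d D) := by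
  have h1 : Tame fun k : ℕ => (2 : ℝ) ^ (k * d * (k + 1)) :=
    tame_two_pow d fun m => by nlinarith [Nat.zero_le d, Nat.zero_le (d * m)]
  have h2 : Tame fun k => clsBound D (kap c k) (kap c 4) k := by
    unfold clsBound
    exact (((((tame_const zero_le_two).mul (tame_exp (by norm_num))).mul
      ((tame_id.add (tame_const zero_le_one)).pow 6)).mul ((tame_kap c).pow 2)).mul
      (tame_const (kap_nonneg c 4))).mul (tame_exp hD)
  have h3 := ((tame_id.add (tame_const zero_le_three)).mul (h2.mul h1)).sum
  exact h3.add (tame_const (mul_nonneg (mul_nonneg (kap_nonneg c 4) (sq_nonneg D))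
    (Nat.cast_nonneg d)))

open Filter Asymptotics in
lemma Tame.eventually_le {f : ℕ → ℝ} (hf : Tame f) {α δ : ℝ} (hα : 0 < α) (hδ : 0 < δ) :
    ∃ y₀ : ℝ, ∀ y, y₀ ≤ y → f ⌊α * Real.logb 2 y⌋₊ ≤ 2 ^ (δ * y) := by
  obtain ⟨hf0, β, hβ⟩ := hf
  set e := α / Real.log 2 with he
  have hl2 : 0 < Real.log 2 := Real.log_pos one_lt_two
  have h1 : (fun y => β * e ^ 2 * Real.log y ^ 2 + (2 * β * e * Real.log y ^ 1 +
      β * Real.log y ^ 0)) =o[atTop] (id : ℝ → ℝ) :=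
    (Real.isLittleO_pow_log_id_atTop.const_mul_left _).add
      ((Real.isLittleO_pow_log_id_atTop.const_mul_left _).add
        (Real.isLittleO_pow_log_id_atTop.const_mul_left _))
  obtain ⟨y₀, hy₀⟩ := eventually_atTop.1 ((h1.def hδ).and (eventually_ge_atTop 1))
  refine ⟨y₀, fun y hy => ?_⟩
  obtain ⟨h2, h3⟩ := hy₀ y hy
  simp only [id, Real.norm_eq_abs] at h2
  rw [abs_of_nonneg (by linarith : 0 ≤ y)] at h2
  have h4 := (le_abs_self _).trans h2
  refine (hβ _).trans ?_
  rw [← Real.rpow_natCast]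
  refine Real.rpow_le_rpow_of_exponent_le one_le_two ?_
  push_cast
  have h5 : 0 ≤ α * Real.logb 2 y := mul_nonneg hα.le (Real.logb_nonneg one_lt_two h3)
  have h6 : (⌊α * Real.logb 2 y⌋₊ : ℝ) ≤ α * Real.logb 2 y := Nat.floor_le h5
  have h7 : α * Real.logb 2 y = e * Real.log y := by
    rw [he, Real.logb]; field_simp
  rw [h7] at h6 h5
  calc (β : ℝ) * ((⌊α * Real.logb 2 y⌋₊ : ℝ) + 1) ^ 2 ≤ β * (e * Real.log y + 1) ^ 2 := by
        rw [h7]; gcongr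
    _ = _ := by ring
    _ ≤ _ := h4

end Asymptotics

/-! ### Simple tabulation as a random linear map -/

section Tables

set_option linter.unusedSectionVars false

open Finset

variable {A : Type*} [Fintype A] [DecidableEq A] {b c d : ℕ}

/-- The coordinate functional at the position character `(i, a)`. -/
def charAt (i : Fin c) (a : A) : (Fin c → A → ZMod 2) →ₗ[ZMod 2] ZMod 2 :=
  (LinearMap.proj a : (A → ZMod 2) →ₗ[ZMod 2] ZMod 2) ∘ₗ LinearMap.proj i

/-- The linear map on indicator vectors of position characters given by a table. -/
def tabMap (t : Fin c → A → Fin b → ZMod 2) : (Fin c → A → ZMod 2) →ₗ[ZMod 2] (Fin b → ZMod 2) :=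
  ∑ i, ∑ a, (charAt i a).smulRight (t i a)

lemma tabMap_apply (t : Fin c → A → Fin b → ZMod 2) (w : Fin c → A → ZMod 2) :
    tabMap t w = ∑ i, ∑ a, w i a • t i a := by
  simp [tabMap, charAt]

lemma tabMap_vec (t : Fin c → A → Fin b → ZMod 2) (x : Fin c → A) :
    tabMap t (vec x) = simpleTab t x := by
  rw [tabMap_apply, simpleTab]
  refine sum_congr rfl fun i _ => ?_
  simp [vec]

lemma tabMap_injective :
    Function.Injective (tabMap : (Fin c → A → Fin b → ZMod 2) → _) := by
  intro t t' h
  funext i a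
  have key : ∀ t : Fin c → A → Fin b → ZMod 2, tabMap t (Pi.single i (Pi.single a 1)) = t i a := by
    intro t
    rw [tabMap_apply, sum_eq_single i (fun j _ hj => by simp [hj]) (by simp),
      sum_eq_single a (fun j _ hj => by simp [hj]) (by simp)]
    simp
  rw [← key t, ← key t', h]

lemma card_maps_le [Fintype ((Fin c → A → ZMod 2) →ₗ[ZMod 2] (Fin b → ZMod 2))] :
    Fintype.card (Fin d → (Fin c → A → ZMod 2) →ₗ[ZMod 2] (Fin b → ZMod 2)) ≤
      Fintype.card (Fin d → Fin c → A → (Fin b → ZMod 2)) := by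
  refine Fintype.card_le_of_injective
    (fun h j i a => h j (Pi.single i (Pi.single a 1))) fun h h' hh => ?_
  funext j
  refine LinearMap.pi_ext' fun i => LinearMap.pi_ext' fun a => LinearMap.ext_ring ?_
  exact congrFun (congrFun (congrFun hh j) i) a

/-- In the statement vertices are pairs (value, index of the function), in `nv` they are counted
separately for each function. -/
lemma nv_le (T : Fin d → Fin c → A → (Fin b → ZMod 2)) (S : Finset (Fin c → A)) :
    nv (fun j => tabMap (T j)) (S.image vec) ≤
      (S.biUnion fun x => univ.image fun j : Fin d => (simpleTab (T j) x, j)).card := by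
  unfold nv
  rw [← card_sigma]
  refine card_le_card_of_injOn (fun s => (s.2, s.1)) ?_ ?_
  · rintro ⟨j, y⟩ hs
    simp only [coe_sigma, Set.mem_sigma_iff, mem_coe, mem_univ, true_and, mem_image] at hs
    obtain ⟨-, ⟨x, hx, rfl⟩, rfl⟩ := hs
    rw [mem_coe, mem_biUnion]
    exact ⟨x, hx, mem_image.2 ⟨j, mem_univ _, by simp [tabMap_vec]⟩⟩
  · rintro ⟨j, y⟩ - ⟨j', y'⟩ - h
    simp only [Prod.mk.injEq] at h
    obtain ⟨rfl, rfl⟩ := h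
    rfl

/-- Every key has exactly one character at position `i`. -/
lemma exists_parity (i : Fin c) : ∃ p : (Fin c → A → ZMod 2) →ₗ[ZMod 2] ZMod 2,
    ∀ x : Fin c → A, p (vec x) = 1 := by
  refine ⟨∑ a, charAt i a, fun x => ?_⟩
  simp [charAt, vec]

end Tables

/-! ### The probability of an obstruction -/

open scoped Classical in
/-- The bound for a single table size, before the asymptotic estimate of `totBound`. -/
lemma tables_prob_le {d c b m : ℕ} (hd : 2 ≤ d) (hc : 1 ≤ c) {A : Type*} [Fintype A]
    [DecidableEq A] {X : Finset (Fin c → A)} {D : ℝ} (hD : 1 ≤ D) (hX : (X.card : ℝ) ≤ D * 2 ^ b) :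
    ((Finset.univ.filter fun T : Fin d → Fin c → A → (Fin b → ZMod 2) =>
        ∃ S ⊆ X, S.card ≤ m ∧ (S.biUnion fun x => Finset.univ.image fun j : Fin d =>
          (simpleTab (T j) x, j)).card + 1 ≤ (d - 1) * S.card).card : ℝ) * (2 ^ b) ^ (1 / 3 : ℝ) ≤
      totBound c d D m * Fintype.card (Fin d → Fin c → A → (Fin b → ZMod 2)) := by
  have : Fintype ((Fin c → A → ZMod 2) →ₗ[ZMod 2] (Fin b → ZMod 2)) :=
    @Fintype.ofFinite _ (DFunLike.finite _)
  obtain ⟨p, hp⟩ := exists_parity (A := A) (⟨0, hc⟩ : Fin c)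
  set ρ : ℝ := ((2 : ℝ) ^ b) ^ (1 / 6 : ℝ) with hρ
  have h2b : (1 : ℝ) ≤ 2 ^ b := one_le_pow₀ one_le_two
  have hρ6 : ρ ^ 6 = 2 ^ b := by
    rw [hρ, ← Real.rpow_natCast, ← Real.rpow_mul (by positivity)]; norm_num
  have hρ2 : ρ ^ 2 = (2 ^ b) ^ (1 / 3 : ℝ) := by
    rw [hρ, ← Real.rpow_natCast, ← Real.rpow_mul (by positivity)]; norm_num
  have hρ1 : 1 ≤ ρ := Real.one_le_rpow h2b (by norm_num)
  have h0 : 0 ≤ totBound c d D m := (tame_totBound c d (zero_le_one.trans hD)).1 m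
  have hR : (Fintype.card (Fin b → ZMod 2) : ℝ) = ρ ^ 6 := by
    rw [hρ6]; simp
  have key := bad_prob_le (d := d) (m := m) hρ1 hD (X := X.image vec)
    ((Nat.cast_le.2 Finset.card_image_le).trans (by rwa [hρ6])) (sumBound_keys X) hR
    (p := p) (by
      intro x hx
      obtain ⟨y, -, rfl⟩ := Finset.mem_image.1 hx
      exact hp y)
  rw [hρ2] at key
  refine le_trans ?_ (key.trans (mul_le_mul_of_nonneg_left (Nat.cast_le.2 card_maps_le) h0))
  refine mul_le_mul_of_nonneg_right (Nat.cast_le.2 ?_) (by positivity)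
  refine Finset.card_le_card_of_injOn (fun T j => tabMap (T j)) ?_ ?_
  · intro T hT
    obtain ⟨S, hS, hSm, hSb⟩ := (Finset.mem_filter.1 hT).2
    have hcard : (S.image vec).card = S.card := Finset.card_image_of_injective _ vec_injective
    refine Finset.mem_coe.2 (Finset.mem_filter.2 ⟨Finset.mem_univ _, S.image vec,
      Finset.image_subset_image hS, hcard ▸ hSm, ?_⟩)
    have h1 := nv_le T S
    rw [hcard]
    have h2 : (d - 1) * S.card + S.card = d * S.card := by
      obtain ⟨e, rfl⟩ : ∃ e, d = e + 1 := ⟨d - 1, by omega⟩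
      simp; ring
    change nv (fun j => tabMap (T j)) (S.image vec) + S.card + 1 ≤ d * S.card
    omega
  · intro T _ T' _ h
    exact funext fun j => tabMap_injective (congrFun h j)

theorem stmt3 (d c : ℕ) (hd : 2 ≤ d) (hc : 1 ≤ c) (C α : ℝ) (hC : 0 < C) (hα : 0 < α)
    (δ : ℝ) (hδ : 0 < δ) :
    ∃ n₀ : ℕ, ∀ b : ℕ, 1 ≤ b → ∀ (A : Type) [Fintype A] [DecidableEq A],
      ∀ X : Finset (Fin c → A),
        n₀ ≤ d * 2 ^ b → (X.card : ℝ) ≤ C * ((d : ℝ) * 2 ^ b) →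
        (Nat.card {T : Fin d → Fin c → A → (Fin b → ZMod 2) //
            ∃ S ⊆ X, (S.card : ℝ) ≤ α * Real.logb 2 (Real.logb 2 ((d : ℝ) * 2 ^ b)) ∧
              (S.biUnion fun x => Finset.univ.image fun j : Fin d =>
                  (simpleTab (T j) x, j)).card + 1 ≤ (d - 1) * S.card} : ℝ) /
          (Fintype.card (Fin d → Fin c → A → (Fin b → ZMod 2)) : ℝ) ≤
        ((d : ℝ) * 2 ^ b) ^ (-(1 / 3 : ℝ) + δ) := by
  classical
  have hd1 : (1 : ℝ) ≤ d := by exact_mod_cast (by omega : 1 ≤ d)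
  set D : ℝ := max 1 (C * d) with hDdef
  have hD : 1 ≤ D := le_max_left _ _
  -- The factor `d` absorbs the passage from `g = 2 ^ b` to `n = d * g`.
  obtain ⟨y₀, hy₀⟩ := ((tame_const (Nat.cast_nonneg d)).mul
    (tame_totBound c d (zero_le_one.trans hD))).eventually_le hα hδ
  refine ⟨⌈(2 : ℝ) ^ y₀⌉₊, fun b _ A _ _ X hn hX => ?_⟩
  set n : ℝ := (d : ℝ) * 2 ^ b with hndef
  have hb0 : (0 : ℝ) < 2 ^ b := by positivity
  have hn0 : 0 < n := by positivity
  have hny : (2 : ℝ) ^ y₀ ≤ n := by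
    refine (Nat.le_ceil _).trans ?_
    rw [hndef]
    exact_mod_cast hn
  set m := ⌊α * Real.logb 2 (Real.logb 2 n)⌋₊ with hm
  have hT := hy₀ (Real.logb 2 n) ((Real.le_logb_iff_rpow_le one_lt_two hn0).2 hny)
  rw [← hm, mul_comm δ, Real.rpow_mul zero_le_two,
    Real.rpow_logb zero_lt_two (by norm_num) hn0] at hT
  have hmain := tables_prob_le (m := m) (b := b) hd hc hD (X := X) (hX.trans (by
    rw [hndef, ← mul_assoc]
    exact mul_le_mul_of_nonneg_right (le_max_right _ _) hb0.le))
  rw [Nat.card_eq_fintype_card, Fintype.card_subtype]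
  have hN : (0 : ℝ) < Fintype.card (Fin d → Fin c → A → (Fin b → ZMod 2)) :=
    Nat.cast_pos.2 Fintype.card_pos
  rw [div_le_iff₀ hN, Real.rpow_add hn0, Real.rpow_neg hn0.le]
  have hn3 : 0 < n ^ (1 / 3 : ℝ) := Real.rpow_pos_of_pos hn0 _
  rw [mul_assoc, inv_mul_eq_div, le_div_iff₀ hn3]
  have hsplit : n ^ (1 / 3 : ℝ) ≤ d * (2 ^ b) ^ (1 / 3 : ℝ) := by
    rw [hndef, Real.mul_rpow (by positivity) hb0.le]
    refine mul_le_mul_of_nonneg_right ?_ (by positivity)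
    calc (d : ℝ) ^ (1 / 3 : ℝ) ≤ (d : ℝ) ^ (1 : ℝ) :=
          Real.rpow_le_rpow_of_exponent_le hd1 (by norm_num)
      _ = d := Real.rpow_one _
  refine (mul_le_mul (Nat.cast_le.2 (Finset.card_le_card
    (t := Finset.univ.filter fun T : Fin d → Fin c → A → (Fin b → ZMod 2) =>
      ∃ S ⊆ X, S.card ≤ m ∧ (S.biUnion fun x => Finset.univ.image fun j : Fin d =>
        (simpleTab (T j) x, j)).card + 1 ≤ (d - 1) * S.card) ?_)) hsplit hn3.le
    (Nat.cast_nonneg _)).trans ?_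
  · intro T hT
    obtain ⟨S, hS, hSm, hSb⟩ := (Finset.mem_filter.1 hT).2
    exact Finset.mem_filter.2 ⟨Finset.mem_univ _, S, hS, Nat.le_floor hSm, hSb⟩
  · rw [mul_left_comm]
    refine (mul_le_mul_of_nonneg_left ?_ (Nat.cast_nonneg d)).trans
      ((mul_assoc _ _ _).symm.le.trans (mul_le_mul_of_nonneg_right hT hN.le))
    convert hmain
end

section
/- Let h : Σ^c → F₂^b be a random simple tabulation hash function and let x_1,…,x_k ∈ Σ^c be distinct keys. Then the random variables h(x_1),…,h(x_k) fail to be mutually independent if and only if there exists a nonempty subset I ⊆ {1,…,k} such that x_{i}, i ∈ I, satisfy ⊕_{i∈I} x_i = ∅ (every position character appears an even number of times among (x_i)_{i∈I}). Moreover, for any such I one has ⊕_{i∈I} h(x_i) = 0 for every realization of the random tables. -/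
/-- A key `x : Fin c → A` viewed as a vector of the `F₂`-vector space indexed by
position characters `Fin c × A`. -/
def keyVec {c : ℕ} {A : Type*} [DecidableEq A] (x : Fin c → A) : Fin c × A → ZMod 2 :=
  fun p => if x p.1 = p.2 then 1 else 0

/-- The fibres of a surjective homomorphism of finite groups all have cardinality `|G| / |H|`. -/
theorem card_fiber_mul {G H : Type*} [AddCommGroup G] [AddCommGroup H] [Finite G] [Finite H]
    (f : G →+ H) (hf : Function.Surjective f) (v : H) :
    Nat.card {g : G // f g = v} * Nat.card H = Nat.card G := by
  have e : {g : G // f g = v} ≃ f.ker := f.fiberEquivKerOfSurjective hf v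
  rw [Nat.card_congr e, ← AddSubgroup.card_mul_index f.ker, AddSubgroup.index_ker,
    AddMonoidHom.range_eq_top.2 hf, AddSubgroup.card_top]

/-- A hash bit is obtained by pairing the key vector with the corresponding bit of the tables. -/
theorem simpleTab_apply {c b : ℕ} {A : Type*} [Fintype A] [DecidableEq A]
    (T : Fin c → A → Fin b → ZMod 2) (x : Fin c → A) (j : Fin b) :
    simpleTab T x j = ∑ p : Fin c × A, keyVec x p * T p.1 p.2 j := by
  simp [simpleTab, keyVec, Fintype.sum_prod_type]

theorem sum_simpleTab_eq_zero {c b : ℕ} {A ι : Type*} [Fintype A] [DecidableEq A]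
    (x : ι → Fin c → A) (I : Finset ι) (hI : ∑ i ∈ I, keyVec (x i) = 0)
    (T : Fin c → A → Fin b → ZMod 2) : ∑ i ∈ I, simpleTab T (x i) = 0 := by
  ext j
  simp only [Finset.sum_apply, simpleTab_apply, Pi.zero_apply]
  rw [Finset.sum_comm]
  refine Finset.sum_eq_zero fun p _ => ?_
  have h := congrFun hI p
  rw [Finset.sum_apply] at h
  rw [← Finset.sum_mul, h, Pi.zero_apply, zero_mul]

/-- The hash values of a family of keys, as a homomorphism in the tables. -/
def jointHash {c b : ℕ} {A ι : Type*} (x : ι → Fin c → A) :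
    (Fin c → A → Fin b → ZMod 2) →+ (ι → Fin b → ZMod 2) where
  toFun T i := simpleTab T (x i)
  map_zero' := by ext; simp [simpleTab]
  map_add' S T := by ext; simp [simpleTab, Finset.sum_add_distrib]

theorem jointHash_apply {c b : ℕ} {A ι : Type*} (x : ι → Fin c → A)
    (T : Fin c → A → Fin b → ZMod 2) (i : ι) : jointHash x T i = simpleTab T (x i) := rfl

/-- The hash value of a single key, as a homomorphism in the tables. -/
def singleHash {c b : ℕ} {A : Type*} (x : Fin c → A) :
    (Fin c → A → Fin b → ZMod 2) →+ (Fin b → ZMod 2) where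
  toFun T := simpleTab T x
  map_zero' := by ext; simp [simpleTab]
  map_add' S T := by ext; simp [simpleTab, Finset.sum_add_distrib]

theorem single_surjective {c b : ℕ} {A : Type*} (hc : 1 ≤ c) (x : Fin c → A) :
    Function.Surjective (singleHash (b := b) x) := by
  intro v
  refine ⟨fun i _ => if i = ⟨0, hc⟩ then v else 0, ?_⟩
  simp [singleHash, simpleTab]

/-- Over `F₂` a linear relation is determined by its support, so the absence of cancelling
sets of keys is linear independence of the key vectors. -/
theorem linearIndependent_keyVec {c k : ℕ} {A : Type*} [DecidableEq A]
    (x : Fin k → Fin c → A)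
    (h : ∀ I : Finset (Fin k), I.Nonempty → ∑ i ∈ I, keyVec (x i) ≠ 0) :
    LinearIndependent (ZMod 2) fun i => keyVec (x i) := by
  rw [Fintype.linearIndependent_iff]
  intro g hg
  by_contra! ⟨i₀, hi₀⟩
  refine h (Finset.univ.filter fun i => g i ≠ 0) ⟨i₀, by simpa using hi₀⟩ ?_
  rw [← hg, Finset.sum_filter]
  refine Finset.sum_congr rfl fun i _ => ?_
  have h01 : ∀ a : ZMod 2, a = 0 ∨ a = 1 := by decide
  rcases h01 (g i) with h0 | h1
  · simp [h0]
  · simp [h1]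

theorem joint_surjective {c b k : ℕ} {A : Type*} [Fintype A] [DecidableEq A]
    (x : Fin k → Fin c → A)
    (h : ∀ I : Finset (Fin k), I.Nonempty → ∑ i ∈ I, keyVec (x i) ≠ 0) :
    Function.Surjective (jointHash (b := b) x) := by
  intro v
  have hli := linearIndependent_keyVec x h
  obtain ⟨L, hL⟩ := LinearMap.exists_leftInverse_of_injective _
    (LinearMap.ker_eq_bot.2 (linearIndependent_iff_injective_fintypeLinearCombination.1 hli))
  -- `L` sends `keyVec (x i)` to the unit vector at `i`; composing with `w ↦ ∑ i, w i * v i j`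
  -- gives the functional for the bit `j`.
  have hLi : ∀ i, L (keyVec (x i)) = Pi.single i 1 := by
    intro i
    have h1 := LinearMap.congr_fun hL (Pi.single i 1)
    simpa [Fintype.linearCombination_apply_single] using h1
  refine ⟨fun i a j => ∑ l, L (Pi.single (i, a) 1) l * v l j, ?_⟩
  ext i j
  rw [jointHash_apply, simpleTab_apply]
  have key : ∑ p : Fin c × A, keyVec (x i) p • L (Pi.single p 1) = Pi.single i 1 := by
    rw [← hLi i]
    conv_rhs => rw [pi_eq_sum_univ' (keyVec (x i))]
    rw [map_sum]
    simp only [map_smul]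
  simp only [Finset.mul_sum]
  rw [Finset.sum_comm]
  have : ∀ l, ∑ p : Fin c × A, keyVec (x i) p * (L (Pi.single p 1) l * v l j)
      = (Pi.single i 1 : Fin k → ZMod 2) l * v l j := by
    intro l
    rw [← key, Finset.sum_apply, Finset.sum_mul]
    simp [mul_assoc]
  simp [this, Pi.single_apply]

theorem stmt4 (c b k : ℕ) (hc : 1 ≤ c) (hb : 1 ≤ b) (A : Type) [Fintype A] [DecidableEq A]
    (x : Fin k → Fin c → A) (hx : Function.Injective x) :
    ((¬ ∀ v : Fin k → Fin b → ZMod 2,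
        (Nat.card {T : Fin c → A → Fin b → ZMod 2 // ∀ i, simpleTab T (x i) = v i} : ℝ) /
            (Fintype.card (Fin c → A → Fin b → ZMod 2) : ℝ) =
          ∏ i : Fin k,
            (Nat.card {T : Fin c → A → Fin b → ZMod 2 // simpleTab T (x i) = v i} : ℝ) /
              (Fintype.card (Fin c → A → Fin b → ZMod 2) : ℝ)) ↔
      ∃ I : Finset (Fin k), I.Nonempty ∧ ∑ i ∈ I, keyVec (x i) = 0) ∧
    ∀ I : Finset (Fin k), ∑ i ∈ I, keyVec (x i) = 0 →
      ∀ T : Fin c → A → Fin b → ZMod 2, ∑ i ∈ I, simpleTab T (x i) = 0 := by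
  refine ⟨⟨?_, ?_⟩, fun I hI T => sum_simpleTab_eq_zero x I hI T⟩
  · intro hdep
    by_contra! hno
    refine hdep fun v => ?_
    have hJ := card_fiber_mul _ (joint_surjective (b := b) x hno) v
    have hJ' : Nat.card {T : Fin c → A → Fin b → ZMod 2 // ∀ i, simpleTab T (x i) = v i}
        = Nat.card {T // jointHash (b := b) x T = v} :=
      Nat.card_congr (Equiv.subtypeEquivRight fun T => funext_iff.symm)
    have hS : ∀ i, (Nat.card {T : Fin c → A → Fin b → ZMod 2 // simpleTab T (x i) = v i} : ℝ) /
        (Fintype.card (Fin c → A → Fin b → ZMod 2) : ℝ) = ((2 : ℝ) ^ b)⁻¹ := by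
      intro i
      have h : Nat.card {T : Fin c → A → Fin b → ZMod 2 // simpleTab T (x i) = v i} * _ = _ :=
        card_fiber_mul _ (single_surjective (b := b) hc (x i)) (v i)
      rw [← Nat.card_eq_fintype_card, ← h]
      have hpos : 0 < Nat.card {T : Fin c → A → Fin b → ZMod 2 // simpleTab T (x i) = v i} :=
        Nat.pos_of_mul_pos_right (h ▸ Nat.card_pos)
      push_cast
      rw [div_mul_cancel_left₀ (by exact_mod_cast hpos.ne')]
      simp
    rw [Finset.prod_congr rfl fun i _ => hS i, hJ', ← Nat.card_eq_fintype_card, ← hJ]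
    have hpos : 0 < Nat.card {T // jointHash (b := b) x T = v} :=
      Nat.pos_of_mul_pos_right (hJ ▸ Nat.card_pos)
    push_cast
    rw [div_mul_cancel_left₀ (by exact_mod_cast hpos.ne')]
    simp
  · rintro ⟨I, ⟨i₀, hi₀⟩, hI⟩ hind
    -- Every value `v` would be attained by the joint hash, since each factor is positive.
    have hsurj : ∀ v : Fin k → Fin b → ZMod 2,
        ∃ T : Fin c → A → Fin b → ZMod 2, ∀ i, simpleTab T (x i) = v i := by
      intro v
      by_contra! hv
      have h0 : Nat.card {T : Fin c → A → Fin b → ZMod 2 // ∀ i, simpleTab T (x i) = v i} = 0 := by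
        rw [Nat.card_eq_zero]
        exact Or.inl ⟨fun ⟨T, hT⟩ => let ⟨i, hi⟩ := hv T; hi (hT i)⟩
      have h := hind v
      rw [h0, Nat.cast_zero, zero_div] at h
      refine (Finset.prod_pos fun i _ => ?_).ne h
      have : Nonempty {T : Fin c → A → Fin b → ZMod 2 // simpleTab T (x i) = v i} := by
        obtain ⟨T, hT⟩ := single_surjective hc (x i) (v i)
        exact ⟨⟨T, hT⟩⟩
      have h1 : 0 < Nat.card {T : Fin c → A → Fin b → ZMod 2 // simpleTab T (x i) = v i} :=
        Nat.card_pos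
      have h2 : 0 < Fintype.card (Fin c → A → Fin b → ZMod 2) := Fintype.card_pos
      positivity
    obtain ⟨T, hT⟩ := hsurj (Pi.single i₀ 1)
    have h := congrFun (sum_simpleTab_eq_zero x I hI T) ⟨0, hb⟩
    simp only [hT] at h
    have h' : ∑ i ∈ I, (Pi.single i₀ 1 : Fin k → Fin b → ZMod 2) i = 1 := by
      simp [Pi.single_apply, hi₀]
    rw [h'] at h
    exact one_ne_zero h
end

section
/- Let c ≥ 1 and t ≥ 1 be integers, Σ a finite alphabet, and A_1,…,A_{2t} ⊆ Σ^c finite sets of keys. Then the number of 2t-tuples (x_1,…,x_{2t}) ∈ A_1 × ⋯ × A_{2t} such that x_1 ⊕ ⋯ ⊕ x_{2t} = ∅ is at most ((2t−1)!!)^c · ∏_{i=1}^{2t} √|A_i|, where (2t−1)!! = 1·3·5⋯(2t−1) denotes the double factorial. -/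
/-- Every character occurs an even number of times in the sequence `a`, expressed as the vanishing
over `F₂` of the sum of the corresponding basis vectors. -/
def Evenly {A : Type*} [DecidableEq A] {n : ℕ} (a : Fin n → A) : Prop :=
  ∑ i, (Pi.single (a i) 1 : A → ZMod 2) = 0

lemma evenly_cons_insertNth {A : Type*} [DecidableEq A] {n : ℕ} (k : Fin (n + 1)) (α : A)
    (d : Fin n → A) :
    Evenly (Fin.cons α (k.insertNth α d : Fin (n + 1) → A) : Fin (n + 2) → A) ↔ Evenly d := by
  unfold Evenly
  rw [Fin.sum_univ_succ, Fin.sum_univ_succAbove _ k]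
  simp only [Fin.cons_zero, Fin.cons_succ, Fin.insertNth_apply_same,
    Fin.insertNth_apply_succAbove]
  have h2 : (Pi.single α 1 + Pi.single α 1 : A → ZMod 2) = 0 :=
    funext fun _ => CharTwo.add_self_eq_zero _
  rw [← add_assoc, h2, zero_add]

lemma Evenly.exists_eq {A : Type*} [DecidableEq A] {n : ℕ} {α : A} {b : Fin n → A}
    (h : Evenly (Fin.cons α b : Fin (n + 1) → A)) : ∃ k, b k = α := by
  by_contra! hne
  have := congrFun h α
  rw [Fin.sum_univ_succ] at this
  simp only [Fin.cons_zero, Fin.cons_succ, Pi.add_apply, Finset.sum_apply, Pi.single_eq_same,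
    Pi.zero_apply] at this
  rw [Finset.sum_eq_zero (fun i _ => Pi.single_eq_of_ne (hne i).symm _)] at this
  simp at this

open scoped Classical in
/-- The one-coordinate inequality: the weighted count of sequences of length `2t` in which every
character occurs an even number of times. -/
lemma sum_evenly_le {A : Type*} [Fintype A] [DecidableEq A] (t : ℕ) :
    ∀ g : Fin (2 * t) → A → ℝ, (∀ i α, 0 ≤ g i α) →
      ∑ a : Fin (2 * t) → A, (if Evenly a then ∏ i, g i (a i) else 0) ≤
        (Nat.doubleFactorial (2 * t - 1) : ℝ) * ∏ i, √(∑ α, g i α ^ 2) := by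
  induction t with
  | zero =>
    intro g hg
    change ∑ a : Fin 0 → A, _ ≤ _
    simp [Evenly]
  | succ t ih =>
    intro g hg
    change Fin (2 * t + 2) → A → ℝ at g
    change ∀ (i : Fin (2 * t + 2)) α, 0 ≤ g i α at hg
    change ∑ a : Fin (2 * t + 2) → A, (if Evenly a then ∏ i, g i (a i) else 0) ≤
        (Nat.doubleFactorial (2 * t + 1) : ℝ) * ∏ i : Fin (2 * t + 2), √(∑ α, g i α ^ 2)
    have hdf : (Nat.doubleFactorial (2 * t + 1) : ℝ) =
        (2 * t + 1) * Nat.doubleFactorial (2 * t - 1) := by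
      cases t with
      | zero => simp
      | succ s =>
        rw [show 2 * (s + 1) + 1 = (2 * (s + 1) - 1) + 2 by omega, Nat.doubleFactorial_add_two]
        rw [show 2 * (s + 1) - 1 + 2 = 2 * (s + 1) + 1 by omega]
        push_cast
        ring
    set N : Fin (2 * t + 2) → ℝ := fun i => √(∑ α, g i α ^ 2) with hN
    have key : ∀ (α : A) (b : Fin (2 * t + 1) → A),
        (if Evenly (Fin.cons α b : Fin (2 * t + 2) → A) then
          ∏ i, g i ((Fin.cons α b : Fin (2 * t + 2) → A) i) else 0) ≤
        ∑ k : Fin (2 * t + 1), if b k = α then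
          (if Evenly (fun j => b (k.succAbove j)) then
            g 0 α * g k.succ α * ∏ j, g (k.succAbove j).succ (b (k.succAbove j)) else 0)
          else 0 := by
      intro α b
      have hnn : ∀ k : Fin (2 * t + 1), 0 ≤ if b k = α then
          (if Evenly (fun j => b (k.succAbove j)) then
            g 0 α * g k.succ α * ∏ j, g (k.succAbove j).succ (b (k.succAbove j)) else 0)
          else 0 := by
        intro k
        split_ifs
        · exact mul_nonneg (mul_nonneg (hg _ _) (hg _ _)) (Finset.prod_nonneg fun _ _ => hg _ _)
        · rfl
        · rfl
      split_ifs with hE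
      · obtain ⟨k, hk⟩ := hE.exists_eq
        refine le_trans (le_of_eq ?_)
          (Finset.single_le_sum (fun k _ => hnn k) (Finset.mem_univ k))
        have hb : b = (k.insertNth α (fun j => b (k.succAbove j)) : Fin (2 * t + 1) → A) := by
          rw [Fin.eq_insertNth_iff]
          exact ⟨hk, rfl⟩
        have hE' : Evenly (fun j => b (k.succAbove j)) := by
          rw [hb] at hE
          exact (evenly_cons_insertNth k α _).1 hE
        rw [if_pos hk, if_pos hE', Fin.prod_univ_succ]
        simp only [Fin.cons_zero, Fin.cons_succ]
        rw [Fin.prod_univ_succAbove _ k, hk, mul_assoc]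
      · exact Finset.sum_nonneg fun k _ => hnn k
    have step : ∀ k : Fin (2 * t + 1),
        ∑ α : A, ∑ b : Fin (2 * t + 1) → A, (if b k = α then
          (if Evenly (fun j => b (k.succAbove j)) then
            g 0 α * g k.succ α * ∏ j, g (k.succAbove j).succ (b (k.succAbove j)) else 0)
          else 0) ≤ Nat.doubleFactorial (2 * t - 1) * ∏ i, N i := by
      intro k
      have e1 : ∀ α : A, ∑ b : Fin (2 * t + 1) → A, (if b k = α then
          (if Evenly (fun j => b (k.succAbove j)) then
            g 0 α * g k.succ α * ∏ j, g (k.succAbove j).succ (b (k.succAbove j)) else 0)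
          else 0) = (g 0 α * g k.succ α) * ∑ d : Fin (2 * t) → A,
            (if Evenly d then ∏ j, g (k.succAbove j).succ (d j) else 0) := by
        intro α
        rw [← (Fin.insertNthEquiv (fun _ => A) k).sum_comp, Fintype.sum_prod_type]
        simp only [Fin.insertNthEquiv_apply, Fin.insertNth_apply_same,
          Fin.insertNth_apply_succAbove, Finset.mul_sum, mul_ite, mul_zero]
        rw [Finset.sum_comm]
        simp
      simp only [e1]
      rw [← Finset.sum_mul, Fin.prod_univ_succ, Fin.prod_univ_succAbove _ k]
      have h1 : ∑ α, g 0 α * g k.succ α ≤ N 0 * N k.succ :=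
        Real.sum_mul_le_sqrt_mul_sqrt _ _ _
      have h2 := ih (fun j => g (k.succAbove j).succ) (fun _ _ => hg _ _)
      calc _ ≤ (N 0 * N k.succ) * (Nat.doubleFactorial (2 * t - 1) *
              ∏ j, N (k.succAbove j).succ) := by
            refine mul_le_mul h1 h2 (Finset.sum_nonneg fun d _ => ?_) (by positivity)
            split_ifs
            · exact Finset.prod_nonneg fun _ _ => hg _ _
            · rfl
        _ = _ := by ring
    rw [← (Fin.consEquiv (fun _ => A)).sum_comp, Fintype.sum_prod_type]
    calc _ ≤ ∑ α : A, ∑ b : Fin (2 * t + 1) → A, ∑ k : Fin (2 * t + 1), (if b k = α then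
          (if Evenly (fun j => b (k.succAbove j)) then
            g 0 α * g k.succ α * ∏ j, g (k.succAbove j).succ (b (k.succAbove j)) else 0)
          else 0) := Finset.sum_le_sum fun α _ => Finset.sum_le_sum fun b _ => key α b
      _ = ∑ k : Fin (2 * t + 1), ∑ α : A, ∑ b : Fin (2 * t + 1) → A, (if b k = α then
          (if Evenly (fun j => b (k.succAbove j)) then
            g 0 α * g k.succ α * ∏ j, g (k.succAbove j).succ (b (k.succAbove j)) else 0)
          else 0) := by
        rw [Finset.sum_comm (s := (Finset.univ : Finset (Fin (2 * t + 1))))]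
        exact Finset.sum_congr rfl fun α _ => Finset.sum_comm
      _ ≤ ∑ k : Fin (2 * t + 1), Nat.doubleFactorial (2 * t - 1) * ∏ i, N i :=
        Finset.sum_le_sum fun k _ => step k
      _ = _ := by
        rw [hdf]
        simp
        ring

open scoped Classical in
/-- The inequality for keys with `c` characters, with nonnegative weights in place of sets. -/
lemma sum_evenly_coords_le {A : Type*} [Fintype A] [DecidableEq A] (t c : ℕ) :
    ∀ f : Fin (2 * t) → (Fin c → A) → ℝ, (∀ i y, 0 ≤ f i y) →
      ∑ x : Fin (2 * t) → Fin c → A,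
        (if ∀ j, Evenly (fun i => x i j) then ∏ i, f i (x i) else 0) ≤
        (Nat.doubleFactorial (2 * t - 1) : ℝ) ^ c * ∏ i, √(∑ y, f i y ^ 2) := by
  induction c with
  | zero =>
    intro f hf
    simp [Real.sqrt_sq (hf _ _)]
  | succ c ih =>
    intro f hf
    set D : ℝ := (Nat.doubleFactorial (2 * t - 1) : ℝ) with hD
    set g : Fin (2 * t) → A → ℝ := fun i α => √(∑ y : Fin c → A, f i (Fin.cons α y) ^ 2) with hg
    let e : (Fin (2 * t) → A) × (Fin (2 * t) → Fin c → A) ≃ (Fin (2 * t) → Fin (c + 1) → A) :=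
      (Equiv.arrowProdEquivProdArrow _ _ _).symm.trans
        (Equiv.piCongrRight fun _ => Fin.consEquiv (fun _ => A))
    have he : ∀ a y i, e (a, y) i = Fin.cons (a i) (y i) := fun _ _ _ => rfl
    rw [← e.sum_comp, Fintype.sum_prod_type]
    have inner : ∀ a : Fin (2 * t) → A, ∑ y : Fin (2 * t) → Fin c → A,
        (if ∀ j, Evenly (fun i => e (a, y) i j) then ∏ i, f i (e (a, y) i) else 0) ≤
        D ^ c * if Evenly a then ∏ i, g i (a i) else 0 := by
      intro a
      simp only [he, Fin.forall_fin_succ, Fin.cons_zero, Fin.cons_succ]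
      by_cases ha : Evenly a
      · simpa [ha] using ih (fun i y => f i (Fin.cons (a i) y)) (fun _ _ => hf _ _)
      · simp [ha]
    have norm_g : ∀ i, ∑ α, g i α ^ 2 = ∑ y, f i y ^ 2 := by
      intro i
      rw [← (Fin.consEquiv (fun _ => A)).sum_comp, Fintype.sum_prod_type]
      refine Finset.sum_congr rfl fun α _ => ?_
      exact Real.sq_sqrt (Finset.sum_nonneg fun _ _ => sq_nonneg _)
    calc _ ≤ ∑ a, D ^ c * (if Evenly a then ∏ i, g i (a i) else 0) :=
          Finset.sum_le_sum fun a _ => inner a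
      _ ≤ D ^ c * (D * ∏ i, √(∑ α, g i α ^ 2)) := by
        rw [← Finset.mul_sum]
        exact mul_le_mul_of_nonneg_left
          (sum_evenly_le t g fun _ _ => Real.sqrt_nonneg _) (by positivity)
      _ = _ := by
        simp only [norm_g]
        ring

lemma sum_keyVec_eq_zero_iff {A : Type*} [DecidableEq A] {n c : ℕ} (x : Fin n → Fin c → A) :
    ∑ i, keyVec (x i) = 0 ↔ ∀ j, Evenly (fun i => x i j) := by
  simp only [Evenly, funext_iff, Prod.forall, Finset.sum_apply, keyVec, Pi.single_apply,
    Pi.zero_apply, eq_comm]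

theorem stmt5 (c t : ℕ) (hc : 1 ≤ c) (ht : 1 ≤ t) (A : Type) [Fintype A] [DecidableEq A]
    (S : Fin (2 * t) → Finset (Fin c → A)) :
    (Nat.card {x : Fin (2 * t) → Fin c → A //
        (∀ i, x i ∈ S i) ∧ ∑ i, keyVec (x i) = 0} : ℝ) ≤
      (Nat.doubleFactorial (2 * t - 1) : ℝ) ^ c * ∏ i, Real.sqrt ((S i).card) := by
  classical
  have h := sum_evenly_coords_le t c (fun i y => if y ∈ S i then (1 : ℝ) else 0)
    (fun i y => by split_ifs <;> norm_num)
  have hn : ∀ i, ∑ y, (if y ∈ S i then (1 : ℝ) else 0) ^ 2 = (S i).card := by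
    intro i
    simp
  simp only [hn] at h
  refine le_trans (le_of_eq ?_) h
  rw [Nat.card_eq_fintype_card, Fintype.card_subtype, Finset.card_filter]
  push_cast
  refine Finset.sum_congr rfl fun x _ => ?_
  simp only [sum_keyVec_eq_zero_iff, Finset.prod_boole, Finset.mem_univ, true_imp_iff]
  by_cases h1 : ∀ i, x i ∈ S i <;> by_cases h2 : ∀ j, Evenly fun i => x i j <;>
    simp [h1, h2]
end
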